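/- For all relatively prime integers p, q ≥ 2 and every choice of parameters ℓ₁, ℓ₂ (each coprime to p) and ℓ'₁, ℓ'₂ (each coprime to q), the product of three-dimensional lens spaces satisfies cat(L³_p(ℓ₁,ℓ₂) × L³_q(ℓ'₁,ℓ'₂)) = 4. -/

import Mathlib

open scoped Topology

/-- The Lusternik–Schnirelmann category of a space (normalized so that contractible spaces
have category 0): the least `k` such that `X` admits an open cover by `k+1` sets, each of
which has nullhomotopic inclusion into `X` (i.e. is contractible in `X`). -/
noncomputable def lsCat (X : Type*) [TopologicalSpace X] : ℕ :=
  sInf {k : ℕ | ∃ U : Fin (k + 1) → Set X,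
    (∀ i, IsOpen (U i)) ∧ (⋃ i, U i) = Set.univ ∧
    ∀ i, ContinuousMap.Nullhomotopic
      (⟨Subtype.val, continuous_subtype_val⟩ : C(U i, X))}

/-- The orbit relation on the unit sphere of `ℂ^k` defining the lens space
`L^{2k-1}_p(ℓ₁,…,ℓ_k)`: a fixed generator of `ℤ/p` acts coordinatewise by
`z_j ↦ exp(2πiℓ_j/p) z_j`, and `m` ranges over the powers of this generator. -/
def lensRel (p k : ℕ) (ℓ : Fin k → ℤ) :
    Metric.sphere (0 : EuclideanSpace ℂ (Fin k)) 1 →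
      Metric.sphere (0 : EuclideanSpace ℂ (Fin k)) 1 → Prop :=
  fun x y => ∃ m : ℤ, ∀ j : Fin k,
    (y.1 j) = Complex.exp (2 * Real.pi * Complex.I * m * ℓ j / p) * (x.1 j)

/-- The lens space `L^{2k-1}_p(ℓ₁,…,ℓ_k)`: the orbit space of the free linear action of `ℤ/p`
on the unit sphere `S^{2k-1} ⊆ ℂ^k` determined by the parameters `ℓ`, with the quotient
topology. -/
noncomputable def LensSpace (p k : ℕ) (ℓ : Fin k → ℤ) : Type :=
  Quot (lensRel p k ℓ)

noncomputable instance (p k : ℕ) (ℓ : Fin k → ℤ) : TopologicalSpace (LensSpace p k ℓ) :=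
  inferInstanceAs (TopologicalSpace (Quot (lensRel p k ℓ)))

/-!
*Lower bound.* Suppose that four categorical open sets cover `L_p × L_q`, and pull everything back
to `S³ × S³` with the action of `ℤ/p` on the first factor. Lifting the contraction of a set to the
first factor gives an equivariant map from its preimage to `ℤ/p`, so that the degree-three class of
`ℤ/p` vanishes on the union of three of the sets. Lifting the contraction of the fourth set to the
second factor shows that the fundamental class of that factor is represented by an invariant cocycle
`β` which vanishes near the fourth set. The cup product of the two classes is therefore zero.
Evaluated on the cells of `S³` times a fundamental cycle `T` of the second factor, this says
`⟨β, T⟩ = 0`, whereas `⟨β, T⟩ = 1`. Cohomology is replaced here by explicit cochains modulo `p` on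
ordered simplices of small diameter.

*Upper bound.* Regard the points `(x, y)` of `S³ × S³` as pairs of unit quaternions. Multiplying the
arguments of the coordinates of `x` and `y` by suitable integers and taking products of powers gives
two maps `A` and `B` to `S³` whose degrees on the two factors form a matrix of determinant one.
Hence a set on which `A` and `B` each miss a value is contractible in `S³ × S³`. Since `p` and `q`
are coprime, this can be achieved with `B` invariant under `ℤ/p × ℤ/q`, while the group acts on each
coordinate of `A` by multiplication with all `pq`-th roots of unity. A set on which a coordinate of
`A` lies in a sector of angle `2π/pq` and `B` misses a value then maps homeomorphically to a
categorical set of `L_p × L_q`. For each of five parameters `r` take such a set; a point is missed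
by the `r`-th one only in four ways, each of which occurs for at most one `r`.
-/

noncomputable section

open Set Finsupp unitInterval
open scoped RealInnerProductSpace

/-! ### Ordered chains -/

/-- Augmented ordered chains on a set of vertices: a list of `n` points stands for an ordered
simplex of dimension `n - 1`, and the empty list spans the augmentation term. -/
abbrev OrderedChain (R Y : Type*) [CommRing R] := List Y →₀ R

namespace OrderedChain

variable {R Y Z W : Type*} [CommRing R]

/-- The cone operator, which prepends the vertex `x` to every simplex. -/
def cone (x : Y) : OrderedChain R Y →ₗ[R] OrderedChain R Y :=
  Finsupp.lmapDomain R R (List.cons x)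

variable (R) in
/-- The chain map induced by a map of vertices. -/
def map (f : Y → Z) : OrderedChain R Y →ₗ[R] OrderedChain R Z :=
  Finsupp.lmapDomain R R (List.map f)

/-- The evaluation of a cochain `φ` on chains. -/
def eval (φ : List Y → R) : OrderedChain R Y →ₗ[R] R :=
  Finsupp.linearCombination R φ

/-- `contract` on a single simplex. -/
def contractList (c : Y → R) : List Y → OrderedChain R Y
  | [] => 0
  | x :: l => c x • single l 1 - cone x (contractList c l)

/-- The contraction of chains with a `0`-cochain `c`, i.e. the boundary weighted by `c`:
`[x₀, …, xₙ] ↦ ∑ (-1)ⁱ c(xᵢ) [x₀, …, x̂ᵢ, …, xₙ]`. -/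
def contract (c : Y → R) : OrderedChain R Y →ₗ[R] OrderedChain R Y :=
  Finsupp.linearCombination R (contractList c)

/-- The augmented simplicial boundary. -/
def boundary : OrderedChain R Y →ₗ[R] OrderedChain R Y := contract fun _ => 1

/-- `prism` on a single simplex. -/
def prismList (f g : Y → Z) : List Y → OrderedChain R Z
  | [] => 0
  | x :: l => single (f x :: g x :: l.map g) 1 - cone (f x) (prismList f g l)

variable (R) in
/-- The prism operator, a chain homotopy between `map R f` and `map R g`. -/
def prism (f g : Y → Z) : OrderedChain R Y →ₗ[R] OrderedChain R Z :=
  Finsupp.linearCombination R (prismList f g)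

variable (R) in
/-- The prism operators of the consecutive pairs in `f 0, …, f n`, stacked on top of each other. -/
def prismSum (f : ℕ → Y → Z) (n : ℕ) : OrderedChain R Y →ₗ[R] OrderedChain R Z :=
  ∑ j ∈ Finset.range n, prism R (f j) (f (j + 1))

theorem linearMap_ext {M : Type*} [AddCommMonoid M] [Module R M]
    {A B : OrderedChain R Y →ₗ[R] M} (h : ∀ l, A (single l 1) = B (single l 1)) : A = B :=
  Finsupp.lhom_ext' fun l => LinearMap.ext_ring (by simpa using h l)

section Simplices

@[simp]
theorem cone_single (x : Y) (l : List Y) (r : R) : cone x (single l r) = single (x :: l) r := by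
  simp [cone]

@[simp]
theorem map_single (f : Y → Z) (l : List Y) (r : R) :
    map R f (single l r) = single (l.map f) r := by
  simp [map]

@[simp]
theorem eval_single (φ : List Y → R) (l : List Y) (r : R) : eval φ (single l r) = r * φ l := by
  simp [eval]

@[simp]
theorem contract_single_nil (c : Y → R) : contract c (single [] 1) = 0 := by
  simp [contract, contractList]

theorem contract_single_cons (c : Y → R) (x : Y) (l : List Y) :
    contract c (single (x :: l) 1) = c x • single l 1 - cone x (contract c (single l 1)) := by
  simp [contract, contractList]

@[simp]
theorem boundary_single_nil : boundary (single [] 1 : OrderedChain R Y) = 0 :=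
  contract_single_nil _

theorem boundary_single_cons (x : Y) (l : List Y) :
    boundary (single (x :: l) (1 : R)) = single l 1 - cone x (boundary (single l 1)) := by
  simp [boundary, contract_single_cons]

@[simp]
theorem prism_single_nil (f g : Y → Z) : prism R f g (single [] 1) = 0 := by
  simp [prism, prismList]

theorem prism_single_cons (f g : Y → Z) (x : Y) (l : List Y) :
    prism R f g (single (x :: l) 1) =
      single (f x :: g x :: l.map g) 1 - cone (f x) (prism R f g (single l 1)) := by
  simp [prism, prismList]

end Simplices

section Cones

theorem contract_cone (c : Y → R) (x : Y) (a : OrderedChain R Y) :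
    contract c (cone x a) = c x • a - cone x (contract c a) := by
  have h : contract c ∘ₗ cone x = c x • LinearMap.id - cone x ∘ₗ contract c :=
    linearMap_ext fun l => by simp [contract_single_cons]
  exact LinearMap.congr_fun h a

theorem boundary_cone (x : Y) (a : OrderedChain R Y) :
    boundary (cone x a) = a - cone x (boundary a) := by
  simp [boundary, contract_cone]

theorem map_cone (f : Y → Z) (x : Y) (a : OrderedChain R Y) :
    map R f (cone x a) = cone (f x) (map R f a) := by
  have h : map R f ∘ₗ cone x = cone (f x) ∘ₗ map R f := linearMap_ext fun l => by simp
  exact LinearMap.congr_fun h a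

theorem prism_cone (f g : Y → Z) (x : Y) (a : OrderedChain R Y) :
    prism R f g (cone x a) =
      cone (f x) (cone (g x) (map R g a)) - cone (f x) (prism R f g a) := by
  have h : prism R f g ∘ₗ cone x =
      cone (f x) ∘ₗ cone (g x) ∘ₗ map R g - cone (f x) ∘ₗ prism R f g :=
    linearMap_ext fun l => by simp [prism_single_cons]
  exact LinearMap.congr_fun h a

theorem eval_cone (φ : List Y → R) (x : Y) (a : OrderedChain R Y) :
    eval φ (cone x a) = eval (fun l => φ (x :: l)) a := by
  have h : eval φ ∘ₗ cone x = eval fun l => φ (x :: l) := linearMap_ext fun l => by simp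
  exact LinearMap.congr_fun h a

end Cones

section Functoriality

theorem eval_map (φ : List Z → R) (f : Y → Z) (a : OrderedChain R Y) :
    eval φ (map R f a) = eval (fun l => φ (l.map f)) a := by
  have h : eval φ ∘ₗ map R f = eval fun l => φ (l.map f) := linearMap_ext fun l => by simp
  exact LinearMap.congr_fun h a

theorem eval_const_mul (r : R) (φ : List Y → R) (a : OrderedChain R Y) :
    eval (fun l => r * φ l) a = r * eval φ a := by
  have h : eval (fun l => r * φ l) = r • eval φ := linearMap_ext fun l => by simp
  exact LinearMap.congr_fun h a

theorem map_map (f : Y → Z) (g : Z → W) (a : OrderedChain R Y) :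
    map R g (map R f a) = map R (g ∘ f) a := by
  have h : map R g ∘ₗ map R f = map R (g ∘ f) := linearMap_ext fun l => by simp
  exact LinearMap.congr_fun h a

theorem map_id (a : OrderedChain R Y) : map R (fun x : Y => x) a = a := by
  have h : map R (fun x : Y => x) = LinearMap.id := linearMap_ext fun l => by simp
  exact LinearMap.congr_fun h a

theorem map_contract (f : Y → Z) (c : Z → R) (a : OrderedChain R Y) :
    map R f (contract (c ∘ f) a) = contract c (map R f a) := by
  have h : map R f ∘ₗ contract (c ∘ f) = contract c ∘ₗ map R f := by
    refine linearMap_ext fun l => ?_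
    induction l with
    | nil => simp
    | cons x l ih =>
      simp only [LinearMap.comp_apply, map_single] at ih
      simp [contract_single_cons, map_cone, ih]
  exact LinearMap.congr_fun h a

theorem map_boundary (f : Y → Z) (a : OrderedChain R Y) :
    map R f (boundary a) = boundary (map R f a) :=
  map_contract f (fun _ => 1) a

theorem prism_map (f g : Z → W) (h : Y → Z) (a : OrderedChain R Y) :
    prism R f g (map R h a) = prism R (f ∘ h) (g ∘ h) a := by
  have e : prism R f g ∘ₗ map R h = prism R (f ∘ h) (g ∘ h) := by
    refine linearMap_ext fun l => ?_
    induction l with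
    | nil => simp
    | cons x l ih =>
      simp only [LinearMap.comp_apply, map_single] at ih
      simp [prism_single_cons, ih]
  exact LinearMap.congr_fun e a

theorem prismSum_map (f : ℕ → Z → W) (n : ℕ) (h : Y → Z) (a : OrderedChain R Y) :
    prismSum R f n (map R h a) = prismSum R (fun j => f j ∘ h) n a := by
  simp [prismSum, prism_map]

end Functoriality

section Contraction

theorem contract_congr {c d : Y → R} {l : List Y} (h : ∀ x ∈ l, c x = d x) :
    contract c (single l 1) = contract d (single l 1) := by
  induction l with
  | nil => simp
  | cons x l ih =>
    rw [contract_single_cons, contract_single_cons, ih fun y hy => h y (by simp [hy]),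
      h x (by simp)]

variable (R Y) in
/-- `contract`, as a linear function of the `0`-cochain. -/
def contractHom : (Y → R) →ₗ[R] OrderedChain R Y →ₗ[R] OrderedChain R Y where
  toFun := contract
  map_add' c d := by
    refine linearMap_ext fun l => ?_
    induction l with
    | nil => simp
    | cons x l ih =>
      simp only [LinearMap.add_apply] at ih
      simp only [contract_single_cons, ih, LinearMap.add_apply, Pi.add_apply, add_smul, map_add]
      abel
  map_smul' r c := by
    refine linearMap_ext fun l => ?_
    induction l with
    | nil => simp
    | cons x l ih =>
      simp only [LinearMap.smul_apply, RingHom.id_apply] at ih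
      simp only [contract_single_cons, ih, LinearMap.smul_apply, RingHom.id_apply, Pi.smul_apply,
        smul_eq_mul, mul_smul, map_smul, smul_sub]

theorem contract_zero (a : OrderedChain R Y) : contract 0 a = 0 :=
  LinearMap.congr_fun (map_zero (contractHom R Y)) a

theorem contract_smul (r : R) (c : Y → R) (a : OrderedChain R Y) :
    contract (r • c) a = r • contract c a :=
  LinearMap.congr_fun (map_smul (contractHom R Y) r c) a

theorem contract_sum {ι : Type*} (s : Finset ι) (c : ι → Y → R) (a : OrderedChain R Y) :
    contract (∑ i ∈ s, c i) a = ∑ i ∈ s, contract (c i) a :=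
  (LinearMap.congr_fun (map_sum (contractHom R Y) c s) a).trans (LinearMap.sum_apply ..)

theorem contract_contract (c d : Y → R) (a : OrderedChain R Y) :
    contract c (contract d a) = -contract d (contract c a) := by
  have h : contract c ∘ₗ contract d = -(contract d ∘ₗ contract c) := by
    refine linearMap_ext fun l => ?_
    induction l with
    | nil => simp
    | cons x l ih =>
      simp only [LinearMap.comp_apply, LinearMap.neg_apply] at ih ⊢
      simp only [contract_single_cons, contract_cone, ih, map_sub, map_smul, map_neg]
      abel
  exact LinearMap.congr_fun h a

theorem contract_contract_self (c : Y → R) (a : OrderedChain R Y) :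
    contract c (contract c a) = 0 := by
  have h : contract c ∘ₗ contract c = 0 := by
    refine linearMap_ext fun l => ?_
    induction l with
    | nil => simp
    | cons x l ih =>
      simp only [LinearMap.comp_apply, LinearMap.zero_apply] at ih ⊢
      simp only [contract_single_cons, contract_cone, ih, map_sub, map_smul, map_zero]
      abel
  exact LinearMap.congr_fun h a

theorem boundary_boundary (a : OrderedChain R Y) : boundary (boundary a) = 0 :=
  contract_contract_self _ a

end Contraction

section Prisms

theorem boundary_prism (f g : Y → Z) (a : OrderedChain R Y) :
    boundary (prism R f g a) + prism R f g (boundary a) = map R g a - map R f a := by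
  have h : boundary ∘ₗ prism R f g + prism R f g ∘ₗ boundary = map R g - map R f := by
    refine linearMap_ext fun l => ?_
    induction l with
    | nil => simp
    | cons x l ih =>
      have hg := map_boundary g (single l (1 : R))
      simp only [LinearMap.add_apply, LinearMap.comp_apply, LinearMap.sub_apply, map_single]
        at ih hg ⊢
      have hcone := congrArg (cone (f x)) ih
      simp only [map_sub, map_add, cone_single] at hcone
      simp only [prism_single_cons, boundary_single_cons, boundary_cone, prism_cone, map_sub, hg,
        List.map_cons, cone_single]
      rw [← sub_eq_zero] at hcone ⊢
      rw [← hcone]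
      abel
  exact LinearMap.congr_fun h a

theorem boundary_prismSum (f : ℕ → Y → Z) (n : ℕ) (a : OrderedChain R Y) :
    boundary (prismSum R f n a) + prismSum R f n (boundary a) =
      map R (f n) a - map R (f 0) a := by
  simp only [prismSum, LinearMap.sum_apply, map_sum, ← Finset.sum_add_distrib, boundary_prism]
  exact Finset.sum_range_sub (fun j => map R (f j) a) n

end Prisms

section CliqueChains

variable {r : Y → Y → Prop} {r' : Z → Z → Prop} {n : ℕ} {a : OrderedChain R Y}

variable (R) in
/-- The chains spanned by the simplices with `n` vertices, any two of which (also two equal ones)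
are related by `r`. -/
def cliqueChains (r : Y → Y → Prop) (n : ℕ) : Submodule R (OrderedChain R Y) :=
  Finsupp.supported R R {l | l.length = n ∧ ∀ x ∈ l, ∀ y ∈ l, r x y}

theorem apply_mem_of_mem_supported {M : Type*} [AddCommGroup M] [Module R M] {s : Set (List Y)}
    (A : OrderedChain R Y →ₗ[R] M) {S : Submodule R M} (h : ∀ l ∈ s, A (single l 1) ∈ S)
    (ha : a ∈ Finsupp.supported R R s) : A a ∈ S := by
  rw [Finsupp.supported_eq_span_single] at ha
  have hs : Submodule.span R ((fun l => single l (1 : R)) '' s) ≤ S.comap A := by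
    rw [Submodule.span_le]
    rintro _ ⟨l, hl, rfl⟩
    exact h l hl
  exact hs ha

theorem single_mem_cliqueChains {l : List Y} (hl : l.length = n) (hr : ∀ x ∈ l, ∀ y ∈ l, r x y)
    (c : R) : single l c ∈ cliqueChains R r n :=
  Finsupp.single_mem_supported _ _ ⟨hl, hr⟩

theorem apply_mem_of_mem_cliqueChains {M : Type*} [AddCommGroup M] [Module R M]
    (A : OrderedChain R Y →ₗ[R] M) {S : Submodule R M}
    (h : ∀ l : List Y, l.length = n → (∀ x ∈ l, ∀ y ∈ l, r x y) → A (single l 1) ∈ S)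
    (ha : a ∈ cliqueChains R r n) : A a ∈ S :=
  apply_mem_of_mem_supported A (fun l hl => h l hl.1 hl.2) ha

theorem eqOn_cliqueChains {M : Type*} [AddCommGroup M] [Module R M]
    (A B : OrderedChain R Y →ₗ[R] M)
    (h : ∀ l : List Y, l.length = n → (∀ x ∈ l, ∀ y ∈ l, r x y) →
      A (single l 1) = B (single l 1))
    (ha : a ∈ cliqueChains R r n) : A a = B a := by
  have hsub : (A - B) a ∈ (⊥ : Submodule R M) :=
    apply_mem_of_mem_cliqueChains (A - B) (fun l hl hr => by simp [h l hl hr]) ha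
  simpa [sub_eq_zero] using hsub

theorem cliqueChains_mono {r' : Y → Y → Prop} (h : ∀ x y, r x y → r' x y)
    (ha : a ∈ cliqueChains R r n) : a ∈ cliqueChains R r' n :=
  apply_mem_of_mem_cliqueChains LinearMap.id (fun _ hl hr =>
    single_mem_cliqueChains hl (fun x hx y hy => h _ _ (hr x hx y hy)) 1) ha

theorem contract_single_mem_supported (c : Y → R) (l : List Y) :
    contract c (single l 1) ∈ Finsupp.supported R R {l' | l'.length + 1 = l.length ∧ l' ⊆ l} := by
  induction l with
  | nil => simp
  | cons x l ih =>
    rw [contract_single_cons]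
    refine Submodule.sub_mem _
      (Submodule.smul_mem _ _ (Finsupp.single_mem_supported _ _ (by simp)))
      (apply_mem_of_mem_supported (cone x) (fun l' hl' => ?_) ih)
    rw [cone_single]
    exact Finsupp.single_mem_supported _ _
      ⟨congrArg (· + 1) hl'.1, List.cons_subset_cons _ hl'.2⟩

theorem prism_single_mem_supported (f g : Y → Z) (l : List Y) :
    prism R f g (single l 1) ∈ Finsupp.supported R R
      {l' | l'.length = l.length + 1 ∧ ∀ u ∈ l', ∃ x ∈ l, u = f x ∨ u = g x} := by
  induction l with
  | nil => simp
  | cons x l ih =>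
    rw [prism_single_cons]
    refine Submodule.sub_mem _ (Finsupp.single_mem_supported _ _ ⟨by simp, by simp; grind⟩)
      (apply_mem_of_mem_supported (cone (f x)) (fun l' hl' => ?_) ih)
    rw [cone_single]
    refine Finsupp.single_mem_supported _ _ ⟨congrArg (· + 1) hl'.1, fun u hu => ?_⟩
    rcases List.mem_cons.1 hu with rfl | hu
    · exact ⟨x, by simp⟩
    · obtain ⟨y, hy, hfg⟩ := hl'.2 u hu
      exact ⟨y, by simp [hy], hfg⟩

theorem map_mem_cliqueChains {f : Y → Z} (h : ∀ x y, r x y → r' (f x) (f y))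
    (ha : a ∈ cliqueChains R r n) : map R f a ∈ cliqueChains R r' n := by
  refine apply_mem_of_mem_cliqueChains (map R f) (fun l hl hr => ?_) ha
  rw [map_single]
  refine single_mem_cliqueChains (by simpa using hl) ?_ _
  simp only [List.forall_mem_map]
  exact fun x hx y hy => h _ _ (hr x hx y hy)

theorem prism_mem_cliqueChains {f g : Y → Z}
    (h : ∀ x y, r x y → r' (f x) (f y) ∧ r' (f x) (g y) ∧ r' (g x) (f y) ∧ r' (g x) (g y))
    (ha : a ∈ cliqueChains R r n) : prism R f g a ∈ cliqueChains R r' (n + 1) := by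
  refine apply_mem_of_mem_cliqueChains (prism R f g) (fun l hl hr => ?_) ha
  refine Finsupp.supported_mono ?_ (prism_single_mem_supported f g l)
  rintro l' ⟨hl', hfg⟩
  refine ⟨by omega, fun u hu v hv => ?_⟩
  obtain ⟨x, hx, hu⟩ := hfg u hu
  obtain ⟨y, hy, hv⟩ := hfg v hv
  have hxy := h x y (hr x hx y hy)
  rcases hu with rfl | rfl <;> rcases hv with rfl | rfl <;> tauto

theorem prismSum_mem_cliqueChains {f : ℕ → Y → Z} {N : ℕ}
    (h : ∀ j k, j ≤ N → k ≤ N → j ≤ k + 1 → k ≤ j + 1 → ∀ x y, r x y → r' (f j x) (f k y))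
    (ha : a ∈ cliqueChains R r n) : prismSum R f N a ∈ cliqueChains R r' (n + 1) := by
  rw [prismSum, LinearMap.sum_apply]
  refine Submodule.sum_mem _ fun j hj => prism_mem_cliqueChains (fun x y hxy => ?_) ha
  have hjN := Finset.mem_range.1 hj
  refine ⟨?_, ?_, ?_, ?_⟩ <;> exact h _ _ (by omega) (by omega) (by omega) (by omega) _ _ hxy

theorem map_const_eq_zero (e : Z) (ha : a ∈ cliqueChains R r n)
    (h : eval (fun _ => 1) a = 0) : map R (fun _ => e) a = 0 := by
  have hmap : map R (fun _ => e) a =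
      (LinearMap.toSpanSingleton R _ (single (List.replicate n e) (1 : R)) ∘ₗ
        eval fun _ => (1 : R)) a := by
    refine eqOn_cliqueChains _ _ (fun l hl _ => ?_) ha
    simp [List.map_const', hl]
  rw [hmap, LinearMap.comp_apply, h, map_zero]

end CliqueChains

end OrderedChain

theorem exists_forall_dist_lt_of_continuousOn {Y Z : Type*} [PseudoMetricSpace Y]
    [PseudoMetricSpace Z] {K : Set Y} (hK : IsCompact K) {F : Y → ℝ → Z}
    (hF : ContinuousOn (fun z : Y × ℝ => F z.1 z.2) (K ×ˢ Icc 0 1)) {ε : ℝ}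
    (hε : 0 < ε) :
    ∃ N : ℕ, 0 < N ∧ ∃ δ > 0, ∀ j k : ℕ, j ≤ N → k ≤ N → j ≤ k + 1 → k ≤ j + 1 →
      ∀ x ∈ K, ∀ y ∈ K, dist x y < δ → dist (F x (j / N)) (F y (k / N)) < ε := by
  have hu := (hK.prod (isCompact_Icc (a := (0 : ℝ)) (b := 1))).uniformContinuousOn_of_continuous hF
  obtain ⟨δ, hδ, h⟩ := Metric.uniformContinuousOn_iff.1 hu ε hε
  obtain ⟨n, hn⟩ := exists_nat_one_div_lt hδ
  refine ⟨n + 1, n.succ_pos, δ, hδ, fun j k hj hk hjk hkj x hx y hy hxy => ?_⟩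
  have hpos : (0 : ℝ) < (n + 1 : ℕ) := by positivity
  have hmem {i : ℕ} (hi : i ≤ n + 1) : (i : ℝ) / ((n + 1 : ℕ) : ℝ) ∈ Icc (0 : ℝ) 1 :=
    ⟨by positivity, div_le_one_of_le₀ (by exact_mod_cast hi) (by positivity)⟩
  have hstep : dist ((j : ℝ) / ((n + 1 : ℕ) : ℝ)) (k / ((n + 1 : ℕ) : ℝ)) < δ := by
    rw [Real.dist_eq, ← sub_div, abs_div, abs_of_pos hpos]
    refine lt_of_le_of_lt ?_ hn
    push_cast
    gcongr
    rify at hjk hkj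
    exact abs_le.2 ⟨by linarith, by linarith⟩
  exact h (x, _) ⟨hx, hmem hj⟩ (y, _) ⟨hy, hmem hk⟩ (max_lt hxy hstep)

namespace OrderedChain

section RipsChains

variable {R Y Z : Type*} [CommRing R] [PseudoMetricSpace Y] [PseudoMetricSpace Z] {ε δ : ℝ}
  {K : Set Y} {K' : Set Z} {n : ℕ} {a : OrderedChain R Y}

/-- The chains of the Vietoris–Rips complex of `K` at scale `ε` whose simplices have `n`
vertices. -/
abbrev ripsChains (R : Type*) {Y : Type*} [CommRing R] [PseudoMetricSpace Y] (ε : ℝ) (K : Set Y)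
    (n : ℕ) : Submodule R (OrderedChain R Y) :=
  cliqueChains R (fun x y => x ∈ K ∧ y ∈ K ∧ dist x y < ε) n

theorem single_mem_ripsChains {l : List Y} (hl : l.length = n) (hK : ∀ x ∈ l, x ∈ K)
    (hε : ∀ x ∈ l, ∀ y ∈ l, dist x y < ε) (c : R) : single l c ∈ ripsChains R ε K n :=
  single_mem_cliqueChains hl (fun x hx y hy => ⟨hK x hx, hK y hy, hε x hx y hy⟩) c

theorem ripsChains_mono {L : Set Y} (hε : ε ≤ δ) (hK : K ⊆ L) (ha : a ∈ ripsChains R ε K n) :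
    a ∈ ripsChains R δ L n :=
  cliqueChains_mono (fun _ _ h => ⟨hK h.1, hK h.2.1, h.2.2.trans_le hε⟩) ha

theorem map_mem_ripsChains {f : Y → Z} (hf : Isometry f) (hK : MapsTo f K K')
    (ha : a ∈ ripsChains R ε K n) : map R f a ∈ ripsChains R ε K' n :=
  map_mem_cliqueChains (fun _ _ h => ⟨hK h.1, hK h.2.1, (hf.dist_eq _ _).trans_lt h.2.2⟩) ha

theorem map_eq_self_of_eqOn {f : Y → Y} (hf : EqOn f id K) (ha : a ∈ ripsChains R ε K n) :
    map R f a = a := by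
  refine eqOn_cliqueChains (map R f) LinearMap.id (fun l _ hl => ?_) ha
  have hid : l.map f = l.map id := List.map_congr_left fun x hx => hf (hl x hx x hx).1
  rw [map_single, hid, List.map_id, LinearMap.id_apply]

theorem exists_chainHomotopy (hK : IsCompact K) {F : Y → ℝ → Z}
    (hF : ContinuousOn (fun z : Y × ℝ => F z.1 z.2) (K ×ˢ Icc 0 1))
    (hK' : ∀ x ∈ K, ∀ t ∈ Icc (0 : ℝ) 1, F x t ∈ K') (hε : 0 < ε) :
    ∃ δ > 0, ∃ H : OrderedChain R Y →ₗ[R] OrderedChain R Z,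
      (∀ n, ∀ a ∈ ripsChains R δ K n, H a ∈ ripsChains R ε K' (n + 1)) ∧
      (∀ f : Y → Y, (∀ x t, F (f x) t = F x t) → ∀ a, H (map R f a) = H a) ∧
      ∀ a, boundary (H a) + H (boundary a) =
        map R (fun x => F x 1) a - map R (fun x => F x 0) a := by
  obtain ⟨N, hN, δ, hδ, h⟩ := exists_forall_dist_lt_of_continuousOn hK hF hε
  have hN' : (N : ℝ) ≠ 0 := by positivity
  have hmem {j : ℕ} (hj : j ≤ N) : (j : ℝ) / N ∈ Icc (0 : ℝ) 1 :=
    ⟨by positivity, div_le_one_of_le₀ (by exact_mod_cast hj) (by positivity)⟩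
  refine ⟨δ, hδ, prismSum R (fun j x => F x (j / N)) N, fun n a ha => ?_,
    fun f hf a => ?_, fun a => ?_⟩
  · refine prismSum_mem_cliqueChains ?_ ha
    rintro j k hj hk hjk hkj x y ⟨hx, hy, hxy⟩
    exact ⟨hK' x hx _ (hmem hj), hK' y hy _ (hmem hk), h j k hj hk hjk hkj x hx y hy hxy⟩
  · simp only [prismSum_map, Function.comp_def, hf]
  · simpa [hN'] using boundary_prismSum (R := R) (fun (j : ℕ) x => F x (j / N)) N a

theorem exists_boundary_eq_of_homotopy (hK : IsCompact K) {F : Y → ℝ → Y}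
    (hF : ContinuousOn (fun z : Y × ℝ => F z.1 z.2) (K ×ˢ Icc 0 1)) {L : Set Y}
    (hL : ∀ x ∈ K, ∀ t ∈ Icc (0 : ℝ) 1, F x t ∈ L) (h0 : ∀ x ∈ K, F x 0 = x) (hε : 0 < ε) :
    ∃ δ > 0, ∀ n, ∀ a ∈ ripsChains R δ K n, boundary a = 0 → map R (fun x => F x 1) a = 0 →
      ∃ b ∈ ripsChains R ε L (n + 1), boundary b = a := by
  obtain ⟨δ, hδ, H, hHmem, -, hH⟩ := exists_chainHomotopy (R := R) hK hF hL hε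
  refine ⟨δ, hδ, fun n a ha hbd h1 => ⟨-H a, Submodule.neg_mem _ (hHmem n a ha), ?_⟩⟩
  have hHa := hH a
  rw [hbd, map_zero, add_zero, h1, zero_sub, map_eq_self_of_eqOn h0 ha] at hHa
  rw [map_neg, hHa, neg_neg]

end RipsChains

section IteratedContraction

variable {R Y : Type*} [CommRing R] {v : ℕ → Y → R} {k i : ℕ} {l : List Y}

/-- The composite of the contractions with `v 0, …, v (k - 1)`. On chains with `k` vertices it is
the cup product of the cochains `v 0, …, v (k - 1)`; when `v i` is the indicator of the
`i`-th label it is a signed Sperner count of the fully labelled simplices. -/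
def iterContract (v : ℕ → Y → R) : ℕ → OrderedChain R Y →ₗ[R] OrderedChain R Y
  | 0 => LinearMap.id
  | k + 1 => iterContract v k ∘ₗ contract (v k)

theorem iterContract_succ (v : ℕ → Y → R) (k : ℕ) (a : OrderedChain R Y) :
    iterContract v (k + 1) a = iterContract v k (contract (v k) a) := rfl

theorem iterContract_contract (hi : i < k) (a : OrderedChain R Y) :
    iterContract v k (contract (v i) a) = 0 := by
  induction k generalizing a with
  | zero => omega
  | succ k ih =>
    rw [iterContract_succ]
    rcases Nat.lt_succ_iff_lt_or_eq.1 hi with h | rfl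
    · rw [contract_contract, map_neg, ih h, neg_zero]
    · rw [contract_contract_self, map_zero]

theorem contract_mem_supported_of_vertices {P : Y → Prop} (c : Y → R) {a : OrderedChain R Y}
    (ha : a ∈ Finsupp.supported R R {l | ∀ x ∈ l, P x}) :
    contract c a ∈ Finsupp.supported R R {l | ∀ x ∈ l, P x} := by
  refine apply_mem_of_mem_supported (contract c) (fun l (hl : ∀ x ∈ l, P x) => ?_) ha
  refine Finsupp.supported_mono ?_ (contract_single_mem_supported c l)
  rintro l' ⟨-, hsub⟩ x hx
  exact hl x (hsub hx)

theorem iterContract_eq_zero (hi : i < k) {a : OrderedChain R Y}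
    (ha : a ∈ Finsupp.supported R R {l | ∀ x ∈ l, v i x = 0}) : iterContract v k a = 0 := by
  induction k generalizing a with
  | zero => omega
  | succ k ih =>
    rw [iterContract_succ]
    rcases Nat.lt_succ_iff_lt_or_eq.1 hi with h | rfl
    · exact ih h (contract_mem_supported_of_vertices _ ha)
    · have hzero : contract (v i) a ∈ (⊥ : Submodule R (OrderedChain R Y)) :=
        apply_mem_of_mem_supported (contract (v i)) (fun l hl => by
          rw [contract_congr (d := 0) hl, contract_zero]; exact Submodule.zero_mem _) ha
      rw [(Submodule.mem_bot R).1 hzero, map_zero]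

theorem boundary_single_eq_sum_contract (h : ∀ x ∈ l, ∑ i ∈ Finset.range k, v i x = 1) :
    boundary (single l (1 : R)) = ∑ i ∈ Finset.range k, contract (v i) (single l 1) := by
  rw [← contract_sum]
  exact contract_congr fun x hx => by simpa using (h x hx).symm

theorem iterContract_boundary_single
    (h : (∃ i < k, ∀ x ∈ l, v i x = 0) ∨ ∀ x ∈ l, ∑ i ∈ Finset.range k, v i x = 1) :
    iterContract v k (boundary (single l 1)) = 0 := by
  rcases h with ⟨i, hi, h⟩ | h
  · exact iterContract_eq_zero hi
      (contract_mem_supported_of_vertices _ (Finsupp.single_mem_supported R 1 h))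
  · rw [boundary_single_eq_sum_contract h, map_sum]
    exact Finset.sum_eq_zero fun i hi => iterContract_contract (Finset.mem_range.1 hi) _

theorem iterContract_succ_single
    (h : (∃ i < k, ∀ x ∈ l, v i x = 0) ∨ ∀ x ∈ l, ∑ i ∈ Finset.range (k + 1), v i x = 1) :
    iterContract v (k + 1) (single l 1) = iterContract v k (boundary (single l 1)) := by
  rcases h with ⟨i, hi, h⟩ | h
  · rw [iterContract_boundary_single (Or.inl ⟨i, hi, h⟩)]
    exact iterContract_eq_zero (by omega) (Finsupp.single_mem_supported R 1 h)
  · rw [boundary_single_eq_sum_contract h, map_sum, Finset.sum_range_succ, Finset.sum_eq_zero,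
      zero_add, iterContract_succ]
    exact fun i hi => iterContract_contract (Finset.mem_range.1 hi) _

theorem iterContract_single_eq_zero_of_forall_eq {w : Y} (h : ∀ x ∈ l, x = w) (hk : 2 ≤ k) :
    iterContract v k (single l 1) = 0 := by
  obtain ⟨k, rfl⟩ := Nat.exists_eq_add_of_le' hk
  have hconst (c : Y → R) : contract c (single l 1) = c w • boundary (single l 1) := by
    rw [boundary, ← contract_smul]
    exact contract_congr fun x hx => by simp [h x hx]
  rw [iterContract_succ, iterContract_succ, hconst, map_smul, boundary, contract_contract, hconst,
    map_smul, ← boundary, map_smul, boundary_boundary, smul_zero, neg_zero, map_zero, smul_zero]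

end IteratedContraction

end OrderedChain

/-! ### Chains on spheres -/

/-- The unit sphere of a normed space, as a type. -/
abbrev UnitSphere (E : Type*) [NormedAddCommGroup E] : Type _ := Metric.sphere (0 : E) 1

namespace UnitSphere

open AffineMap NormedSpace

section NormalizedSegment

variable {E : Type*} [NormedAddCommGroup E] [InnerProductSpace ℝ E] {e x : UnitSphere E} {t : ℝ}

open Classical in
/-- The point of the sphere obtained by normalizing the point of parameter `t` of the segment from
`x` to `e`; its value is irrelevant when that segment meets the origin at time `t`. -/
def segment (e x : UnitSphere E) (t : ℝ) : UnitSphere E :=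
  if h : lineMap (x : E) (e : E) t = 0 then x
  else ⟨normalize (lineMap (x : E) (e : E) t),
    mem_sphere_zero_iff_norm.2 (norm_normalize_eq_one_iff.2 h)⟩

theorem coe_segment (h : lineMap (x : E) (e : E) t ≠ 0) :
    (segment e x t : E) = normalize (lineMap (x : E) (e : E) t) := by
  simp [segment, h]

@[simp]
theorem segment_zero (e x : UnitSphere E) : segment e x 0 = x := by
  have hx : lineMap (x : E) (e : E) (0 : ℝ) ≠ 0 := by simpa using ne_zero_of_mem_unit_sphere x
  refine Subtype.ext ?_
  rw [coe_segment hx, lineMap_apply_zero,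
    normalize_eq_self_of_norm_eq_one (norm_eq_of_mem_sphere x)]

@[simp]
theorem segment_one (e x : UnitSphere E) : segment e x 1 = e := by
  have he : lineMap (x : E) (e : E) (1 : ℝ) ≠ 0 := by simpa using ne_zero_of_mem_unit_sphere e
  refine Subtype.ext ?_
  rw [coe_segment he, lineMap_apply_one,
    normalize_eq_self_of_norm_eq_one (norm_eq_of_mem_sphere e)]

theorem ne_neg_of_inner_nonneg (h : 0 ≤ ⟪(x : E), e⟫) : x ≠ -e := by
  rintro rfl
  have hself : ⟪((-e : UnitSphere E) : E), e⟫ = -1 := by simp [inner_neg_left]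
  linarith

theorem lineMap_ne_zero (h : x ≠ -e) (ht : t ∈ Icc (0 : ℝ) 1) :
    lineMap (x : E) (e : E) t ≠ 0 := by
  intro h0
  rw [lineMap_apply_module, add_eq_zero_iff_eq_neg, ← smul_neg] at h0
  have hnorm : 1 - t = t := by
    simpa [norm_smul, abs_of_nonneg ht.1, abs_of_nonneg (sub_nonneg.2 ht.2)] using
      congrArg norm h0
  rw [hnorm] at h0
  exact h (Subtype.ext (smul_right_injective E (by linarith : t ≠ 0) h0))

theorem exists_coe_segment_eq_smul (h : 0 ≤ ⟪(x : E), e⟫) (ht : t ∈ Icc (0 : ℝ) 1) :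
    ∃ c > (0 : ℝ), (segment e x t : E) = c • ((1 - t) • (x : E) + t • (e : E)) := by
  have h0 := lineMap_ne_zero (ne_neg_of_inner_nonneg h) ht
  refine ⟨‖lineMap (x : E) (e : E) t‖⁻¹, inv_pos.2 (norm_pos_iff.2 h0), ?_⟩
  rw [coe_segment h0, NormedSpace.normalize, lineMap_apply_module]

theorem continuousOn_segment (e : UnitSphere E) :
    ContinuousOn (fun z : UnitSphere E × ℝ => segment e z.1 z.2) ({-e}ᶜ ×ˢ Icc 0 1) := by
  rw [Topology.IsInducing.subtypeVal.continuousOn_iff]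
  have hne : ∀ z ∈ ({-e}ᶜ : Set (UnitSphere E)) ×ˢ Icc (0 : ℝ) 1,
      lineMap (z.1 : E) (e : E) z.2 ≠ 0 := fun z hz => lineMap_ne_zero hz.1 hz.2
  have hline : ContinuousOn (fun z : UnitSphere E × ℝ => lineMap (z.1 : E) (e : E) z.2)
      ({-e}ᶜ ×ˢ Icc 0 1) := by
    simp only [lineMap_apply_module]
    fun_prop
  exact ((hline.norm.inv₀ fun z hz => norm_ne_zero_iff.2 (hne z hz)).smul hline).congr
    fun z hz => coe_segment (hne z hz)

end NormalizedSegment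

section Labels

variable {E : Type*} [NormedAddCommGroup E] [InnerProductSpace ℝ E] {n : ℕ}
  (b : OrthonormalBasis (Fin n) ℝ E)

theorem exists_inv_sqrt_le_abs_inner (x : UnitSphere E) :
    ∃ i, (√n)⁻¹ ≤ |⟪b i, (x : E)⟫| := by
  have hsum : ∑ i, ⟪b i, (x : E)⟫ ^ 2 = 1 := by
    rw [b.sum_sq_inner_right, norm_eq_of_mem_sphere x, one_pow]
  have hn : (Finset.univ : Finset (Fin n)).Nonempty := by
    rw [Finset.nonempty_iff_ne_empty]
    intro h
    rw [h, Finset.sum_empty] at hsum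
    exact zero_ne_one hsum
  have hn0 : (n : ℝ) ≠ 0 := by
    have := Fin.pos hn.choose
    positivity
  obtain ⟨i, -, hi⟩ := Finset.exists_le_of_sum_le (f := fun _ => (n : ℝ)⁻¹)
    (g := fun i => ⟪b i, (x : E)⟫ ^ 2) hn (by simp [hsum, hn0])
  exact ⟨i, by simpa [Real.sqrt_sq_eq_abs, Real.sqrt_inv] using Real.sqrt_le_sqrt hi⟩

/-- The index of a coordinate of `x` of absolute value at least `1 / √n`. Together with the sign of
that coordinate it labels the closed cover of the sphere by the facets of a cube. -/
def labelIndex (x : UnitSphere E) : Fin n :=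
  (exists_inv_sqrt_le_abs_inner b x).choose

theorem inv_sqrt_le_abs_inner_labelIndex (x : UnitSphere E) :
    (√n)⁻¹ ≤ |⟪b (labelIndex b x), (x : E)⟫| :=
  (exists_inv_sqrt_le_abs_inner b x).choose_spec

theorem inner_labelIndex_ne_zero (x : UnitSphere E) : ⟪b (labelIndex b x), (x : E)⟫ ≠ 0 := by
  have hn : 0 < n := Fin.pos (labelIndex b x)
  have hpos : 0 < (√n)⁻¹ := by positivity
  exact abs_pos.1 (hpos.trans_le (inv_sqrt_le_abs_inner_labelIndex b x))

variable (R : Type*) [CommRing R]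

open Classical in
/-- The indicator function of the points of the sphere with label `+i`. -/
def posLabel (i : ℕ) (x : UnitSphere E) : R :=
  if (labelIndex b x : ℕ) = i ∧ 0 < ⟪b (labelIndex b x), (x : E)⟫ then 1 else 0

variable {b R}

theorem posLabel_eq_zero_of_inner_nonpos {i : Fin n} {x : UnitSphere E} (h : ⟪b i, (x : E)⟫ ≤ 0) :
    posLabel b R i x = 0 := by
  refine if_neg ?_
  rintro ⟨hi, hpos⟩
  rw [Fin.ext hi] at hpos
  exact hpos.not_ge h

theorem posLabel_eq_zero_of_dist_lt {x y : UnitSphere E}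
    (hx : ⟪b (labelIndex b x), (x : E)⟫ < 0) (hxy : dist x y < 2 * (√n)⁻¹) :
    posLabel b R (labelIndex b x) y = 0 := by
  refine if_neg ?_
  rintro ⟨hi, hpos⟩
  have hlx := inv_sqrt_le_abs_inner_labelIndex b x
  have hly := inv_sqrt_le_abs_inner_labelIndex b y
  rw [abs_of_neg hx] at hlx
  rw [abs_of_pos hpos, Fin.ext hi] at hly
  have hdist : |⟪b (labelIndex b x), (y : E) - x⟫| ≤ dist x y := by
    rw [dist_comm, Subtype.dist_eq, dist_eq_norm]
    simpa using abs_real_inner_le_norm (b (labelIndex b x)) ((y : E) - x)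
  rw [inner_sub_right] at hdist
  linarith [le_abs_self (⟪b (labelIndex b x), (y : E)⟫ - ⟪b (labelIndex b x), (x : E)⟫)]

theorem sum_posLabel_eq_one {k : ℕ} {x : UnitSphere E} (hk : (labelIndex b x : ℕ) < k)
    (hpos : 0 < ⟪b (labelIndex b x), (x : E)⟫) :
    ∑ i ∈ Finset.range k, posLabel b R i x = 1 := by
  have hother : ∀ i ∈ Finset.range k, i ≠ labelIndex b x → posLabel b R i x = 0 :=
    fun i _ hi => if_neg fun h => hi h.1.symm
  rw [Finset.sum_eq_single_of_mem _ (Finset.mem_range.2 hk) hother]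
  exact if_pos ⟨rfl, hpos⟩

theorem exists_posLabel_eq_zero_or_sum_eq_one {k : ℕ} {l : List (UnitSphere E)}
    (hl : ∀ x ∈ l, ∀ y ∈ l, dist x y < 2 * (√n)⁻¹) {j : ℕ}
    (hneg : ∀ x ∈ l, ⟪b (labelIndex b x), (x : E)⟫ < 0 → (labelIndex b x : ℕ) < j)
    (hpos : ∀ x ∈ l, 0 < ⟪b (labelIndex b x), (x : E)⟫ → (labelIndex b x : ℕ) < k) :
    (∃ i < j, ∀ x ∈ l, posLabel b R i x = 0) ∨
      ∀ x ∈ l, ∑ i ∈ Finset.range k, posLabel b R i x = 1 := by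
  by_cases hx : ∃ x ∈ l, ⟪b (labelIndex b x), (x : E)⟫ < 0
  · obtain ⟨x, hxl, hx⟩ := hx
    exact Or.inl ⟨_, hneg x hxl hx, fun y hy => posLabel_eq_zero_of_dist_lt hx (hl x hxl y hy)⟩
  · push Not at hx
    refine Or.inr fun x hxl => ?_
    have hxpos := (hx x hxl).lt_of_ne (inner_labelIndex_ne_zero b x).symm
    exact sum_posLabel_eq_one (hpos x hxl hxpos) hxpos

theorem iterContract_posLabel_boundary_single {l : List (UnitSphere E)}
    (hl : ∀ x ∈ l, ∀ y ∈ l, dist x y < 2 * (√n)⁻¹) :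
    OrderedChain.iterContract (posLabel b R) n (OrderedChain.boundary (single l 1)) = 0 :=
  OrderedChain.iterContract_boundary_single
    (exists_posLabel_eq_zero_or_sum_eq_one hl (fun _ _ _ => Fin.isLt _) fun _ _ _ => Fin.isLt _)

end Labels

section SphereCycles

variable {E : Type*} [NormedAddCommGroup E] [InnerProductSpace ℝ E] {n : ℕ}
  (b : OrthonormalBasis (Fin n) ℝ E)

/-- The subsphere spanned by the first `k` vectors of an orthonormal basis. -/
def coordSphere (k : ℕ) : Set (UnitSphere E) :=
  {x | ∀ i : Fin n, k ≤ i → ⟪b i, (x : E)⟫ = 0}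

/-- The hemisphere of `coordSphere b (k + 1)` centred at the `k`-th basis vector. -/
def coordHemisphere (k : Fin n) : Set (UnitSphere E) :=
  {x | x ∈ coordSphere b (k + 1) ∧ 0 ≤ ⟪b k, (x : E)⟫}

/-- The reflection of the sphere in the hyperplane orthogonal to `e`. -/
def reflection (e : E) (x : UnitSphere E) : UnitSphere E :=
  ⟨(ℝ ∙ e)ᗮ.reflection x, mem_sphere_zero_iff_norm.2 (by simp)⟩

theorem isometry_reflection (e : E) : Isometry (reflection e) := fun x y =>
  (ℝ ∙ e)ᗮ.reflection.isometry.edist_eq x y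

/-- A basis vector as a point of the sphere. -/
def basisPoint (k : Fin n) : UnitSphere E :=
  ⟨b k, mem_sphere_zero_iff_norm.2 (b.norm_eq_one k)⟩

variable {b} {k : Fin n} {x : UnitSphere E}

theorem coe_reflection_of_mem (hx : x ∈ coordSphere b k) : reflection (b k) x = x := by
  refine Subtype.ext (Submodule.reflection_mem_subspace_eq_self ?_)
  exact Submodule.mem_orthogonal_singleton_iff_inner_right.2 (hx k le_rfl)

theorem inner_reflection (e : E) (v : E) :
    ⟪v, (reflection e x : E)⟫ = ⟪(ℝ ∙ e)ᗮ.reflection v, (x : E)⟫ := by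
  conv_lhs => rw [← (ℝ ∙ e)ᗮ.reflection_reflection v]
  exact LinearIsometryEquiv.inner_map_map _ _ _

theorem inner_reflection_self : ⟪b k, (reflection (b k) x : E)⟫ = -⟪b k, (x : E)⟫ := by
  rw [inner_reflection, Submodule.reflection_orthogonalComplement_singleton_eq_neg, inner_neg_left]

theorem mapsTo_reflection_coordSphere :
    MapsTo (reflection (b k)) (coordSphere b (k + 1)) (coordSphere b (k + 1)) := by
  intro x hx i hi
  have hik : ⟪b k, b i⟫ = 0 := b.inner_eq_zero fun h => by omega
  rw [inner_reflection, Submodule.reflection_mem_subspace_eq_self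
    (Submodule.mem_orthogonal_singleton_iff_inner_right.2 hik), hx i hi]

theorem basisPoint_mem_coordHemisphere : basisPoint b k ∈ coordHemisphere b k := by
  refine ⟨fun i hi => b.inner_eq_zero fun h => by omega, ?_⟩
  simp [basisPoint]

theorem segment_mem_coordHemisphere (hx : x ∈ coordSphere b k) {t : ℝ} (ht : t ∈ Icc (0 : ℝ) 1) :
    segment (basisPoint b k) x t ∈ coordHemisphere b k := by
  have hxk : ⟪(x : E), (basisPoint b k : E)⟫ = 0 := by
    rw [real_inner_comm]; exact hx k le_rfl
  obtain ⟨c, hc, hseg⟩ := exists_coe_segment_eq_smul hxk.ge ht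
  have hcoord (i : Fin n) : ⟪b i, (segment (basisPoint b k) x t : E)⟫ =
      c * ((1 - t) * ⟪b i, (x : E)⟫ + t * ⟪b i, (basisPoint b k : E)⟫) := by
    rw [hseg, real_inner_smul_right, inner_add_right, real_inner_smul_right, real_inner_smul_right]
  obtain ⟨hk1, hk0⟩ := basisPoint_mem_coordHemisphere (b := b) (k := k)
  refine ⟨fun i hi => ?_, ?_⟩
  · rw [hcoord, hx i (by omega), hk1 i hi]
    simp
  · rw [hcoord, hx k le_rfl, mul_zero, zero_add]
    exact mul_nonneg hc.le (mul_nonneg ht.1 hk0)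

theorem isCompact_coordSphere (b : OrthonormalBasis (Fin n) ℝ E) (k : ℕ) :
    IsCompact (coordSphere b k) := by
  have : FiniteDimensional ℝ E := b.toBasis.finiteDimensional_of_finite
  have : ProperSpace E := FiniteDimensional.proper_real E
  refine IsClosed.isCompact ?_
  simp only [coordSphere, Set.ofPred_forall]
  exact isClosed_iInter fun i => isClosed_iInter fun _ => isClosed_eq (by fun_prop) (by fun_prop)

variable {R : Type*} [CommRing R]

open OrderedChain

theorem iterContract_posLabel_succ_of_mem {a : OrderedChain R (UnitSphere E)} {m : ℕ}
    (ha : a ∈ ripsChains R (2 * (√n)⁻¹) (coordHemisphere b k) m) :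
    iterContract (posLabel b R) (k + 1) a = iterContract (posLabel b R) k (boundary a) := by
  refine eqOn_cliqueChains _ (iterContract (posLabel b R) k ∘ₗ boundary) (fun l _ hl => ?_) ha
  have hle : ∀ x ∈ l, (labelIndex b x : ℕ) < k + 1 := fun x hx => by
    by_contra! h
    exact inner_labelIndex_ne_zero b x ((hl x hx x hx).1.1 _ h)
  refine iterContract_succ_single (exists_posLabel_eq_zero_or_sum_eq_one
    (fun x hx y hy => (hl x hx y hy).2.2) (fun x hx hneg => ?_) fun x hx _ => hle x hx)
  refine (Nat.lt_succ_iff_lt_or_eq.1 (hle x hx)).resolve_right fun h => ?_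
  rw [Fin.ext h] at hneg
  exact hneg.not_ge (hl x hx x hx).1.2

theorem iterContract_posLabel_map_reflection {a : OrderedChain R (UnitSphere E)} {m : ℕ} {ε : ℝ}
    (ha : a ∈ ripsChains R ε (coordHemisphere b k) m) :
    iterContract (posLabel b R) (k + 1) (map R (reflection (b k)) a) = 0 := by
  refine eqOn_cliqueChains (iterContract (posLabel b R) (k + 1) ∘ₗ map R (reflection (b k))) 0
    (fun l _ hl => ?_) ha
  rw [LinearMap.comp_apply, map_single]
  refine iterContract_eq_zero (i := k) (by omega) (Finsupp.single_mem_supported R 1 ?_)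
  intro y hy
  obtain ⟨x, hx, rfl⟩ := List.mem_map.1 hy
  refine posLabel_eq_zero_of_inner_nonpos ?_
  rw [inner_reflection_self]
  linarith [(hl x hx x hx).1.2]

/-- A cycle with the properties of a fundamental cycle of `coordSphere b k`, at scale `ε`. -/
structure IsSphereCycle (b : OrthonormalBasis (Fin n) ℝ E) (k : ℕ) (ε : ℝ)
    (T : OrderedChain R (UnitSphere E)) : Prop where
  mem : T ∈ ripsChains R ε (coordSphere b k) k
  boundary_eq_zero : boundary T = 0
  iterContract_eq_one : iterContract (posLabel b R) k T [] = 1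

theorem IsSphereCycle.sub_map_reflection {ε δ : ℝ} {T h : OrderedChain R (UnitSphere E)}
    (hT : IsSphereCycle b k δ T) (hε : ε ≤ 2 * (√n)⁻¹)
    (hh : h ∈ ripsChains R ε (coordHemisphere b k) (k + 1)) (hbd : boundary h = T) :
    IsSphereCycle b (k + 1) ε (h - map R (reflection (b k)) h) where
  mem := by
    have hsub : coordHemisphere b k ⊆ coordSphere b (k + 1) := fun x hx => hx.1
    exact Submodule.sub_mem _ (ripsChains_mono le_rfl hsub hh)
      (map_mem_ripsChains (isometry_reflection _) (mapsTo_reflection_coordSphere.mono_left hsub) hh)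
  boundary_eq_zero := by
    have hfix : EqOn (reflection (b k)) id (coordSphere b k) := fun x hx => coe_reflection_of_mem hx
    rw [map_sub, ← map_boundary, hbd, map_eq_self_of_eqOn hfix hT.mem, sub_self]
  iterContract_eq_one := by
    rw [map_sub, iterContract_posLabel_map_reflection hh, sub_zero,
      iterContract_posLabel_succ_of_mem (ripsChains_mono hε subset_rfl hh), hbd,
      hT.iterContract_eq_one]

theorem IsSphereCycle.exists_succ {ε δ : ℝ} {T h : OrderedChain R (UnitSphere E)}
    (hT : IsSphereCycle b k δ T)
    (hh : h ∈ ripsChains R (min ε (2 * (√n)⁻¹)) (coordHemisphere b k) (k + 1))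
    (hbd : boundary h = T) :
    ∃ T' : OrderedChain R (UnitSphere E),
      IsSphereCycle b (k + 1) ε T' ∧ eval (fun _ => (1 : R)) T' = 0 := by
  have hcycle := hT.sub_map_reflection (min_le_right ε _) hh hbd
  refine ⟨_, ⟨ripsChains_mono (min_le_left _ _) subset_rfl hcycle.mem, hcycle.boundary_eq_zero,
    hcycle.iterContract_eq_one⟩, ?_⟩
  rw [map_sub, eval_map, sub_self]

theorem exists_isSphereCycle_succ (b : OrthonormalBasis (Fin n) ℝ E) {k : ℕ} (hk : k < n) {ε : ℝ}
    (hε : 0 < ε) :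
    ∃ T : OrderedChain R (UnitSphere E),
      IsSphereCycle b (k + 1) ε T ∧ eval (fun _ => (1 : R)) T = 0 := by
  have hn : (0 : ℝ) < 2 * (√n)⁻¹ := by
    have : 0 < n := by omega
    positivity
  have hmin : 0 < min ε (2 * (√n)⁻¹) := lt_min hε hn
  induction k generalizing ε with
  | zero =>
    have hempty : IsSphereCycle (R := R) b 0 1 (single [] 1) :=
      ⟨single_mem_ripsChains rfl (by simp) (by simp) 1, by simp, by simp [iterContract]⟩
    refine hempty.exists_succ (k := ⟨0, hk⟩) (h := single [basisPoint b ⟨0, hk⟩] 1)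
      (single_mem_ripsChains rfl ?_ ?_ 1) (by simp [boundary_single_cons])
    · simpa using basisPoint_mem_coordHemisphere
    · simpa using hmin
  | succ k ih =>
    let e : UnitSphere E := basisPoint b ⟨k + 1, hk⟩
    have hcont : ContinuousOn (fun z : UnitSphere E × ℝ => segment e z.1 z.2)
        (coordSphere b (k + 1) ×ˢ Icc 0 1) := by
      refine (continuousOn_segment e).mono (prod_mono_left fun x hx => ?_)
      exact ne_neg_of_inner_nonneg ((real_inner_comm _ _).trans (hx ⟨k + 1, hk⟩ le_rfl)).ge
    obtain ⟨δ, hδ, hfill⟩ := exists_boundary_eq_of_homotopy (R := R)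
      (isCompact_coordSphere b (k + 1)) hcont
      (fun x hx t ht => segment_mem_coordHemisphere (k := ⟨k + 1, hk⟩) hx ht)
      (fun x _ => segment_zero e x) hmin
    obtain ⟨T, hT, haug⟩ := ih (by omega) hδ (lt_min hδ hn)
    obtain ⟨h, hh, hbd⟩ := hfill _ T hT.mem hT.boundary_eq_zero
      (by simpa only [segment_one] using map_const_eq_zero e hT.mem haug)
    exact hT.exists_succ (k := ⟨k + 1, hk⟩) hh hbd

end SphereCycles

end UnitSphere

/-! ### The action on the sphere and its tower of chains -/

/-- The unit sphere of `ℂ^k`. -/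
abbrev ComplexSphere (k : ℕ) : Type := UnitSphere (EuclideanSpace ℂ (Fin k))

namespace LensSpace

open ZMod

section Rotation

variable {p k : ℕ} [NeZero p] {ℓ : Fin k → ℤ}

/-- The action of `m : ZMod p` on the unit sphere of `ℂ^k` whose orbit space is the lens space
with parameters `ℓ`. -/
def rot (p : ℕ) [NeZero p] (ℓ : Fin k → ℤ) (m : ZMod p) (x : ComplexSphere k) :
    ComplexSphere k :=
  ⟨WithLp.toLp 2 fun j => stdAddChar (m * (ℓ j : ZMod p)) * x.1 j, by
    have hx : ‖x.1‖ ^ 2 = 1 := by simp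
    rw [mem_sphere_zero_iff_norm, ← pow_eq_one_iff_of_nonneg (norm_nonneg _) two_ne_zero]
    rw [EuclideanSpace.norm_sq_eq] at hx ⊢
    simpa using hx⟩

theorem rot_apply (m : ZMod p) (x : ComplexSphere k) (j : Fin k) :
    (rot p ℓ m x).1 j = stdAddChar (m * (ℓ j : ZMod p)) * x.1 j :=
  rfl

theorem rot_add (m n : ZMod p) (x : ComplexSphere k) :
    rot p ℓ (m + n) x = rot p ℓ m (rot p ℓ n x) := by
  ext j
  simp only [rot_apply, add_mul, AddChar.map_add_eq_mul, mul_assoc]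

@[simp]
theorem rot_zero (x : ComplexSphere k) : rot p ℓ 0 x = x := by
  ext j
  simp [rot_apply]

theorem isometry_rot (m : ZMod p) : Isometry (rot p ℓ m) := by
  refine Isometry.of_dist_eq fun x y => ?_
  have hcoord (j : Fin k) :
      dist ((rot p ℓ m x).1 j) ((rot p ℓ m y).1 j) = dist (x.1 j) (y.1 j) := by
    simp only [rot_apply, dist_eq_norm, ← mul_sub, norm_mul, AddChar.norm_apply, one_mul]
  simp only [Subtype.dist_eq, EuclideanSpace.dist_eq, hcoord]

theorem eq_zero_of_rot_eq_self (hℓ : ∀ j, IsCoprime (ℓ j) (p : ℤ)) {m : ZMod p}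
    {x : ComplexSphere k} (h : rot p ℓ m x = x) : m = 0 := by
  obtain ⟨j, hj⟩ : ∃ j, x.1 j ≠ 0 := by
    by_contra! hx
    exact ne_zero_of_mem_unit_sphere x (WithLp.ofLp_injective 2 (funext hx))
  have hchar : stdAddChar (m * (ℓ j : ZMod p)) = (1 : ℂ) :=
    mul_right_cancel₀ hj (by rw [← rot_apply, h, one_mul])
  have hmul : m * (ℓ j : ZMod p) = 0 :=
    injective_stdAddChar (hchar.trans (AddChar.map_zero_eq_one _).symm)
  have hunit : IsUnit (ℓ j : ZMod p) := (coe_int_isUnit_iff_isCoprime _ _).2 (hℓ j).symm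
  exact (hunit.mul_left_eq_zero).1 hmul

/-- The projection of the sphere onto the lens space. -/
def proj (p : ℕ) (ℓ : Fin k → ℤ) (x : ComplexSphere k) : LensSpace p k ℓ :=
  Quot.mk _ x

theorem surjective_proj {p : ℕ} {ℓ : Fin k → ℤ} : Function.Surjective (proj p ℓ) :=
  Quot.mk_surjective

theorem lensRel_iff {x y : ComplexSphere k} :
    lensRel p k ℓ x y ↔ ∃ m, rot p ℓ m x = y := by
  have hphase (m : ℤ) (j : Fin k) : stdAddChar ((m : ZMod p) * (ℓ j : ZMod p)) =
      Complex.exp (2 * Real.pi * Complex.I * m * ℓ j / p) := by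
    rw [← Int.cast_mul, stdAddChar_coe, Int.cast_mul, ← mul_assoc]
  constructor
  · rintro ⟨m, hm⟩
    refine ⟨m, ?_⟩
    ext j
    rw [rot_apply, hphase, hm]
  · rintro ⟨m, rfl⟩
    obtain ⟨m, rfl⟩ := ZMod.intCast_surjective m
    exact ⟨m, fun j => by rw [rot_apply, hphase]⟩

theorem proj_eq_proj_iff {x y : ComplexSphere k} :
    proj p ℓ x = proj p ℓ y ↔ ∃ m, rot p ℓ m x = y := by
  have hrel : Equivalence (lensRel p k ℓ) := by
    refine ⟨fun x => ?_, fun {x y} hxy => ?_, fun {x y z} hxy hyz => ?_⟩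
    · exact lensRel_iff.2 ⟨0, rot_zero x⟩
    · obtain ⟨m, rfl⟩ := lensRel_iff.1 hxy
      exact lensRel_iff.2 ⟨-m, by rw [← rot_add, neg_add_cancel, rot_zero]⟩
    · obtain ⟨m, rfl⟩ := lensRel_iff.1 hxy
      obtain ⟨n, rfl⟩ := lensRel_iff.1 hyz
      exact lensRel_iff.2 ⟨n + m, rot_add n m x⟩
  rw [← lensRel_iff, ← hrel.eqvGen_iff, ← Quot.eq]
  rfl

@[simp]
theorem proj_rot (m : ZMod p) (x : ComplexSphere k) :
    proj p ℓ (rot p ℓ m x) = proj p ℓ x :=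
  (proj_eq_proj_iff.2 ⟨m, rfl⟩).symm

/-- The action of `ZMod p` on the unit sphere by `rot`. It depends on `ℓ`, so it is only ever
introduced as a local instance. -/
abbrev rotAction (p : ℕ) [NeZero p] (ℓ : Fin k → ℤ) :
    AddAction (ZMod p) (ComplexSphere k) where
  vadd := rot p ℓ
  zero_vadd := rot_zero
  add_vadd := rot_add

theorem isAddQuotientCoveringMap_proj (hℓ : ∀ j, IsCoprime (ℓ j) (p : ℤ)) :
    letI := rotAction p ℓ
    IsAddQuotientCoveringMap (proj p ℓ) (ZMod p) := by
  let _ := rotAction p ℓ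
  have : ContinuousConstVAdd (ZMod p) (ComplexSphere k) :=
    ⟨fun m => (isometry_rot m).continuous⟩
  have : IsCancelVAdd (ZMod p) (ComplexSphere k) :=
    isCancelVAdd_iff_eq_zero_of_vadd_eq.2 fun _ _ => eq_zero_of_rot_eq_self hℓ
  exact isQuotientMap_quot_mk.isAddQuotientCoveringMap_of_properlyDiscontinuousVAdd
    (eq_comm.trans proj_eq_proj_iff)

theorem isCoveringMap_proj (hℓ : ∀ j, IsCoprime (ℓ j) (p : ℤ)) : IsCoveringMap (proj p ℓ) :=
  let _ := rotAction p ℓ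
  (isAddQuotientCoveringMap_proj hℓ).isCoveringMap

theorem isOpenQuotientMap_proj (hℓ : ∀ j, IsCoprime (ℓ j) (p : ℤ)) :
    IsOpenQuotientMap (proj p ℓ) :=
  let _ := rotAction p ℓ
  (isAddQuotientCoveringMap_proj hℓ).isOpenQuotientMap

end Rotation

end LensSpace

section CyclicNorm

variable {A : Type*} [Ring A] {g : A} {p : ℕ}

/-- The norm element `1 + g + ⋯ + g ^ (p - 1)` of a cyclic group of order `p` generated by `g`. -/
def cyclicNorm (g : A) (p : ℕ) : A := ∑ m ∈ Finset.range p, g ^ m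

/-- The element `∑ k < p, (1 + g + ⋯ + g ^ (k - 1))`, whose product with `g - 1` is the norm element
in characteristic `p`. -/
def cyclicNormPrimitive (g : A) (p : ℕ) : A := ∑ k ∈ Finset.range p, cyclicNorm g k

theorem sub_one_mul_cyclicNorm (h : g ^ p = 1) : (g - 1) * cyclicNorm g p = 0 := by
  rw [cyclicNorm, mul_geom_sum, h, sub_self]

theorem cyclicNorm_mul_sub_one (h : g ^ p = 1) : cyclicNorm g p * (g - 1) = 0 := by
  rw [cyclicNorm, geom_sum_mul, h, sub_self]

theorem sub_one_mul_cyclicNormPrimitive (h : (p : A) = 0) :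
    (g - 1) * cyclicNormPrimitive g p = cyclicNorm g p := by
  have hterm (k : ℕ) : (g - 1) * cyclicNorm g k = g ^ k - 1 := mul_geom_sum g k
  rw [cyclicNormPrimitive, Finset.mul_sum]
  simp only [hterm, Finset.sum_sub_distrib, Finset.sum_const, Finset.card_range, nsmul_one, h,
    sub_zero]
  rfl

theorem commute_cyclicNormPrimitive_sub_one : Commute (cyclicNormPrimitive g p) (g - 1) :=
  .sub_right (.sum_left _ _ _ fun _ _ => .sum_left _ _ _ fun m _ => .pow_self g m) (.one_right _)

end CyclicNorm

namespace OrderedChain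

variable {R : Type*} [CommRing R] {Y Z : Type*} {f : Y → Y} {p n : ℕ}

theorem map_pow_apply (f : Y → Y) (m : ℕ) (a : OrderedChain R Y) :
    (map R f ^ m) a = map R f^[m] a := by
  induction m with
  | zero => exact (map_id a).symm
  | succ m ih => rw [pow_succ', Module.End.mul_apply, ih, map_map, Function.iterate_succ']

theorem map_pow_eq_one (hf : f^[p] = id) : map R f ^ p = 1 := by
  refine LinearMap.ext fun a => ?_
  rw [map_pow_apply, hf]
  exact map_id a

theorem map_sub_one_cyclicNorm (hf : f^[p] = id) (a : OrderedChain R Y) :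
    (map R f - 1) (cyclicNorm (map R f) p a) = 0 :=
  LinearMap.congr_fun (sub_one_mul_cyclicNorm (A := Module.End R _) (map_pow_eq_one hf)) a

theorem cyclicNorm_map_sub_one (hf : f^[p] = id) (a : OrderedChain R Y) :
    cyclicNorm (map R f) p ((map R f - 1) a) = 0 :=
  LinearMap.congr_fun (cyclicNorm_mul_sub_one (A := Module.End R _) (map_pow_eq_one hf)) a

theorem map_sub_one_cyclicNormPrimitive (hR : (p : R) = 0) (a : OrderedChain R Y) :
    (map R f - 1) (cyclicNormPrimitive (map R f) p a) = cyclicNorm (map R f) p a := by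
  have hp : (p : Module.End R (OrderedChain R Y)) = 0 := by
    rw [← map_natCast (algebraMap R _), hR, map_zero]
  exact LinearMap.congr_fun (sub_one_mul_cyclicNormPrimitive hp) a

theorem cyclicNormPrimitive_map_sub_one (hR : (p : R) = 0) (a : OrderedChain R Y) :
    cyclicNormPrimitive (map R f) p ((map R f - 1) a) = cyclicNorm (map R f) p a := by
  rw [← map_sub_one_cyclicNormPrimitive hR]
  exact LinearMap.congr_fun (commute_cyclicNormPrimitive_sub_one (A := Module.End R _)).eq a

theorem boundary_cyclicNorm (f : Y → Y) (p : ℕ) (a : OrderedChain R Y) :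
    boundary (cyclicNorm (map R f) p a) = cyclicNorm (map R f) p (boundary a) := by
  simp only [cyclicNorm, LinearMap.sum_apply, map_sum, map_pow_apply, map_boundary]

theorem boundary_cyclicNormPrimitive (f : Y → Y) (p : ℕ) (a : OrderedChain R Y) :
    boundary (cyclicNormPrimitive (map R f) p a) =
      cyclicNormPrimitive (map R f) p (boundary a) := by
  simp only [cyclicNormPrimitive, LinearMap.sum_apply, map_sum, boundary_cyclicNorm]

theorem boundary_cyclicNormPrimitive_of_eq (hR : (p : R) = 0) {a b : OrderedChain R Y}
    (h : boundary b = (map R f - 1) a) :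
    boundary (cyclicNormPrimitive (map R f) p b) = cyclicNorm (map R f) p a := by
  rw [boundary_cyclicNormPrimitive, h, cyclicNormPrimitive_map_sub_one hR]

theorem boundary_map_sub_one (f : Y → Y) (a : OrderedChain R Y) :
    boundary ((map R f - 1) a) = (map R f - 1) (boundary a) := by
  rw [LinearMap.sub_apply, map_sub, ← map_boundary]
  rfl

theorem map_cyclicNorm_of_comp_eq {g : Y → Z} (h : g ∘ f = g) (a : OrderedChain R Y) :
    map R g (cyclicNorm (map R f) p a) = (p : R) • map R g a := by
  have hiter (m : ℕ) : g ∘ f^[m] = g := by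
    induction m with
    | zero => rfl
    | succ m ih => rw [Function.iterate_succ', ← Function.comp_assoc, h, ih]
  simp only [cyclicNorm, LinearMap.sum_apply, map_sum, map_pow_apply, map_map, hiter,
    Finset.sum_const, Finset.card_range, Nat.cast_smul_eq_nsmul]

theorem map_map_sub_one_of_comp_eq {g : Y → Z} (h : g ∘ f = g) (a : OrderedChain R Y) :
    map R g ((map R f - 1) a) = 0 := by
  rw [LinearMap.sub_apply, map_sub, map_map, h, Module.End.one_apply, sub_self]

variable [PseudoMetricSpace Y] {K : Set Y} {ε : ℝ} {a : OrderedChain R Y}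

theorem isometry_iterate (hf : Isometry f) (m : ℕ) : Isometry f^[m] := by
  induction m with
  | zero => exact isometry_id
  | succ m ih => exact ih.comp hf

theorem cyclicNorm_mem_ripsChains (hf : Isometry f) (hK : MapsTo f K K)
    (ha : a ∈ ripsChains R ε K n) : cyclicNorm (map R f) p a ∈ ripsChains R ε K n := by
  simp only [cyclicNorm, LinearMap.sum_apply, map_pow_apply]
  exact Submodule.sum_mem _ fun m _ => map_mem_ripsChains (isometry_iterate hf m) (hK.iterate m) ha

theorem cyclicNormPrimitive_mem_ripsChains (hf : Isometry f) (hK : MapsTo f K K)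
    (ha : a ∈ ripsChains R ε K n) : cyclicNormPrimitive (map R f) p a ∈ ripsChains R ε K n := by
  simp only [cyclicNormPrimitive, LinearMap.sum_apply]
  exact Submodule.sum_mem _ fun m _ => cyclicNorm_mem_ripsChains hf hK ha

theorem exists_boundary_eq_of_cone {E M : Type*} [NormedAddCommGroup E] [InnerProductSpace ℝ E]
    [PseudoMetricSpace M] [CompactSpace M] {K L : Set (UnitSphere E)} (e : UnitSphere E)
    (hK : IsCompact K) (hKe : ∀ x ∈ K, x ≠ -e)
    (hL : ∀ x ∈ K, ∀ t ∈ Icc (0 : ℝ) 1, UnitSphere.segment e x t ∈ L) (hε : 0 < ε) :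
    ∃ δ > 0, ∀ n, ∀ a ∈ ripsChains R δ (K ×ˢ (univ : Set M)) n, boundary a = 0 →
      map R (Prod.map (fun _ => e) id) a = 0 →
      ∃ b ∈ ripsChains R ε (L ×ˢ (univ : Set M)) (n + 1), boundary b = a := by
  have hcont : ContinuousOn (fun z : (UnitSphere E × M) × ℝ =>
      (UnitSphere.segment e z.1.1 z.2, z.1.2)) ((K ×ˢ univ) ×ˢ Icc 0 1) := by
    refine ContinuousOn.prodMk ?_ (by fun_prop)
    exact (UnitSphere.continuousOn_segment e).comp
      (f := fun z : (UnitSphere E × M) × ℝ => (z.1.1, z.2)) (by fun_prop)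
      fun z hz => ⟨hKe z.1.1 hz.1.1, hz.2⟩
  obtain ⟨δ, hδ, hfill⟩ := exists_boundary_eq_of_homotopy (R := R)
    (F := fun z t => (UnitSphere.segment e z.1 t, z.2)) (hK.prod isCompact_univ) hcont
    (L := L ×ˢ univ) (fun x hx t ht => ⟨hL x.1 hx.1 t ht, mem_univ _⟩)
    (fun x _ => by rw [UnitSphere.segment_zero]) hε
  refine ⟨δ, hδ, fun n a ha hbd hcone => hfill n a ha hbd ?_⟩
  simp only [UnitSphere.segment_one]
  exact hcone

/-- A tower of chains modelled on the products of an `(n - 1)`-cycle with the cells of dimensions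
`0` to `3` of an equivariant cell structure of `S³`, whose boundaries are alternately given by
`g - 1` and by the norm element of the cyclic group of order `p` generated by `g`. -/
structure IsCyclicTower (f : Y → Y) (p : ℕ) (ε : ℝ) (n : ℕ) (P : Fin 4 → OrderedChain R Y) :
    Prop where
  mem : ∀ i : Fin 4, P i ∈ ripsChains R ε univ (n + i)
  boundary_zero : boundary (P 0) = 0
  boundary_one : boundary (P 1) = (map R f - 1) (P 0)
  boundary_two : boundary (P 2) = cyclicNorm (map R f) p (P 1)
  boundary_three : boundary (P 3) = (map R f - 1) (P 2)

end OrderedChain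

namespace LensSpace

section AxisPoint

variable {k : ℕ}

/-- The point of the unit sphere of `ℂ^k` with `j`-th coordinate `z` and all others zero. -/
def axisPoint (j : Fin k) (z : Circle) : ComplexSphere k :=
  ⟨EuclideanSpace.single j (z : ℂ), by
    exact mem_sphere_zero_iff_norm.2 ((PiLp.norm_single 2 _ j _).trans z.norm_coe)⟩

@[fun_prop]
theorem continuous_axisPoint (j : Fin k) : Continuous (axisPoint j) := by
  refine Continuous.subtype_mk ?_ _
  exact (PiLp.continuous_toLp 2 _).comp
    ((continuous_single j).comp continuous_subtype_val)

theorem rot_axisPoint {p : ℕ} [NeZero p] (ℓ : Fin k → ℤ) (m : ZMod p) (j : Fin k) (z : Circle) :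
    rot p ℓ m (axisPoint j z) = axisPoint j (ZMod.toCircle (m * (ℓ j : ZMod p)) * z) := by
  ext i
  by_cases hij : i = j <;> simp [rot_apply, axisPoint, hij, ZMod.stdAddChar_apply]

theorem inner_axisPoint (x : ComplexSphere k) (j : Fin k) (z : Circle) :
    ⟪x.1, (axisPoint j z).1⟫ = (star (x.1 j) * z).re := by
  have hcoord (i : Fin k) (hij : i ≠ j) : ⟪x.1 i, (axisPoint j z).1 i⟫ = 0 := by
    simp [axisPoint, hij]
  rw [PiLp.inner_apply, Finset.sum_eq_single_of_mem j (Finset.mem_univ j) fun i _ => hcoord i]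
  simp [axisPoint, Complex.inner, mul_comm]

end AxisPoint

section Tower

open OrderedChain
open scoped ComplexOrder

variable {R : Type*} [CommRing R] {M : Type*} {p k n : ℕ} [NeZero p] {ℓ : Fin k → ℤ} {ε : ℝ}

/-- The action of `ZMod p` on a product `S × M` through the sphere factor. -/
abbrev rotFst (p : ℕ) [NeZero p] (ℓ : Fin k → ℤ) (M : Type*) (m : ZMod p) :
    ComplexSphere k × M → ComplexSphere k × M :=
  Prod.map (rot p ℓ m) id

theorem rotFst_one_iterate (m : ℕ) : (rotFst p ℓ M 1)^[m] = rotFst p ℓ M m := by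
  induction m with
  | zero => exact funext fun x => Prod.ext (by simp) rfl
  | succ m ih =>
    ext1 x
    rw [Function.iterate_succ_apply', ih, Nat.cast_succ, add_comm]
    exact Prod.ext (rot_add 1 _ x.1).symm rfl

theorem rotFst_one_iterate_self : (rotFst p ℓ M 1)^[p] = id := by
  rw [rotFst_one_iterate, CharP.cast_eq_zero]
  exact funext fun x => Prod.ext (rot_zero x.1) rfl

variable [PseudoMetricSpace M]

theorem isometry_rotFst (m : ZMod p) : Isometry (rotFst p ℓ M m) :=
  (isometry_rot m).prodMap isometry_id

variable (R M p)
variable [CompactSpace M] (ℓ : Fin 2 → ℤ)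

theorem exists_boundary_eq_sub_one_base (hε : 0 < ε) :
    ∃ δ > 0, ∀ n, ∀ a ∈ ripsChains R δ (univ : Set M) n, boundary a = 0 →
      ∃ b ∈ ripsChains R ε ({x : ComplexSphere 2 | x.1 1 = 0} ×ˢ (univ : Set M)) (n + 1),
        boundary b = (map R (rotFst p ℓ M 1) - 1) (map R (axisPoint 0 1, ·) a) := by
  let θ : ℝ := 2 * Real.pi * ((ℓ 0 : ZMod p).val / p)
  have hcont : ContinuousOn (fun z : M × ℝ =>
      ((axisPoint 0 (Circle.exp (z.2 * θ)) : ComplexSphere 2), z.1)) (univ ×ˢ Icc 0 1) := by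
    fun_prop
  obtain ⟨δ, hδ, H, hmem, -, hH⟩ := exists_chainHomotopy (R := R) isCompact_univ hcont
    (F := fun w t => (axisPoint 0 (Circle.exp (t * θ)), w))
    (K' := {x : ComplexSphere 2 | x.1 1 = 0} ×ˢ univ)
    (fun w _ t _ => ⟨by simp [axisPoint], mem_univ _⟩) hε
  refine ⟨δ, hδ, fun n a ha hbd => ⟨H a, hmem n a ha, ?_⟩⟩
  have hrot : rotFst p ℓ M 1 ∘ (axisPoint 0 1, ·) = (axisPoint 0 (Circle.exp θ), ·) := by
    ext1 w
    refine Prod.ext ?_ rfl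
    simp [rot_axisPoint, ZMod.toCircle_eq_circleExp, θ]
  have hHa := hH a
  simp only [hbd, map_zero, add_zero, one_mul, zero_mul, Circle.exp_zero] at hHa
  rw [hHa, LinearMap.sub_apply, map_map, hrot, Module.End.one_apply]

theorem exists_boundary_eq_cyclicNorm (hR : (p : R) = 0) (hε : 0 < ε) :
    ∃ δ > 0, ∀ n,
      ∀ a ∈ ripsChains R δ ({x : ComplexSphere 2 | x.1 1 = 0} ×ˢ (univ : Set M)) n,
      cyclicNorm (map R (rotFst p ℓ M 1)) p (boundary a) = 0 →
      ∃ b ∈ ripsChains R ε ({x : ComplexSphere 2 | 0 ≤ x.1 1} ×ˢ (univ : Set M)) (n + 1),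
        boundary b = cyclicNorm (map R (rotFst p ℓ M 1)) p a := by
  have hinner (x : ComplexSphere 2) : ⟪x.1, (axisPoint 1 1 : ComplexSphere 2).1⟫ = (x.1 1).re := by
    simp [inner_axisPoint]
  have hcpt : IsCompact {x : ComplexSphere 2 | x.1 1 = 0} :=
    (isClosed_eq (by fun_prop) continuous_const).isCompact
  have hsegment (x : ComplexSphere 2) (hx : x ∈ {x : ComplexSphere 2 | x.1 1 = 0}) (t : ℝ)
      (ht : t ∈ Icc (0 : ℝ) 1) :
      UnitSphere.segment (axisPoint 1 1) x t ∈ {x : ComplexSphere 2 | 0 ≤ x.1 1} := by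
    obtain ⟨c, hc, hseg⟩ := UnitSphere.exists_coe_segment_eq_smul (e := axisPoint 1 1)
      (by rw [hinner, hx.out, Complex.zero_re]) ht
    have hcoord : (UnitSphere.segment (axisPoint 1 1) x t).1 1 = (c * t : ℝ) := by
      rw [hseg]
      simp [hx.out, axisPoint]
    rw [mem_ofPred_eq, hcoord, Complex.zero_le_real]
    exact mul_nonneg hc.le ht.1
  obtain ⟨δ, hδ, hfill⟩ := exists_boundary_eq_of_cone (R := R) (M := M) (axisPoint 1 1) hcpt
    (fun x hx => UnitSphere.ne_neg_of_inner_nonneg (by rw [hinner, hx.out, Complex.zero_re]))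
    hsegment hε
  refine ⟨δ, hδ, fun n a ha hbd => hfill n _ (cyclicNorm_mem_ripsChains (isometry_rotFst 1)
    (fun x hx => ?_) ha) ((boundary_cyclicNorm _ _ _).trans hbd) ?_⟩
  · exact ⟨by simp [rot_apply, hx.1.out], mem_univ _⟩
  · rw [map_cyclicNorm_of_comp_eq rfl, hR, zero_smul]

theorem exists_mul_self_eq_and_re_nonneg (z : Circle) :
    ∃ w : Circle, w * w = z ∧ 0 ≤ (w : ℂ).re := by
  obtain ⟨t, rfl⟩ := Circle.exp_surjective z
  have hsq : Circle.exp (t / 2) * Circle.exp (t / 2) = Circle.exp t := by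
    rw [← Circle.exp_add, add_halves]
  rcases le_total 0 (Circle.exp (t / 2) : ℂ).re with h | h
  · exact ⟨_, hsq, h⟩
  · exact ⟨-Circle.exp (t / 2), by rw [neg_mul_neg, hsq], by simpa using h⟩

-- A half line in `ℂ` and its rotate lie in a common half-plane, centred at a square root of the
-- rotation factor.
theorem exists_boundary_eq_sub_one (hε : 0 < ε) :
    ∃ δ > 0, ∀ n,
      ∀ a ∈ ripsChains R δ ({x : ComplexSphere 2 | 0 ≤ x.1 1} ×ˢ (univ : Set M)) n,
      (map R (rotFst p ℓ M 1) - 1) (boundary a) = 0 →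
      ∃ b ∈ ripsChains R ε (univ : Set (ComplexSphere 2 × M)) (n + 1),
        boundary b = (map R (rotFst p ℓ M 1) - 1) a := by
  obtain ⟨w, hw, hre⟩ := exists_mul_self_eq_and_re_nonneg (ZMod.toCircle (ℓ 1 : ZMod p))
  let K : Set (ComplexSphere 2) := {x | 0 ≤ ⟪x.1, (axisPoint 1 w : ComplexSphere 2).1⟫}
  have hK : {x : ComplexSphere 2 | 0 ≤ x.1 1} ⊆ K := by
    intro x hx
    obtain ⟨h0, him⟩ := Complex.nonneg_iff.1 hx.out
    simpa [K, inner_axisPoint, ← him] using mul_nonneg h0 hre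
  have hrotK : MapsTo (rot p ℓ 1) {x : ComplexSphere 2 | 0 ≤ x.1 1} K := by
    intro x hx
    obtain ⟨h0, him⟩ := Complex.nonneg_iff.1 hx.out
    have hstar : star (w : ℂ) * w = 1 := by
      rw [Complex.star_def, Complex.conj_mul', w.norm_coe, Complex.ofReal_one, one_pow]
    have hfactor : star ((rot p ℓ 1 x).1 1) * w = star (x.1 1) * star (w : ℂ) := by
      rw [rot_apply, ZMod.stdAddChar_apply, one_mul, ← hw, Circle.coe_mul, star_mul, star_mul]
      linear_combination star (x.1 1) * star (w : ℂ) * hstar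
    change 0 ≤ ⟪_, _⟫
    rw [inner_axisPoint, hfactor]
    simpa [← him] using mul_nonneg h0 hre
  have hcpt : IsCompact K :=
    (isClosed_le continuous_const (by fun_prop)).isCompact
  obtain ⟨δ, hδ, hfill⟩ := exists_boundary_eq_of_cone (R := R) (M := M) (axisPoint 1 w) hcpt
    (fun _ hx => UnitSphere.ne_neg_of_inner_nonneg hx)
    (fun x _ t _ => mem_univ (UnitSphere.segment (axisPoint 1 w) x t)) hε
  refine ⟨δ, hδ, fun n a ha hbd => ?_⟩
  rw [univ_prod_univ] at hfill
  refine hfill n _ (Submodule.sub_mem _ ?_ ?_) ((boundary_map_sub_one _ _).trans hbd)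
    (map_map_sub_one_of_comp_eq rfl a)
  · exact map_mem_ripsChains (isometry_rotFst 1) (hrotK.prodMap (mapsTo_univ _ _)) ha
  · exact ripsChains_mono le_rfl (prod_mono hK subset_rfl) ha

theorem exists_isCyclicTower (hR : (p : R) = 0) (hε : 0 < ε) :
    ∃ δ > 0, ∀ n, ∀ a ∈ ripsChains R δ (univ : Set M) n, boundary a = 0 →
      ∃ P, IsCyclicTower (rotFst p ℓ M 1) p ε n P ∧ P 0 = map R (axisPoint 0 1, ·) a := by
  obtain ⟨δ₃, hδ₃, h₃⟩ := exists_boundary_eq_sub_one R M p ℓ hε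
  obtain ⟨δ₂, hδ₂, h₂⟩ := exists_boundary_eq_cyclicNorm R M p ℓ hR (lt_min hε hδ₃)
  obtain ⟨δ₁, hδ₁, h₁⟩ := exists_boundary_eq_sub_one_base R M p ℓ (lt_min hε hδ₂)
  refine ⟨min ε δ₁, lt_min hε hδ₁, fun n a ha hbd => ?_⟩
  obtain ⟨P₁, hP₁, hbd₁⟩ := h₁ n a (ripsChains_mono (min_le_right _ _) subset_rfl ha) hbd
  obtain ⟨P₂, hP₂, hbd₂⟩ := h₂ _ P₁ (ripsChains_mono (min_le_right _ _) subset_rfl hP₁) (by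
    rw [hbd₁, cyclicNorm_map_sub_one rotFst_one_iterate_self])
  obtain ⟨P₃, hP₃, hbd₃⟩ := h₃ _ P₂ (ripsChains_mono (min_le_right _ _) subset_rfl hP₂) (by
    rw [hbd₂, map_sub_one_cyclicNorm rotFst_one_iterate_self])
  refine ⟨![map R (axisPoint 0 1, ·) a, P₁, P₂, P₃], ⟨fun i => ?_, ?_, hbd₁, hbd₂, hbd₃⟩, rfl⟩
  · have hiso : Isometry fun w : M => ((axisPoint 0 1 : ComplexSphere 2), w) :=
      Isometry.of_dist_eq fun x y => by simp [Prod.dist_eq]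
    fin_cases i
    · exact map_mem_ripsChains hiso (mapsTo_univ _ _)
        (ripsChains_mono (min_le_left _ _) subset_rfl ha)
    · exact ripsChains_mono (min_le_left _ _) (subset_univ _) hP₁
    · exact ripsChains_mono (min_le_left _ _) (subset_univ _) hP₂
    · exact hP₃
  · exact (map_boundary _ _).symm.trans (by rw [hbd, map_zero])

end Tower

end LensSpace

/-! ### Cup products and cyclic labels -/

namespace OrderedChain

section Cup

variable {R Y : Type*} [CommRing R]

/-- The cup product of a cochain `φ` of degree `k` with a cochain `ψ`. -/
def cup (k : ℕ) (φ ψ : List Y → R) (l : List Y) : R := φ (l.take (k + 1)) * ψ (l.drop k)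

theorem eval_cup_boundary_single {k : ℕ} (φ : List Y → R) {ψ : List Y → R} {l : List Y}
    (hl : k + 2 ≤ l.length) (hψ : eval ψ (boundary (single (l.drop k) 1)) = 0) :
    eval (cup k φ ψ) (boundary (single l 1)) =
      eval φ (boundary (single (l.take (k + 2)) 1)) * ψ (l.drop (k + 1)) := by
  induction k generalizing φ l with
  | zero =>
    obtain _ | ⟨x, _ | ⟨y, l⟩⟩ := l
    · simp at hl
    · simp at hl
    have hcup : (fun l => cup 0 φ ψ (x :: l)) = fun l => φ [x] * ψ (x :: l) := rfl
    rw [List.drop_zero, boundary_single_cons, map_sub, eval_single, one_mul, eval_cone,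
      sub_eq_zero] at hψ
    rw [boundary_single_cons, map_sub, eval_single, eval_cone, hcup, eval_const_mul, ← hψ]
    simp [cup, boundary_single_cons]
    ring
  | succ k ih =>
    obtain _ | ⟨x, l⟩ := l
    · simp at hl
    have hlen : k + 2 ≤ l.length := Nat.le_of_succ_le_succ hl
    have hcup : (fun l => cup (k + 1) φ ψ (x :: l)) = cup k (fun l => φ (x :: l)) ψ := rfl
    rw [boundary_single_cons, map_sub, eval_single, eval_cone, hcup, ih _ hlen hψ,
      List.take_succ_cons, List.drop_succ_cons, boundary_single_cons, map_sub, eval_single,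
      eval_cone, sub_mul]
    simp [cup]

theorem eval_boundary_pair (φ : List Y → R) (x y : Y) :
    eval φ (boundary (single [x, y] 1)) = φ [y] - φ [x] := by
  simp [boundary_single_cons]

theorem eval_boundary_triple (φ : List Y → R) (x y z : Y) :
    eval φ (boundary (single [x, y, z] 1)) = φ [y, z] - φ [x, z] + φ [x, y] := by
  simp [boundary_single_cons]; ring

theorem eval_boundary_quadruple (φ : List Y → R) (w x y z : Y) :
    eval φ (boundary (single [w, x, y, z] 1)) =
      φ [x, y, z] - φ [w, y, z] + φ [w, x, z] - φ [w, x, y] := by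
  simp [boundary_single_cons]; ring

theorem eval_cyclicNorm_single (f : Y → Y) (p : ℕ) (φ : List Y → R)
    (l : List Y) :
    eval φ (cyclicNorm (map R f) p (single l 1)) = ∑ m ∈ Finset.range p, φ (l.map f^[m]) := by
  simp [cyclicNorm, LinearMap.sum_apply, map_pow_apply]

theorem eval_comp_map_boundary_single {Z : Type*} (φ : List Z → R) (c : Y → Z)
    (l : List Y) :
    eval (fun l => φ (l.map c)) (boundary (single l 1)) =
      eval φ (boundary (single (l.map c) 1)) := by
  rw [← eval_map, map_boundary, map_single]

end Cup

/-- Labels of the points of a free `ℤ/p`-space covered by three invariant sets, each of which maps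
equivariantly to `ℤ/p`: the number of a set together with the value of that map. -/
abbrev CyclicLabel (p : ℕ) : Type := Fin 3 × ZMod p

namespace CyclicLabel

variable {p : ℕ}

/-- The generator of `ℤ/p` acting on labels. -/
def shift (c : CyclicLabel p) : CyclicLabel p := (c.1, c.2 + 1)

theorem iterate_shift (m : ℕ) (c : CyclicLabel p) : shift^[m] c = (c.1, c.2 + m) := by
  induction m with
  | zero => simp
  | succ m ih => simp [Function.iterate_succ_apply', ih, shift, add_assoc]

/-- A list of labels is compatible if it takes at most one value on each of the three sets: this
holds for the labels of the vertices of a small simplex. -/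
def Compatible (L : List (CyclicLabel p)) : Prop := ∀ c ∈ L, ∀ d ∈ L, c.1 = d.1 → c = d

theorem Compatible.map_shift {L : List (CyclicLabel p)} (hL : Compatible L) :
    Compatible (L.map shift) := by
  simp only [Compatible, List.forall_mem_map]
  exact fun c hc d hd h => congrArg shift (hL c hc d hd h)

theorem Compatible.subset {L L' : List (CyclicLabel p)} (hL : Compatible L) (h : L' ⊆ L) :
    Compatible L' :=
  fun c hc d hd => hL c (h hc) d (h hd)

theorem map_map_iterate_eq {Y : Type*} {f : Y → Y} {c : Y → CyclicLabel p}
    (hc : ∀ x, c (f x) = shift (c x)) (m : ℕ) (l : List Y) :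
    (l.map f^[m]).map c = (l.map c).map shift^[m] := by
  rw [List.map_map, List.map_map, (Function.Semiconj.iterate_right hc m).comp_eq]

/-- A cochain of degree `0` on labels with sum `1` over each orbit. Its coboundary is the difference
between a translate of `edgeCochain` and `edgeCochain` itself. -/
def vertexCochain : List (CyclicLabel p) → ZMod p
  | [c] => if c.2 = -1 then 1 else 0
  | _ => 0

/-- The indicator of the pairs of labels which increase in both entries, the residues modulo `p`
being compared by their representatives in `[0, p)`. -/
def ascent (c d : CyclicLabel p) : ZMod p := if c.1 < d.1 ∧ c.2.val < d.2.val then 1 else 0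

/-- An alternating cochain of degree `1` on labels, whose coboundary is shift-invariant. -/
def edgeCochain : List (CyclicLabel p) → ZMod p
  | [c, d] => ascent d c - ascent c d
  | _ => 0

/-- An alternating cocycle of degree `2` on labels, whose sum over the group is the coboundary of
`edgeCochain`. -/
def triangleCochain (L : List (CyclicLabel p)) : ZMod p :=
  if (0, 0) ∈ L then eval edgeCochain (boundary (single L 1)) else 0

theorem edgeCochain_swap (c d : CyclicLabel p) : edgeCochain [d, c] = -edgeCochain [c, d] := by
  simp [edgeCochain]

theorem edgeCochain_self (c : CyclicLabel p) : edgeCochain [c, c] = 0 := by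
  simp [edgeCochain]

theorem eval_edgeCochain_boundary_eq_zero {c d e : CyclicLabel p} (h : c = d ∨ c = e ∨ d = e) :
    eval edgeCochain (boundary (single [c, d, e] 1)) = 0 := by
  rw [eval_boundary_triple]
  rcases h with rfl | rfl | rfl
  · simp [edgeCochain_self]
  · simp [edgeCochain_self, edgeCochain_swap c d]
  · simp [edgeCochain_self]

theorem triangleCochain_eq_zero {c d e : CyclicLabel p} (h : c = d ∨ c = e ∨ d = e) :
    triangleCochain [c, d, e] = 0 := by
  rw [triangleCochain, eval_edgeCochain_boundary_eq_zero h, ite_self]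

theorem triangleCochain_swap_left (c d e : CyclicLabel p) :
    triangleCochain [d, c, e] = -triangleCochain [c, d, e] := by
  have hmem : ((0, 0) : CyclicLabel p) ∈ [d, c, e] ↔ (0, 0) ∈ [c, d, e] :=
    (List.Perm.swap c d [e]).mem_iff
  simp only [triangleCochain, hmem, eval_boundary_triple, edgeCochain_swap c d]
  split_ifs <;> ring

theorem triangleCochain_swap_right (c d e : CyclicLabel p) :
    triangleCochain [c, e, d] = -triangleCochain [c, d, e] := by
  have hmem : ((0, 0) : CyclicLabel p) ∈ [c, e, d] ↔ (0, 0) ∈ [c, d, e] :=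
    ((List.Perm.swap d e []).cons c).mem_iff
  simp only [triangleCochain, hmem, eval_boundary_triple, edgeCochain_swap d e]
  split_ifs <;> ring

theorem eval_triangleCochain_boundary {b c d e : CyclicLabel p} (h : Compatible [b, c, d, e]) :
    eval triangleCochain (boundary (single [b, c, d, e] 1)) = 0 := by
  have hindex : ∀ i j k l : Fin 3, i = j ∨ i = k ∨ i = l ∨ j = k ∨ j = l ∨ k = l := by decide
  rw [eval_boundary_quadruple]
  rcases hindex b.1 c.1 d.1 e.1 with h' | h' | h' | h' | h' | h'
  · obtain rfl := h b (by simp) c (by simp) h'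
    simp [triangleCochain_eq_zero]
  · obtain rfl := h b (by simp) d (by simp) h'
    simp [triangleCochain_eq_zero, triangleCochain_swap_left b c]
  · obtain rfl := h b (by simp) e (by simp) h'
    simp [triangleCochain_eq_zero, triangleCochain_swap_right c b d, triangleCochain_swap_left b c]
  · obtain rfl := h c (by simp) d (by simp) h'
    simp [triangleCochain_eq_zero]
  · obtain rfl := h c (by simp) e (by simp) h'
    simp [triangleCochain_eq_zero, triangleCochain_swap_right b c d]
  · obtain rfl := h d (by simp) e (by simp) h'
    simp [triangleCochain_eq_zero]

theorem Compatible.map_iterate_shift {L : List (CyclicLabel p)} (hL : Compatible L) (m : ℕ) :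
    Compatible (L.map shift^[m]) := by
  induction m with
  | zero => simpa using hL
  | succ m ih => simpa only [Function.iterate_succ', List.map_map] using ih.map_shift

theorem Compatible.zero_mem_map_iterate_shift_iff {L : List (CyclicLabel p)} {c : CyclicLabel p}
    (hL : Compatible L) (hc : c ∈ L) (h0 : c.1 = 0) (m : ℕ) :
    (0, 0) ∈ L.map shift^[m] ↔ c.2 + (m : ZMod p) = 0 := by
  simp only [List.mem_map, iterate_shift, Prod.mk.injEq]
  refine ⟨fun ⟨d, hd, hd0, hdm⟩ => ?_, fun h => ⟨c, hc, h0, h⟩⟩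
  rwa [hL c hc d hd (h0.trans hd0.symm)]

variable [NeZero p]

theorem sum_ite_add_natCast_eq (a b : ZMod p) (r : ZMod p) :
    ∑ m ∈ Finset.range p, (if a + (m : ZMod p) = b then r else 0) = r := by
  have hiff (m : ℕ) (hm : m ∈ Finset.range p) : a + (m : ZMod p) = b ↔ (b - a).val = m := by
    rw [← eq_sub_iff_add_eq', ← (ZMod.val_injective p).eq_iff,
      ZMod.val_natCast_of_lt (Finset.mem_range.1 hm), eq_comm]
  rw [Finset.sum_congr rfl fun m hm => if_congr (hiff m hm) rfl rfl, Finset.sum_ite_eq,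
    if_pos (Finset.mem_range.2 (ZMod.val_lt _))]

theorem sum_vertexCochain (c : CyclicLabel p) :
    ∑ m ∈ Finset.range p, vertexCochain [shift^[m] c] = 1 := by
  simpa only [iterate_shift, vertexCochain] using sum_ite_add_natCast_eq c.2 (-1) 1

theorem val_add_one (a : ZMod p) : (a + 1).val = if a = -1 then 0 else a.val + 1 := by
  split_ifs with ha
  · simp [ha]
  · have hne : a.val + 1 ≠ p := fun h => ha (eq_neg_of_add_eq_zero_left (by
      have := congrArg (Nat.cast : ℕ → ZMod p) h
      simpa using this))
    have hlt : a.val + 1 < p := lt_of_le_of_ne (ZMod.val_lt a) hne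
    have hcast : a + 1 = ((a.val + 1 : ℕ) : ZMod p) := by simp
    rw [hcast, ZMod.val_natCast_of_lt hlt]

theorem val_lt_val_neg_one {a : ZMod p} (ha : a ≠ -1) : a.val < (-1 : ZMod p).val := by
  obtain ⟨n, rfl⟩ := Nat.exists_eq_succ_of_ne_zero (NeZero.ne p)
  have hlt := (a + 1).val_lt
  rw [val_add_one, if_neg ha] at hlt
  rw [ZMod.val_neg_one]
  omega

theorem ascent_shift_sub_ascent {c d : CyclicLabel p} (h : c.1 < d.1) :
    ascent (shift c) (shift d) - ascent c d = vertexCochain [c] - vertexCochain [d] := by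
  simp only [ascent, shift, vertexCochain, h, true_and, val_add_one]
  by_cases hc : c.2 = -1 <;> by_cases hd : d.2 = -1
  · simp [hc, hd]
  · simp [hc, hd, (val_lt_val_neg_one hd).le]
  · simp [hc, hd, val_lt_val_neg_one hc]
  · simp [hc, hd]

theorem eval_vertexCochain_boundary {c d : CyclicLabel p} (h : Compatible [c, d]) :
    eval vertexCochain (boundary (single [c, d] 1)) =
      edgeCochain [shift c, shift d] - edgeCochain [c, d] := by
  have hzero {c d : CyclicLabel p} (h : c.1 < d.1) : ascent d c = 0 :=
    if_neg fun h' => h.not_gt h'.1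
  have hshift {c d : CyclicLabel p} (h : c.1 < d.1) : ascent (shift d) (shift c) = 0 := hzero h
  rw [eval_boundary_pair, edgeCochain, edgeCochain]
  rcases lt_trichotomy c.1 d.1 with hlt | heq | hlt
  · rw [hzero hlt, hshift hlt]
    linear_combination ascent_shift_sub_ascent hlt
  · obtain rfl := h c (by simp) d (by simp) heq
    simp
  · rw [hzero hlt, hshift hlt]
    linear_combination -ascent_shift_sub_ascent hlt

theorem eval_edgeCochain_boundary_shift {c d e : CyclicLabel p} (h : Compatible [c, d, e]) :
    eval edgeCochain (boundary (single [shift c, shift d, shift e] 1)) =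
      eval edgeCochain (boundary (single [c, d, e] 1)) := by
  have hcd := eval_vertexCochain_boundary (h.subset (L' := [c, d]) (by simp))
  have hce := eval_vertexCochain_boundary (h.subset (L' := [c, e]) (by simp))
  have hde := eval_vertexCochain_boundary (h.subset (L' := [d, e]) (by simp))
  rw [eval_boundary_pair] at hcd hce hde
  rw [eval_boundary_triple, eval_boundary_triple]
  linear_combination hce - hcd - hde

theorem eval_edgeCochain_boundary_iterate_shift {c d e : CyclicLabel p}
    (h : Compatible [c, d, e]) (m : ℕ) :
    eval edgeCochain (boundary (single ([c, d, e].map shift^[m]) 1)) =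
      eval edgeCochain (boundary (single [c, d, e] 1)) := by
  induction m with
  | zero => simp
  | succ m ih =>
    rw [← ih, Function.iterate_succ']
    exact eval_edgeCochain_boundary_shift (h.map_iterate_shift m)

theorem sum_triangleCochain {c d e : CyclicLabel p} (h : Compatible [c, d, e]) :
    ∑ m ∈ Finset.range p, triangleCochain ([c, d, e].map shift^[m]) =
      eval edgeCochain (boundary (single [c, d, e] 1)) := by
  have hindex : ∀ i j k : Fin 3, (i = j ∨ i = k ∨ j = k) ∨ i = 0 ∨ j = 0 ∨ k = 0 := by decide
  simp only [triangleCochain, eval_edgeCochain_boundary_iterate_shift h]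
  rcases hindex c.1 d.1 e.1 with hrep | hzero
  · rw [eval_edgeCochain_boundary_eq_zero]
    · simp
    · exact hrep.imp (h c (by simp) d (by simp))
        (Or.imp (h c (by simp) e (by simp)) (h d (by simp) e (by simp)))
  · obtain ⟨f, hf, hf0⟩ : ∃ f ∈ [c, d, e], f.1 = 0 := by simpa using hzero
    simp only [h.zero_mem_map_iterate_shift_iff hf hf0]
    exact sum_ite_add_natCast_eq f.2 0 _

end CyclicLabel

section Pairing

variable {p : ℕ} {Y : Type*} {f : Y → Y} {l : List Y}

open CyclicLabel

variable [PseudoMetricSpace Y] {ε : ℝ} {n : ℕ} {N : Set Y}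

/-- The vertices of the simplex `l` lie at mutual distance less than `ε`. -/
def IsSmall (ε : ℝ) (l : List Y) : Prop := ∀ x ∈ l, ∀ y ∈ l, dist x y < ε

theorem IsSmall.subset {l' : List Y} (h : IsSmall ε l) (hl : l' ⊆ l) : IsSmall ε l' :=
  fun x hx y hy => h x (hl hx) y (hl hy)

theorem IsSmall.map (h : IsSmall ε l) (hf : Isometry f) : IsSmall ε (l.map f) := by
  simp only [IsSmall, List.forall_mem_map, hf.dist_eq]
  exact h

/-- An equivariant labelling, by the elements of `CyclicLabel p`, of a space on which `f` generates
a free action of `ℤ/p`; outside of `N` it depends locally only on the number of the set. -/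
structure IsCyclicLabelling (f : Y → Y) (N : Set Y) (ε : ℝ) (c : Y → CyclicLabel p) : Prop where
  map_eq : ∀ x, c (f x) = shift (c x)
  eq_of_dist_lt : ∀ x ∉ N, ∀ y ∉ N, dist x y < ε → (c x).1 = (c y).1 → c x = c y

/-- An `f`-invariant cocycle on the simplices of size `ε`, vanishing on those which are `ε`-close
to `N`. -/
structure IsInvariantCocycle {R : Type*} [CommRing R] (f : Y → Y) (N : Set Y) (ε : ℝ)
    (β : List Y → R) : Prop where
  eval_boundary : ∀ l, IsSmall ε l → eval β (boundary (single l 1)) = 0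
  map_eq : ∀ l, IsSmall ε l → β (l.map f) = β l
  eq_zero : ∀ x ∈ N, ∀ l, (∀ y ∈ l, dist x y < ε) → IsSmall ε l → β l = 0

variable {c : Y → CyclicLabel p} {β : List Y → ZMod p} {a : OrderedChain (ZMod p) Y}

theorem IsInvariantCocycle.map_iterate_eq {R : Type*} [CommRing R] {β : List Y → R}
    (hβ : IsInvariantCocycle f N ε β) (hf : Isometry f) (hl : IsSmall ε l) (m : ℕ) :
    β (l.map f^[m]) = β l := by
  induction m with
  | zero => simp
  | succ m ih =>
    rw [Function.iterate_succ', ← List.map_map, hβ.map_eq _ (hl.map (isometry_iterate hf m)), ih]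

theorem IsCyclicLabelling.drop_eq_zero_or_compatible (hc : IsCyclicLabelling f N ε c)
    (hβ : IsInvariantCocycle f N ε β) (hl : IsSmall ε l) (k : ℕ) :
    β (l.drop k) = 0 ∨ Compatible ((l.take (k + 1)).map c) := by
  by_cases hN : ∃ x ∈ l, x ∈ N
  · obtain ⟨x, hx, hxN⟩ := hN
    exact Or.inl (hβ.eq_zero x hxN _ (fun y hy => hl x hx y (List.mem_of_mem_drop hy))
      (hl.subset (List.drop_subset k l)))
  · push Not at hN
    refine Or.inr ?_
    simp only [Compatible, List.forall_mem_map]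
    intro x hx y hy
    have hx' := List.mem_of_mem_take hx
    have hy' := List.mem_of_mem_take hy
    exact hc.eq_of_dist_lt x (hN x hx') y (hN y hy') (hl x hx' y hy')

theorem eqOn_ripsChains_univ {R M : Type*} [CommRing R] [AddCommGroup M] [Module R M]
    {a : OrderedChain R Y} (A B : OrderedChain R Y →ₗ[R] M)
    (h : ∀ l : List Y, l.length = n → IsSmall ε l → A (single l 1) = B (single l 1))
    (ha : a ∈ ripsChains R ε univ n) : A a = B a :=
  eqOn_cliqueChains A B (fun l hl hr => h l hl fun x hx y hy => (hr x hx y hy).2.2) ha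

/-- The cup product with `β` of the cochain `φ` on the labels. -/
def labelCup (c : Y → CyclicLabel p) (β : List Y → ZMod p) (k : ℕ)
    (φ : List (CyclicLabel p) → ZMod p) : OrderedChain (ZMod p) Y →ₗ[ZMod p] ZMod p :=
  eval (cup k (fun l => φ (l.map c)) β)

theorem IsCyclicLabelling.labelCup_single_map_iterate (hc : IsCyclicLabelling f N ε c)
    (hβ : IsInvariantCocycle f N ε β) (hf : Isometry f) (hl : IsSmall ε l) (k m : ℕ)
    (φ : List (CyclicLabel p) → ZMod p) :
    labelCup c β k φ (single (l.map f^[m]) 1) =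
      φ (((l.take (k + 1)).map c).map shift^[m]) * β (l.drop k) := by
  rw [labelCup, eval_single, one_mul, cup, ← List.map_take, ← List.map_drop,
    hβ.map_iterate_eq hf (hl.subset (List.drop_subset k l)), map_map_iterate_eq hc.map_eq]

theorem IsCyclicLabelling.labelCup_map_sub_one_single (hc : IsCyclicLabelling f N ε c)
    (hβ : IsInvariantCocycle f N ε β) (hf : Isometry f) (hl : IsSmall ε l) (k : ℕ)
    (φ : List (CyclicLabel p) → ZMod p) :
    labelCup c β k φ ((map (ZMod p) f - 1) (single l 1)) =
      (φ (((l.take (k + 1)).map c).map shift) - φ ((l.take (k + 1)).map c)) * β (l.drop k) := by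
  have h₀ := hc.labelCup_single_map_iterate hβ hf hl k 0 φ
  have h₁ := hc.labelCup_single_map_iterate hβ hf hl k 1 φ
  simp only [Function.iterate_zero, Function.iterate_one, List.map_id] at h₀ h₁
  rw [LinearMap.sub_apply, map_single, Module.End.one_apply, map_sub, h₀, h₁, sub_mul]

theorem IsCyclicLabelling.labelCup_cyclicNorm_single (hc : IsCyclicLabelling f N ε c)
    (hβ : IsInvariantCocycle f N ε β) (hf : Isometry f) (hl : IsSmall ε l) (k : ℕ)
    (φ : List (CyclicLabel p) → ZMod p) :
    labelCup c β k φ (cyclicNorm (map (ZMod p) f) p (single l 1)) =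
      (∑ m ∈ Finset.range p, φ (((l.take (k + 1)).map c).map shift^[m])) * β (l.drop k) := by
  have h (m : ℕ) := hc.labelCup_single_map_iterate hβ hf hl k m φ
  simp only [labelCup, eval_single, one_mul] at h
  rw [labelCup, eval_cyclicNorm_single, Finset.sum_mul]
  exact Finset.sum_congr rfl fun m _ => h m

theorem IsInvariantCocycle.labelCup_boundary_single (hβ : IsInvariantCocycle f N ε β)
    (hl : IsSmall ε l) {k : ℕ} (hk : k + 2 ≤ l.length) (c : Y → CyclicLabel p)
    (φ : List (CyclicLabel p) → ZMod p) :
    labelCup c β k φ (boundary (single l 1)) =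
      eval φ (boundary (single ((l.take (k + 2)).map c) 1)) * β (l.drop (k + 1)) := by
  rw [labelCup, eval_cup_boundary_single _ hk
    (hβ.eval_boundary _ (hl.subset (List.drop_subset k l))), eval_comp_map_boundary_single]

theorem IsCyclicLabelling.labelCup_triangleCochain_boundary (hc : IsCyclicLabelling f N ε c)
    (hβ : IsInvariantCocycle f N ε β) (hn : 4 ≤ n) (ha : a ∈ ripsChains (ZMod p) ε univ n) :
    labelCup c β 2 triangleCochain (boundary a) = 0 := by
  refine eqOn_ripsChains_univ (labelCup c β 2 triangleCochain ∘ₗ boundary) 0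
    (fun l hl hs => ?_) ha
  rw [LinearMap.comp_apply, hβ.labelCup_boundary_single hs (by omega), LinearMap.zero_apply]
  rcases hc.drop_eq_zero_or_compatible hβ hs 3 with h0 | h
  · rw [h0, mul_zero]
  · obtain ⟨w, x, y, z, hwxyz⟩ : ∃ w x y z, l.take 4 = [w, x, y, z] := by
      obtain _ | ⟨w, _ | ⟨x, _ | ⟨y, _ | ⟨z, l⟩⟩⟩⟩ := l
      iterate 4 · simp at hl; omega
      exact ⟨w, x, y, z, by simp⟩
    rw [hwxyz] at h ⊢
    exact mul_eq_zero_of_left (eval_triangleCochain_boundary h) _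

variable [NeZero p]

theorem IsCyclicLabelling.eval_eq_labelCup_vertexCochain (hc : IsCyclicLabelling f N ε c)
    (hβ : IsInvariantCocycle f N ε β) (hf : Isometry f) (hn : 1 ≤ n)
    (ha : a ∈ ripsChains (ZMod p) ε univ n) :
    eval β a = labelCup c β 0 vertexCochain (cyclicNorm (map (ZMod p) f) p a) := by
  refine eqOn_ripsChains_univ (eval β) (labelCup c β 0 vertexCochain ∘ₗ
    cyclicNorm (A := Module.End (ZMod p) _) (map (ZMod p) f) p) (fun l hl hs => ?_) ha
  obtain ⟨x, hx⟩ := List.length_eq_one_iff.1 (show (l.take 1).length = 1 by grind)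
  rw [LinearMap.comp_apply]
  refine Eq.trans ?_ (hc.labelCup_cyclicNorm_single hβ hf hs 0 _).symm
  rw [hx]
  simp [sum_vertexCochain]

theorem IsCyclicLabelling.labelCup_vertexCochain_boundary (hc : IsCyclicLabelling f N ε c)
    (hβ : IsInvariantCocycle f N ε β) (hf : Isometry f) (hn : 2 ≤ n)
    (ha : a ∈ ripsChains (ZMod p) ε univ n) :
    labelCup c β 0 vertexCochain (boundary a) =
      labelCup c β 1 edgeCochain ((map (ZMod p) f - 1) a) := by
  refine eqOn_ripsChains_univ (labelCup c β 0 vertexCochain ∘ₗ boundary)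
    (labelCup c β 1 edgeCochain ∘ₗ (map (ZMod p) f - 1)) (fun l hl hs => ?_) ha
  rw [LinearMap.comp_apply, LinearMap.comp_apply, hβ.labelCup_boundary_single hs (by omega),
    hc.labelCup_map_sub_one_single hβ hf hs]
  rcases hc.drop_eq_zero_or_compatible hβ hs 1 with h0 | h
  · rw [h0, mul_zero, mul_zero]
  · obtain ⟨x, y, hxy⟩ := List.length_eq_two.1 (show (l.take 2).length = 2 by grind)
    rw [hxy] at h ⊢
    exact congrArg (· * _) (eval_vertexCochain_boundary h)

theorem IsCyclicLabelling.labelCup_edgeCochain_boundary (hc : IsCyclicLabelling f N ε c)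
    (hβ : IsInvariantCocycle f N ε β) (hf : Isometry f) (hn : 3 ≤ n)
    (ha : a ∈ ripsChains (ZMod p) ε univ n) :
    labelCup c β 1 edgeCochain (boundary a) =
      labelCup c β 2 triangleCochain (cyclicNorm (map (ZMod p) f) p a) := by
  refine eqOn_ripsChains_univ (labelCup c β 1 edgeCochain ∘ₗ boundary)
    (labelCup c β 2 triangleCochain ∘ₗ cyclicNorm (A := Module.End (ZMod p) _) (map (ZMod p) f) p)
    (fun l hl hs => ?_) ha
  rw [LinearMap.comp_apply, LinearMap.comp_apply, hβ.labelCup_boundary_single hs (by omega)]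
  refine Eq.trans ?_ (hc.labelCup_cyclicNorm_single hβ hf hs 2 _).symm
  rcases hc.drop_eq_zero_or_compatible hβ hs 2 with h0 | h
  · rw [h0, mul_zero, mul_zero]
  · obtain ⟨x, y, z, hxyz⟩ := List.length_eq_three.1 (show (l.take 3).length = 3 by grind)
    rw [hxyz] at h ⊢
    exact congrArg (· * _) (sum_triangleCochain h).symm

theorem IsCyclicTower.eval_eq_zero {P : Fin 4 → OrderedChain (ZMod p) Y}
    (hP : IsCyclicTower f p ε n P) (hf : Isometry f) (hc : IsCyclicLabelling f N ε c)
    (hβ : IsInvariantCocycle f N ε β) (hn : 1 ≤ n) : eval β (P 0) = 0 := by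
  have hprimitive {i : Fin 4} :
      cyclicNormPrimitive (map (ZMod p) f) p (P i) ∈ ripsChains (ZMod p) ε univ (n + i) :=
    cyclicNormPrimitive_mem_ripsChains hf (mapsTo_univ _ _) (hP.mem i)
  have hp : (p : ZMod p) = 0 := CharP.cast_eq_zero _ _
  calc eval β (P 0)
      = labelCup c β 0 vertexCochain (cyclicNorm (map _ f) p (P 0)) :=
        hc.eval_eq_labelCup_vertexCochain hβ hf hn (hP.mem 0)
    _ = labelCup c β 0 vertexCochain (boundary (cyclicNormPrimitive (map _ f) p (P 1))) := by
        rw [boundary_cyclicNormPrimitive_of_eq hp hP.boundary_one]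
    _ = labelCup c β 1 edgeCochain (cyclicNorm (map _ f) p (P 1)) := by
        rw [hc.labelCup_vertexCochain_boundary hβ hf (Nat.succ_le_succ hn) hprimitive,
          map_sub_one_cyclicNormPrimitive hp]
    _ = labelCup c β 2 triangleCochain (cyclicNorm (map _ f) p (P 2)) := by
        rw [← hP.boundary_two, hc.labelCup_edgeCochain_boundary hβ hf (by omega) (hP.mem 2)]
    _ = labelCup c β 2 triangleCochain (boundary (cyclicNormPrimitive (map _ f) p (P 3))) := by
        rw [boundary_cyclicNormPrimitive_of_eq hp hP.boundary_three]
    _ = 0 := hc.labelCup_triangleCochain_boundary hβ (by omega) hprimitive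

end Pairing

end OrderedChain

theorem exists_forall_eq_of_dist_lt_of_finite_image {Y Z : Type*} [PseudoMetricSpace Y]
    [MetricSpace Z] {A : Set Y} (hA : IsCompact A) {f : Y → Z} (hf : ContinuousOn f A)
    (hfA : (f '' A).Finite) :
    ∃ ε > 0, ∀ x ∈ A, ∀ y ∈ A, dist x y < ε → f x = f y := by
  rcases (f '' A).subsingleton_or_nontrivial with hsub | hnon
  · exact ⟨1, one_pos, fun x hx y hy _ => hsub (mem_image_of_mem f hx) (mem_image_of_mem f hy)⟩
  · have hu := hA.uniformContinuousOn_of_continuous hf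
    obtain ⟨ε, hε, h⟩ := Metric.uniformContinuousOn_iff.1 hu _
      (hfA.infsep_pos_iff_nontrivial.2 hnon)
    refine ⟨ε, hε, fun x hx y hy hxy => by_contra fun hne => ?_⟩
    exact (h x hx y hy hxy).not_ge
      (infsep_le_dist_of_mem (mem_image_of_mem f hx) (mem_image_of_mem f hy) hne)

namespace OrderedChain

section RelativeCocycle

variable {R Y Z : Type*} [CommRing R] {A : Set Y} {s : Y → Z} {B : OrderedChain R Z →ₗ[R] R}
  {H : OrderedChain R Y →ₗ[R] OrderedChain R Z}

/-- The pullback of `B` along `s`, changed by the coboundary of the cochain `B ∘ H`, which is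
extended by zero from the simplices with vertices in `A`. When `B` is a cocycle and `H` is a chain
homotopy on `A` from `s` to a map that annihilates `B`, this is a cocycle which vanishes on `A`. -/
def relativeCocycle (A : Set Y) (s : Y → Z) (B : OrderedChain R Z →ₗ[R] R)
    (H : OrderedChain R Y →ₗ[R] OrderedChain R Z) (l : List Y) : R :=
  B (map R s (single l 1)) +
    eval ({l | ∀ x ∈ l, x ∈ A}.indicator fun l => B (H (single l 1))) (boundary (single l 1))

theorem eval_relativeCocycle (a : OrderedChain R Y) :
    eval (relativeCocycle A s B H) a = B (map R s a) +
      eval ({l | ∀ x ∈ l, x ∈ A}.indicator fun l => B (H (single l 1))) (boundary a) := by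
  have heq : eval (relativeCocycle A s B H) = B ∘ₗ map R s +
      eval ({l | ∀ x ∈ l, x ∈ A}.indicator fun l => B (H (single l 1))) ∘ₗ boundary :=
    linearMap_ext fun l => by simp [relativeCocycle]
  rw [heq]
  rfl

theorem relativeCocycle_map {f : Y → Y} (hs : ∀ x, s (f x) = s x) (hA : f ⁻¹' A = A)
    (hH : ∀ a, H (map R f a) = H a) (l : List Y) :
    relativeCocycle A s B H (l.map f) = relativeCocycle A s B H l := by
  have hA' (l : List Y) : (∀ x ∈ l.map f, x ∈ A) ↔ ∀ x ∈ l, x ∈ A := by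
    simp only [List.forall_mem_map, ← mem_preimage (f := f), hA]
  have hind (l : List Y) :
      {l | ∀ x ∈ l, x ∈ A}.indicator (fun l => B (H (single l 1))) (l.map f) =
        {l | ∀ x ∈ l, x ∈ A}.indicator (fun l => B (H (single l 1))) l := by
    classical
    simp only [Set.indicator_apply, mem_ofPred_eq, hA']
    rw [← map_single, hH]
  simp only [relativeCocycle, ← map_single f, ← map_boundary, eval_map, hind, map_map,
    Function.comp_def, hs]

theorem eval_indicator {S : Set (List Y)} {a : OrderedChain R Y}
    (ha : a ∈ Finsupp.supported R R S) (φ : List Y → R) : eval (S.indicator φ) a = eval φ a := by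
  simp only [eval, linearCombination_apply]
  refine Finsupp.sum_congr fun l hl => ?_
  rw [Set.indicator_of_mem ((mem_supported R a).1 ha hl)]

theorem relativeCocycle_eq_zero {s' : Y → Z} {l : List Y} (hl : ∀ x ∈ l, x ∈ A)
    (hH : boundary (H (single l 1)) + H (boundary (single l 1)) =
      map R s' (single l 1) - map R s (single l 1))
    (hB : B (boundary (H (single l 1))) = 0) (hs' : B (map R s' (single l 1)) = 0) :
    relativeCocycle A s B H l = 0 := by
  have heval : eval (fun l => B (H (single l 1))) = B ∘ₗ H := linearMap_ext fun l => by simp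
  have hind := eval_indicator (contract_mem_supported_of_vertices (fun _ => (1 : R))
    (single_mem_supported R (1 : R) hl)) fun l => B (H (single l 1))
  have hsum := congrArg B hH
  rw [map_add, map_sub, hB, hs', zero_add, zero_sub] at hsum
  rw [relativeCocycle, boundary, hind, heval, LinearMap.comp_apply, ← boundary, hsum,
    add_neg_cancel]

theorem exists_isInvariantCocycle [PseudoMetricSpace Y] [MetricSpace Z] (hA : IsCompact A)
    {f : Y → Y} (hfA : f ⁻¹' A = A) (hs : LipschitzWith 1 s) (hsf : ∀ x, s (f x) = s x)
    {K : Y → ℝ → Z} (hK : ContinuousOn (fun z : Y × ℝ => K z.1 z.2) (A ×ˢ Icc 0 1))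
    (hKf : ∀ x t, K (f x) t = K x t) (hK₀ : ∀ x ∈ A, K x 0 = s x)
    (hK₁ : ((fun x => K x 1) '' A).Finite) {η : ℝ} (hη : 0 < η)
    (hB : ∀ l, IsSmall η l → B (boundary (single l 1)) = 0)
    (hBconst : ∀ w, ∀ l : List Z, (∀ x ∈ l, x = w) → B (single l 1) = 0) :
    ∃ ε > 0, ∃ β : List Y → R, (∀ a, boundary a = 0 → eval β a = B (map R s a)) ∧
      ∀ δ ≤ ε, ∀ N, Metric.thickening δ N ⊆ A → IsInvariantCocycle f N δ β := by
  obtain ⟨δ₁, hδ₁, H, hHmem, hHmap, hH⟩ := exists_chainHomotopy (R := R) (K' := univ) hA hK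
    (fun _ _ _ _ => mem_univ _) hη
  have hK₁cont : ContinuousOn (fun x => K x 1) A :=
    hK.comp (by fun_prop : ContinuousOn (fun x => (x, (1 : ℝ))) A) fun x hx => ⟨hx, by simp⟩
  obtain ⟨δ₂, hδ₂, hconst⟩ := exists_forall_eq_of_dist_lt_of_finite_image hA hK₁cont hK₁
  have hBbd {n : ℕ} {a : OrderedChain R Z} (ha : a ∈ ripsChains R η univ n) :
      B (boundary a) = 0 :=
    eqOn_ripsChains_univ (B ∘ₗ boundary) 0 (fun l _ hl => hB l hl) ha
  refine ⟨min η (min δ₁ δ₂), by positivity, relativeCocycle A s B H, fun a ha => ?_,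
    fun δ hδ N hN => ⟨fun l hl => ?_, fun l _ => ?_, fun x hx l hxl hl => ?_⟩⟩
  · rw [eval_relativeCocycle, ha, map_zero, add_zero]
  · rw [eval_relativeCocycle, boundary_boundary, map_zero, add_zero, map_boundary, map_single]
    refine hB _ (by
      simp only [IsSmall, List.forall_mem_map]
      exact fun x hx y hy => ((hs.dist_le_mul x y).trans (by simp)).trans_lt
        ((hl x hx y hy).trans_le (hδ.trans (min_le_left _ _))))
  · exact relativeCocycle_map hsf hfA (hHmap f hKf) l
  · have hlA (y : Y) (hy : y ∈ l) : y ∈ A :=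
      hN (Metric.mem_thickening_iff.2 ⟨x, hx, by rw [dist_comm]; exact hxl y hy⟩)
    have hmem : single l 1 ∈ ripsChains R δ₁ A l.length :=
      single_mem_ripsChains rfl hlA (fun y hy z hz => (hl y hy z hz).trans_le
        (hδ.trans ((min_le_right _ _).trans (min_le_left _ _)))) 1
    have hstart : map R (fun x => K x 0) (single l 1) = map R s (single l 1) := by
      rw [map_single, map_single, List.map_congr_left fun y hy => hK₀ y (hlA y hy)]
    have hend : B (map R (fun x => K x 1) (single l 1)) = 0 := by
      rw [map_single]
      refine hBconst (K x 1) _ (List.forall_mem_map.2 fun y hy => ?_)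
      have hxA : x ∈ A := hN (Metric.self_subset_thickening (dist_nonneg.trans_lt (hxl y hy)) N hx)
      exact (hconst x hxA y (hlA y hy) ((hxl y hy).trans_le
        (hδ.trans ((min_le_right _ _).trans (min_le_right _ _))))).symm
    exact relativeCocycle_eq_zero hlA ((hH _).trans (by rw [hstart])) (hBbd (hHmem _ _ hmem)) hend

end RelativeCocycle

end OrderedChain

/-! ### Lifted contractions and the lower bound -/

/-- `U` is contractible in the ambient space, i.e. its inclusion is nullhomotopic. -/
def IsCategoricalSet {X : Type*} [TopologicalSpace X] (U : Set X) : Prop :=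
  ContinuousMap.Nullhomotopic (⟨Subtype.val, continuous_subtype_val⟩ : C(U, X))

namespace LensSpace

open OrderedChain

section Topology

variable {p k : ℕ} {ℓ : Fin k → ℤ}

instance : CompactSpace (LensSpace p k ℓ) :=
  Quot.compactSpace

theorem t2Space [NeZero p] (hℓ : ∀ j, IsCoprime (ℓ j) (p : ℤ)) : T2Space (LensSpace p k ℓ) := by
  rw [t2Space_iff_of_isOpenQuotientMap (isOpenQuotientMap_proj hℓ)]
  simp only [proj_eq_proj_iff, ofPred_exists]
  exact isClosed_iUnion_of_finite fun m =>
    isClosed_eq ((isometry_rot m).continuous.comp continuous_fst) continuous_snd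

end Topology

section LiftedContraction

variable {X Q : Type*} [TopologicalSpace X] {p k : ℕ} [NeZero p]
  {ℓ : Fin k → ℤ} {g : X → Q} {f : X → ComplexSphere k} {U : Set Q} {z : ComplexSphere k}
  {K : X → ℝ → ComplexSphere k}

/-- A homotopy `K` on the preimage of `U` under `g`, from `f` to a map into the fibre of `proj p ℓ`
over the image of `z`, which is equivariant in so far as `f` is on the fibres of `g`. It arises by
lifting the contraction of a set `U` in `Q`. -/
structure IsLiftedContraction (p : ℕ) [NeZero p] (ℓ : Fin k → ℤ) (g : X → Q)
    (f : X → ComplexSphere k) (U : Set Q) (z : ComplexSphere k)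
    (K : X → ℝ → ComplexSphere k) : Prop where
  continuousOn : ContinuousOn (fun x : X × ℝ => K x.1 x.2) ((g ⁻¹' U) ×ˢ Icc 0 1)
  apply_zero : ∀ x ∈ g ⁻¹' U, K x 0 = f x
  proj_apply_one : ∀ x ∈ g ⁻¹' U, proj p ℓ z = proj p ℓ (K x 1)
  apply_eq_rot : ∀ x y m, g x = g y → f y = rot p ℓ m (f x) → ∀ t, K y t = rot p ℓ m (K x t)

theorem exists_lift_of_isCategoricalSet [TopologicalSpace Q]
    (hℓ : ∀ j, IsCoprime (ℓ j) (p : ℤ)) (hg : Continuous g) (hf : Continuous f)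
    (h : C(Q, LensSpace p k ℓ)) (hfg : ∀ x, h (g x) = proj p ℓ (f x)) (hU : IsCategoricalSet U) :
    ∃ (z : ComplexSphere k) (F : C(I × g ⁻¹' U, ComplexSphere k)),
      (∀ x : g ⁻¹' U, F (0, x) = f x) ∧ (∀ x, proj p ℓ z = proj p ℓ (F (1, x))) ∧
      ∀ x y : g ⁻¹' U, ∀ m, g x = g y → f y = rot p ℓ m (f x) →
        ∀ t, F (t, y) = rot p ℓ m (F (t, x)) := by
  obtain ⟨y, ⟨H⟩⟩ := hU
  obtain ⟨z, hz⟩ := surjective_proj (p := p) (ℓ := ℓ) (h y)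
  have cov := isCoveringMap_proj hℓ
  let gU : C(g ⁻¹' U, U) := ⟨fun x => ⟨g x, x.2⟩, by fun_prop⟩
  let G : C(I × g ⁻¹' U, LensSpace p k ℓ) :=
    h.comp (H.toContinuousMap.comp ((ContinuousMap.id I).prodMap gU))
  have hG₀ (x : g ⁻¹' U) : G (0, x) = proj p ℓ (f x) := by simp [G, gU, hfg]
  let F := cov.liftHomotopy G ⟨fun x => f x, by fun_prop⟩ hG₀
  have hproj (t : I) (x : g ⁻¹' U) : proj p ℓ (F (t, x)) = G (t, x) :=
    congr_fun (cov.liftHomotopy_lifts G _ hG₀) (t, x)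
  have hF₀ (x : g ⁻¹' U) : F (0, x) = f x := cov.liftHomotopy_zero G _ hG₀ x
  refine ⟨z, F, hF₀, fun x => (hz.trans (by simp [G])).trans (hproj 1 x).symm,
    fun x y m hxy hm => congr_fun ?_⟩
  have hgU : gU y = gU x := Subtype.ext hxy.symm
  have hcont := (isometry_rot (ℓ := ℓ) m).continuous
  refine cov.eq_of_comp_eq (by fun_prop) (by fun_prop) ?_ 0 ?_
  · ext t
    simp [hproj, G, hgU]
  · simp [hF₀, hm]

theorem exists_isLiftedContraction [TopologicalSpace Q] (hℓ : ∀ j, IsCoprime (ℓ j) (p : ℤ))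
    (hg : Continuous g) (hf : Continuous f) (h : C(Q, LensSpace p k ℓ))
    (hfg : ∀ x, h (g x) = proj p ℓ (f x)) (hU : IsCategoricalSet U) :
    ∃ z K, IsLiftedContraction p ℓ g f U z K := by
  classical
  obtain ⟨z, F, hF₀, hF₁, hrot⟩ := exists_lift_of_isCategoricalSet hℓ hg hf h hfg hU
  refine ⟨z, fun x t => if hx : x ∈ g ⁻¹' U then F (projIcc 0 1 zero_le_one t, ⟨x, hx⟩) else f x,
    ?_, fun x hx => ?_, fun x hx => ?_, fun x y m hxy hm t => ?_⟩
  · rw [continuousOn_iff_continuous_domRestrict]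
    have hcont : Continuous fun x : ((g ⁻¹' U) ×ˢ Icc (0 : ℝ) 1 : Set (X × ℝ)) =>
        F (projIcc 0 1 zero_le_one x.1.2, ⟨x.1.1, x.2.1⟩) := by
      have := continuous_projIcc (a := (0 : ℝ)) (b := 1) (h := zero_le_one)
      fun_prop
    refine hcont.congr fun x => ?_
    simp only [domRestrict_apply, dif_pos x.2.1]
  · simp only [dif_pos hx, projIcc_left]
    exact hF₀ ⟨x, hx⟩
  · simp only [dif_pos hx, projIcc_right]
    exact hF₁ ⟨x, hx⟩
  · by_cases hx : x ∈ g ⁻¹' U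
    · have hy : y ∈ g ⁻¹' U := by rwa [mem_preimage, ← hxy]
      simp only [dif_pos hx, dif_pos hy]
      exact hrot ⟨x, hx⟩ ⟨y, hy⟩ m hxy hm _
    · have hy : y ∉ g ⁻¹' U := by rwa [mem_preimage, ← hxy]
      simp only [dif_neg hx, dif_neg hy, hm]

theorem IsLiftedContraction.continuousOn_one (hK : IsLiftedContraction p ℓ g f U z K) :
    ContinuousOn (fun x => K x 1) (g ⁻¹' U) :=
  hK.continuousOn.comp (by fun_prop : ContinuousOn (fun x => (x, (1 : ℝ))) _)
    fun x hx => ⟨hx, by simp⟩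

theorem IsLiftedContraction.finite_image_one (hK : IsLiftedContraction p ℓ g f U z K) :
    ((fun x => K x 1) '' (g ⁻¹' U)).Finite := by
  refine (finite_range fun m => rot p ℓ m z).subset (image_subset_iff.2 fun x hx => ?_)
  exact proj_eq_proj_iff.1 (hK.proj_apply_one x hx)

end LiftedContraction

theorem rot_injective {p k : ℕ} [NeZero p] {ℓ : Fin k → ℤ} (hℓ : ∀ j, IsCoprime (ℓ j) (p : ℤ))
    (x : ComplexSphere k) : Function.Injective fun m => rot p ℓ m x := by
  intro m n hmn
  have hfix : rot p ℓ (m - n) (rot p ℓ n x) = rot p ℓ n x := by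
    rw [← rot_add, sub_add_cancel]
    exact hmn
  exact sub_eq_zero.1 (eq_zero_of_rot_eq_self hℓ hfix)

theorem IsLiftedContraction.exists_label {X Q : Type*} [PseudoMetricSpace X]
    {p k : ℕ} [NeZero p] {ℓ : Fin k → ℤ} {g : X → Q} {f : X → ComplexSphere k} {U : Set Q}
    {z : ComplexSphere k} {K : X → ℝ → ComplexSphere k}
    (hK : IsLiftedContraction p ℓ g f U z K) (hℓ : ∀ j, IsCoprime (ℓ j) (p : ℤ)) {A : Set X}
    (hA : IsCompact A) (hAU : A ⊆ g ⁻¹' U) :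
    ∃ lab : X → ZMod p, (∀ x ∈ g ⁻¹' U, ∀ y m, g x = g y → f y = rot p ℓ m (f x) →
      lab y = lab x + m) ∧ ∃ ε > 0, ∀ x ∈ A, ∀ y ∈ A, dist x y < ε → lab x = lab y := by
  have hlab (x : X) : ∃ m, x ∈ g ⁻¹' U → rot p ℓ m z = K x 1 := by
    by_cases hx : x ∈ g ⁻¹' U
    · obtain ⟨m, hm⟩ := proj_eq_proj_iff.1 (hK.proj_apply_one x hx)
      exact ⟨m, fun _ => hm⟩
    · exact ⟨0, fun h => absurd h hx⟩
  choose lab hlab using hlab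
  refine ⟨lab, fun x hx y m hxy hm => rot_injective hℓ z ?_, ?_⟩
  · have hy : y ∈ g ⁻¹' U := by rwa [mem_preimage, ← hxy]
    beta_reduce
    rw [hlab y hy, hK.apply_eq_rot x y m hxy hm, ← hlab x hx, ← rot_add, add_comm]
  · obtain ⟨ε, hε, h⟩ := exists_forall_eq_of_dist_lt_of_finite_image hA
      (hK.continuousOn_one.mono hAU) (hK.finite_image_one.subset (image_mono hAU))
    refine ⟨ε, hε, fun x hx y hy hxy => rot_injective hℓ z ?_⟩
    exact (hlab x (hAU hx)).trans ((h x hx y hy hxy).trans (hlab y (hAU hy)).symm)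

open OrderedChain

section LowerBound

variable {Q : Type*} [TopologicalSpace Q] {p q k : ℕ} [NeZero p] [NeZero q] {ℓ : Fin k → ℤ}
  {ℓ' : Fin 2 → ℤ}

theorem exists_isCyclicLabelling {M : Type*} [MetricSpace M] [CompactSpace M]
    (hℓ : ∀ j, IsCoprime (ℓ j) (p : ℤ)) {g : ComplexSphere k × M → Q} (hg : Continuous g)
    (hgf : ∀ x, g (rotFst p ℓ M 1 x) = g x) (h : C(Q, LensSpace p k ℓ))
    (hfg : ∀ x, h (g x) = proj p ℓ x.1) {U W : Fin 4 → Set Q} (hU : ∀ i, IsCategoricalSet (U i))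
    (hW : ∀ i, IsClosed (W i)) (hWU : ∀ i, W i ⊆ U i) (hWuniv : ⋃ i, W i = univ) :
    ∃ ε > 0, ∃ c, ∀ δ ≤ ε, IsCyclicLabelling (p := p) (rotFst p ℓ M 1) (g ⁻¹' W 3) δ c := by
  choose z K hK using fun i => exists_isLiftedContraction hℓ hg continuous_fst h hfg (hU i)
  choose lab hlab ε hε hconst using fun i =>
    (hK i).exists_label hℓ ((hW i).preimage hg).isCompact (preimage_mono (hWU i))
  have hindex (y : Q) : ∃ (i : Fin 4) (j : Fin 3), y ∈ W i ∧ (i = j.castSucc ∨ y ∈ W 3) := by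
    obtain ⟨i, hi⟩ := mem_iUnion.1 (hWuniv ▸ mem_univ y)
    cases i using Fin.lastCases with
    | last => exact ⟨3, 0, hi, Or.inr hi⟩
    | cast j => exact ⟨j.castSucc, j, hi, Or.inl rfl⟩
  choose i j hi hij using hindex
  refine ⟨⨅ i, ε i, ?_, fun x => (j (g x), lab (i (g x)) x),
    fun δ hδ => ⟨fun x => ?_, fun x hx y hy hxy hj => ?_⟩⟩
  · exact ((finite_range ε).lt_csInf_iff (range_nonempty ε)).2 (forall_mem_range.2 hε)
  · rw [CyclicLabel.shift, hgf, hlab _ x (hWU _ (hi (g x))) _ 1 (hgf x).symm rfl]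
  · have hx' := (hij (g x)).resolve_right hx
    have hy' := (hij (g y)).resolve_right hy
    have hixy : i (g x) = i (g y) := by rw [hx', hy', show j (g x) = j (g y) from hj]
    refine Prod.ext hj (?_ : lab (i (g x)) x = lab (i (g y)) y)
    rw [← hixy]
    refine hconst _ x (hi (g x)) y (by rw [hixy]; exact hi (g y)) (hxy.trans_le (hδ.trans ?_))
    exact ciInf_le (finite_range ε).bddBelow _

theorem exists_isInvariantCocycle_rotFst {R : Type*} [CommRing R]
    (b : OrthonormalBasis (Fin 4) ℝ (EuclideanSpace ℂ (Fin 2)))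
    (hℓ' : ∀ j, IsCoprime (ℓ' j) (q : ℤ)) {g : ComplexSphere k × ComplexSphere 2 → Q}
    (hg : Continuous g) (hgf : ∀ x, g (rotFst p ℓ (ComplexSphere 2) 1 x) = g x)
    (h : C(Q, LensSpace q 2 ℓ')) (hfg : ∀ x, h (g x) = proj q ℓ' x.2) {U V : Set Q}
    (hU : IsCategoricalSet U) (hV : IsClosed V) (hVU : V ⊆ U) :
    ∃ ε > 0, ∃ β : List (ComplexSphere k × ComplexSphere 2) → R,
      (∀ a, boundary a = 0 →
        eval β a = iterContract (UnitSphere.posLabel b R) 4 (map R Prod.snd a) []) ∧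
      ∀ δ ≤ ε, ∀ N, Metric.thickening δ N ⊆ g ⁻¹' V →
        IsInvariantCocycle (rotFst p ℓ (ComplexSphere 2) 1) N δ β := by
  obtain ⟨z, K, hK⟩ := exists_isLiftedContraction hℓ' hg continuous_snd h hfg hU
  have hVU' : g ⁻¹' V ⊆ g ⁻¹' U := preimage_mono hVU
  refine exists_isInvariantCocycle
    (B := lapply (M := R) (R := R) [] ∘ₗ iterContract (UnitSphere.posLabel b R) 4)
    (hV.preimage hg).isCompact (by ext x; simp [hgf]) LipschitzWith.prod_snd
    (fun _ => rfl) (hK.continuousOn.mono (prod_mono_left hVU')) (fun x t => ?_)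
    (fun x hx => hK.apply_zero x (hVU' hx)) (hK.finite_image_one.subset (image_mono hVU'))
    one_pos (fun l hl => ?_) fun w l hl => ?_
  · simpa using hK.apply_eq_rot x _ 0 (hgf x).symm (by simp) t
  · rw [LinearMap.comp_apply, UnitSphere.iterContract_posLabel_boundary_single, map_zero]
    exact fun x hx y hy => (hl x hx y hy).trans_eq (by norm_num)
  · rw [LinearMap.comp_apply, iterContract_single_eq_zero_of_forall_eq hl (by norm_num), map_zero]

/-- A real orthonormal basis of `ℂ²`. -/
def realBasis : OrthonormalBasis (Fin 4) ℝ (EuclideanSpace ℂ (Fin 2)) :=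
  (stdOrthonormalBasis ℝ _).reindex <| finCongr <| by
    rw [← Module.finrank_mul_finrank ℝ ℂ, Complex.finrank_real_complex, finrank_euclideanSpace_fin]

theorem exists_isCyclicTower_iterContract_eq_one {R : Type*} [CommRing R] (hR : (p : R) = 0)
    (ℓ : Fin 2 → ℤ) {ε : ℝ} (hε : 0 < ε) :
    ∃ P : Fin 4 → OrderedChain R (ComplexSphere 2 × ComplexSphere 2),
      IsCyclicTower (rotFst p ℓ (ComplexSphere 2) 1) p ε 4 P ∧
        iterContract (UnitSphere.posLabel realBasis R) 4 (map R Prod.snd (P 0)) [] = 1 := by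
  obtain ⟨δ, hδ, htower⟩ := exists_isCyclicTower R (ComplexSphere 2) p ℓ hR hε
  obtain ⟨T, hT, -⟩ := UnitSphere.exists_isSphereCycle_succ (R := R) realBasis (k := 3)
    (by norm_num) hδ
  obtain ⟨P, hP, hP₀⟩ := htower 4 T (ripsChains_mono le_rfl (subset_univ _) hT.mem)
    hT.boundary_eq_zero
  refine ⟨P, hP, ?_⟩
  rw [hP₀, map_map, show Prod.snd ∘ (axisPoint 0 1, ·) = fun x => x from rfl, map_id]
  exact hT.iterContract_eq_one

theorem exists_not_isCategoricalSet [Nontrivial (ZMod p)] {ℓ : Fin 2 → ℤ}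
    (hℓ : ∀ j, IsCoprime (ℓ j) (p : ℤ)) (hℓ' : ∀ j, IsCoprime (ℓ' j) (q : ℤ))
    {U : Fin 4 → Set (LensSpace p 2 ℓ × LensSpace q 2 ℓ')} (hU : ∀ i, IsOpen (U i))
    (hUuniv : ⋃ i, U i = univ) : ∃ i, ¬ IsCategoricalSet (U i) := by
  by_contra! hcat
  have := t2Space hℓ
  have := t2Space hℓ'
  obtain ⟨V, hVuniv, hV, hVU⟩ := exists_iUnion_eq_closure_subset hU (fun _ => toFinite _) hUuniv
  obtain ⟨W, hWuniv, -, hWV⟩ := exists_iUnion_eq_closure_subset hV (fun _ => toFinite _) hVuniv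
  have hg : Continuous (Prod.map (proj p ℓ) (proj q ℓ')) :=
    (isOpenQuotientMap_proj hℓ).continuous.prodMap (isOpenQuotientMap_proj hℓ').continuous
  have hgf (x : ComplexSphere 2 × ComplexSphere 2) :
      Prod.map (proj p ℓ) (proj q ℓ') (rotFst p ℓ (ComplexSphere 2) 1 x) =
        Prod.map (proj p ℓ) (proj q ℓ') x := Prod.ext (proj_rot _ _) rfl
  obtain ⟨ε₁, hε₁, c, hc⟩ := exists_isCyclicLabelling hℓ hg hgf ⟨Prod.fst, continuous_fst⟩
    (fun _ => rfl) hcat (fun _ => isClosed_closure)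
    (fun i => (hWV i).trans (subset_closure.trans (hVU i)))
    (univ_subset_iff.1 (hWuniv ▸ iUnion_mono fun _ => subset_closure))
  obtain ⟨ε₂, hε₂, β, hβeval, hβ⟩ := exists_isInvariantCocycle_rotFst (R := ZMod p) realBasis hℓ'
    hg hgf ⟨Prod.snd, continuous_snd⟩ (fun _ => rfl) (hcat 3) isClosed_closure (hVU 3)
  obtain ⟨ε₃, hε₃, hthick⟩ := (isClosed_closure.preimage hg).isCompact.exists_thickening_subset_open
    ((hV 3).preimage hg) (preimage_mono (hWV 3))
  obtain ⟨P, hP, hone⟩ := exists_isCyclicTower_iterContract_eq_one (R := ZMod p)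
    (CharP.cast_eq_zero _ _) ℓ (ε := min ε₁ (min ε₂ ε₃)) (by positivity)
  have hzero := hP.eval_eq_zero (isometry_rotFst 1) (hc _ (min_le_left _ _)) (hβ _ (by simp) _ <|
    (Metric.thickening_mono (by simp) _).trans (hthick.trans (preimage_mono subset_closure)))
    (by norm_num)
  exact zero_ne_one (hzero.symm.trans ((hβeval _ hP.boundary_zero).trans hone))

end LowerBound

end LensSpace

/-! ### Unit quaternions and degrees -/

namespace ComplexSphere

section Coordinates

variable {k : ℕ}

theorem toLp_mem_sphere_iff {v : Fin k → ℂ} :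
    WithLp.toLp 2 v ∈ Metric.sphere (0 : EuclideanSpace ℂ (Fin k)) 1 ↔ ∑ i, ‖v i‖ ^ 2 = 1 := by
  rw [mem_sphere_zero_iff_norm, ← pow_eq_one_iff_of_nonneg (norm_nonneg _) two_ne_zero,
    EuclideanSpace.norm_sq_eq]

theorem sum_sq_norm (x : ComplexSphere k) : ∑ i, ‖x.1 i‖ ^ 2 = 1 :=
  toLp_mem_sphere_iff.1 x.2

@[ext]
theorem ext_two {x y : ComplexSphere 2} (h₀ : x.1 0 = y.1 0) (h₁ : x.1 1 = y.1 1) : x = y := by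
  ext i
  fin_cases i <;> assumption

theorem sq_norm_add_sq_norm (x : ComplexSphere 2) : ‖x.1 0‖ ^ 2 + ‖x.1 1‖ ^ 2 = 1 := by
  simpa using sum_sq_norm x

/-- The point of the unit sphere of `ℂ²` with coordinates `z` and `w`. -/
def mk (z w : ℂ) (h : ‖z‖ ^ 2 + ‖w‖ ^ 2 = 1) : ComplexSphere 2 :=
  ⟨WithLp.toLp 2 ![z, w], toLp_mem_sphere_iff.2 (by simpa using h)⟩

theorem continuous_mk {X : Type*} [TopologicalSpace X] {f g : X → ℂ} (hf : Continuous f)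
    (hg : Continuous g) (h : ∀ x, ‖f x‖ ^ 2 + ‖g x‖ ^ 2 = 1) :
    Continuous fun x => mk (f x) (g x) (h x) :=
  .subtype_mk ((PiLp.continuous_toLp 2 _).comp (hf.matrixVecCons (hg.matrixVecCons
    continuous_const))) _

@[fun_prop]
theorem continuous_apply (i : Fin k) : Continuous fun x : ComplexSphere k => x.1 i := by
  fun_prop

end Coordinates

section Group

open ComplexConjugate

/-- The multiplication of unit quaternions, `(x₀, x₁)` standing for `x₀ + x₁ j`. -/
instance : Mul (ComplexSphere 2) where
  mul x y := mk (x.1 0 * y.1 0 - x.1 1 * conj (y.1 1)) (x.1 0 * y.1 1 + x.1 1 * conj (y.1 0)) <| by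
    have hx := sq_norm_add_sq_norm x
    have hy := sq_norm_add_sq_norm y
    simp only [Complex.sq_norm, Complex.normSq_apply] at hx hy ⊢
    simp only [Complex.sub_re, Complex.add_re, Complex.mul_re, Complex.conj_re, Complex.conj_im,
      Complex.sub_im, Complex.add_im, Complex.mul_im]
    grind

instance : One (ComplexSphere 2) where
  one := mk 1 0 (by simp)

instance : Inv (ComplexSphere 2) where
  inv x := mk (conj (x.1 0)) (-x.1 1) (by simpa using sq_norm_add_sq_norm x)

theorem mul_apply_zero (x y : ComplexSphere 2) :
    (x * y).1 0 = x.1 0 * y.1 0 - x.1 1 * conj (y.1 1) :=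
  rfl

theorem mul_apply_one (x y : ComplexSphere 2) :
    (x * y).1 1 = x.1 0 * y.1 1 + x.1 1 * conj (y.1 0) :=
  rfl

theorem one_apply_zero : (1 : ComplexSphere 2).1 0 = 1 :=
  rfl

theorem one_apply_one : (1 : ComplexSphere 2).1 1 = 0 :=
  rfl

theorem inv_apply_zero (x : ComplexSphere 2) : x⁻¹.1 0 = conj (x.1 0) :=
  rfl

theorem inv_apply_one (x : ComplexSphere 2) : x⁻¹.1 1 = -x.1 1 :=
  rfl

instance : Group (ComplexSphere 2) :=
  .ofLeftAxioms
    (fun x y z => by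
      ext <;> simp only [mul_apply_zero, mul_apply_one, map_add, map_sub, map_mul,
        Complex.conj_conj] <;> ring)
    (fun x => by ext <;> simp [mul_apply_zero, mul_apply_one, one_apply_zero, one_apply_one])
    (fun x => by
      have hx : conj (x.1 0) * x.1 0 + x.1 1 * conj (x.1 1) = 1 := by
        simp only [Complex.conj_mul', Complex.mul_conj', ← Complex.ofReal_pow,
          ← Complex.ofReal_add, sq_norm_add_sq_norm, Complex.ofReal_one]
      ext
      · rw [mul_apply_zero, inv_apply_zero, inv_apply_one, one_apply_zero, ← hx]
        ring
      · rw [mul_apply_one, inv_apply_zero, inv_apply_one, one_apply_one]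
        ring)

instance : IsTopologicalGroup (ComplexSphere 2) where
  continuous_mul := continuous_mk (by fun_prop) (by fun_prop) _
  continuous_inv := continuous_mk (by fun_prop) (by fun_prop) _

end Group

instance : PathConnectedSpace (ComplexSphere 2) :=
  isPathConnected_iff_pathConnectedSpace.1 <| isPathConnected_sphere
    (Module.lt_rank_of_lt_finrank (by simp [finrank_real_of_complex])) 0 zero_le_one

end ComplexSphere

section HomotopyClasses

open ContinuousMap

variable {V W G : Type*} [TopologicalSpace V] [TopologicalSpace W] [TopologicalSpace G] [Group G]
  [IsTopologicalGroup G]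

/-- Homotopy as a congruence on the group of continuous maps into a topological group. -/
def homotopicCon (V G : Type*) [TopologicalSpace V] [TopologicalSpace G] [Group G]
    [IsTopologicalGroup G] : Con C(V, G) where
  r := Homotopic
  iseqv := Homotopic.equivalence
  mul' := fun ⟨F⟩ ⟨F'⟩ =>
    ⟨⟨⟨fun x => F x * F' x, by fun_prop⟩, fun x => by simp, fun x => by simp⟩⟩

/-- The group of homotopy classes of continuous maps into a topological group. -/
abbrev HomotopyClass (V G : Type*) [TopologicalSpace V] [TopologicalSpace G] [Group G]
    [IsTopologicalGroup G] : Type _ :=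
  (homotopicCon V G).Quotient

namespace HomotopyClass

theorem coe_eq_coe_iff {f g : C(V, G)} : (f : HomotopyClass V G) = g ↔ f.Homotopic g :=
  (homotopicCon V G).eq

/-- Precomposition with a continuous map, on homotopy classes. -/
def comap (k : C(V, W)) : HomotopyClass W G →* HomotopyClass V G :=
  Con.lift _ ((homotopicCon V G).mk'.comp (compMonoidHom' k)) fun _ _ h =>
    coe_eq_coe_iff.2 (h.comp (.refl k))

@[simp]
theorem comap_coe (k : C(V, W)) (f : C(W, G)) :
    comap k (f : HomotopyClass W G) = (f.comp k : C(V, G)) :=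
  rfl

theorem coe_zpow (f : C(V, G)) (n : ℤ) : ((f ^ n : C(V, G)) : HomotopyClass V G) = f ^ n :=
  map_zpow (homotopicCon V G).mk' f n

theorem coe_const [PathConnectedSpace G] (g : G) : (const V g : HomotopyClass V G) = 1 := by
  obtain ⟨γ⟩ := PathConnectedSpace.joined g 1
  exact coe_eq_coe_iff.2 ⟨⟨⟨fun x => γ x.1, by fun_prop⟩, fun x => by simp, fun x => by simp⟩⟩

theorem coe_eq_mul_of_forall {e f g h : C(V, G)} (he : (e : HomotopyClass V G) = 1)
    (H : ∀ x, (f x = e x ∧ h x = g x) ∨ (g x = e x ∧ h x = f x)) :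
    (h : HomotopyClass V G) = f * g := by
  have hmul : h * e⁻¹ = f * e⁻¹ * (g * e⁻¹) := by
    ext x
    simp only [ContinuousMap.mul_apply, ContinuousMap.inv_apply]
    rcases H x with ⟨h₁, h₂⟩ | ⟨h₁, h₂⟩ <;> rw [h₁, h₂] <;> group
  have hinv : ((e⁻¹ : C(V, G)) : HomotopyClass V G) = 1 := inv_eq_one.2 he
  simpa [hinv] using congrArg ((↑) : C(V, G) → HomotopyClass V G) hmul

end HomotopyClass

end HomotopyClasses

theorem UnitSphere.homotopic_const_of_forall_ne {V E : Type*} [TopologicalSpace V]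
    [NormedAddCommGroup E] [InnerProductSpace ℝ E] {f : C(V, UnitSphere E)} {c : UnitSphere E}
    (hf : ∀ v, f v ≠ c) : f.Homotopic (.const V (-c)) := by
  refine ⟨⟨⟨fun x : unitInterval × V => segment (-c) (f x.2) x.1, ?_⟩, fun x => segment_zero _ _,
    fun x => segment_one _ _⟩⟩
  exact (continuousOn_segment (-c)).comp_continuous
    (f := fun x : unitInterval × V => (f x.2, (x.1 : ℝ))) (by fun_prop)
    fun x => ⟨by simpa using hf x.2, x.1.2⟩

section PolarPow

variable {z : ℂ}

/-- The map multiplying the argument of a complex number by `c` and keeping its absolute value. -/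
def polarPow (c : ℕ) (z : ℂ) : ℂ :=
  ‖z‖ * (z / ‖z‖) ^ c

/-- A homotopy starting at `polarPow (c + d)`. At time `1` the first factor equals `1` in the lower
and the second one in the upper half-plane, so that the two powers are taken one after the other. -/
def splitPow (c d : ℕ) (s : ℝ) (z : ℂ) : ℂ :=
  ‖z‖ * ((z / ‖z‖ * Complex.exp ((s * |z.arg| : ℝ) * Complex.I)) ^ c *
    (z / ‖z‖ * Complex.exp ((-s * |z.arg| : ℝ) * Complex.I)) ^ d)

theorem splitPow_zero_right (c d : ℕ) (z : ℂ) : splitPow c d 0 z = polarPow (c + d) z := by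
  simp [splitPow, polarPow, pow_add]

theorem norm_splitPow (c d : ℕ) (s : ℝ) (z : ℂ) : ‖splitPow c d s z‖ = ‖z‖ := by
  rcases eq_or_ne z 0 with rfl | hz
  · simp [splitPow]
  · simp only [splitPow, norm_mul, norm_pow, norm_div, Complex.norm_exp_ofReal_mul_I,
      Complex.norm_real, norm_norm, div_self (norm_ne_zero_iff.2 hz), one_pow, mul_one]

theorem continuous_splitPow (c d : ℕ) : Continuous fun x : ℝ × ℂ => splitPow c d x.1 x.2 := by
  refine continuous_iff_continuousAt.2 fun ⟨s, z⟩ => ?_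
  rcases eq_or_ne z 0 with rfl | hz
  · have hnorm : Continuous fun x : ℝ × ℂ => ‖x.2‖ := by fun_prop
    rw [ContinuousAt, show splitPow c d s 0 = 0 by simp [splitPow],
      tendsto_zero_iff_norm_tendsto_zero]
    simpa only [norm_splitPow, norm_zero] using hnorm.tendsto (s, 0)
  · have hphase : ContinuousAt (fun x : ℝ × ℂ => x.2 / ‖x.2‖) (s, z) :=
      .div (by fun_prop) (by fun_prop) (by simpa using hz)
    have hangle : ContinuousAt (fun x : ℝ × ℂ => InnerProductGeometry.angle 1 x.2) (s, z) :=
      (InnerProductGeometry.continuousAt_angle one_ne_zero hz).comp (f := fun x : ℝ × ℂ => (1, x.2))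
        (by fun_prop)
    have harg : ContinuousAt (fun x : ℝ × ℂ => |x.2.arg|) (s, z) :=
      hangle.congr ((continuousAt_snd.eventually_ne hz).mono fun x hx =>
        Complex.angle_one_left hx)
    simp only [splitPow]
    fun_prop

theorem splitPow_one_right (c d : ℕ) (z : ℂ) :
    (splitPow c 0 1 z = ‖z‖ ∧ splitPow c d 1 z = splitPow 0 d 1 z) ∨
      (splitPow 0 d 1 z = ‖z‖ ∧ splitPow c d 1 z = splitPow c 0 1 z) := by
  rcases eq_or_ne z 0 with rfl | hz
  · simp [splitPow]
  have hphase : z / ‖z‖ = Complex.exp (z.arg * Complex.I) := by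
    rw [div_eq_iff (by simpa using hz), mul_comm, Complex.norm_mul_exp_arg_mul_I]
  rcases le_total 0 z.arg with h | h
  · right
    have hone : z / ‖z‖ * Complex.exp ((-1 * |z.arg| : ℝ) * Complex.I) = 1 := by
      rw [hphase, abs_of_nonneg h, ← Complex.exp_add]
      simp
    simp only [splitPow, hone, pow_zero, one_pow, mul_one, and_self]
  · left
    have hone : z / ‖z‖ * Complex.exp ((|z.arg| : ℝ) * Complex.I) = 1 := by
      rw [hphase, abs_of_nonpos h, ← Complex.exp_add]
      simp
    simp only [splitPow, hone, pow_zero, one_pow, mul_one, one_mul, and_self]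

theorem norm_polarPow (c : ℕ) (z : ℂ) : ‖polarPow c z‖ = ‖z‖ :=
  (congrArg norm (splitPow_zero_right c 0 z).symm).trans (norm_splitPow c 0 0 z)

theorem continuous_polarPow (c : ℕ) : Continuous (polarPow c) :=
  ((continuous_splitPow c 0).comp (Continuous.prodMk_right 0)).congr (splitPow_zero_right c 0)

theorem polarPow_zero (z : ℂ) : polarPow 0 z = ‖z‖ := by
  simp [polarPow]

theorem polarPow_one (z : ℂ) : polarPow 1 z = z := by
  rcases eq_or_ne z 0 with rfl | hz
  · simp [polarPow]
  · rw [polarPow, pow_one, mul_div_cancel₀ _ (by simpa using hz)]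

theorem polarPow_mul {w : ℂ} (hw : ‖w‖ = 1) (c : ℕ) (z : ℂ) :
    polarPow c (w * z) = w ^ c * polarPow c z := by
  simp only [polarPow, norm_mul, hw, one_mul, mul_div_assoc, mul_pow]
  ring

end PolarPow

namespace ComplexSphere

section MapCoord

variable {k : ℕ}

/-- The self-map of the unit sphere of `ℂ^k` applying a norm-preserving map `g` to the `i`-th
coordinate. -/
def mapCoord (i : Fin k) (g : ℂ → ℂ) (hg : Continuous g) (hnorm : ∀ z, ‖g z‖ = ‖z‖) :
    C(ComplexSphere k, ComplexSphere k) where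
  toFun x := ⟨WithLp.toLp 2 (Function.update x.1.ofLp i (g (x.1 i))), toLp_mem_sphere_iff.2 (by
    refine (Finset.sum_congr rfl fun j _ => ?_).trans (sum_sq_norm x)
    rcases eq_or_ne j i with rfl | hj
    · rw [Function.update_self, hnorm]
    · rw [Function.update_of_ne hj])⟩
  continuous_toFun := by
    refine .subtype_mk ((PiLp.continuous_toLp 2 _).comp (.update (by fun_prop) i ?_)) _
    fun_prop

variable {i j : Fin k} {g h : ℂ → ℂ} {hg : Continuous g} {hnorm : ∀ z, ‖g z‖ = ‖z‖}

theorem mapCoord_apply_self (x : ComplexSphere k) : (mapCoord i g hg hnorm x).1 i = g (x.1 i) :=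
  Function.update_self ..

theorem mapCoord_apply_of_ne (hij : j ≠ i) (x : ComplexSphere k) :
    (mapCoord i g hg hnorm x).1 j = x.1 j :=
  Function.update_of_ne hij ..

theorem mapCoord_apply_congr {hh : Continuous h} {hnorm' : ∀ z, ‖h z‖ = ‖z‖} {x : ComplexSphere k}
    (hx : g (x.1 i) = h (x.1 i)) : mapCoord i g hg hnorm x = mapCoord i h hh hnorm' x := by
  simp only [mapCoord, ContinuousMap.coe_mk, hx]

theorem homotopic_mapCoord {H : ℝ → ℂ → ℂ} (hH : Continuous fun x : ℝ × ℂ => H x.1 x.2)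
    (hnorm : ∀ s z, ‖H s z‖ = ‖z‖) :
    (mapCoord i (H 0) (hH.comp (.prodMk_right 0)) (hnorm 0)).Homotopic
      (mapCoord i (H 1) (hH.comp (.prodMk_right 1)) (hnorm 1)) := by
  refine ⟨⟨⟨fun x => mapCoord i (H x.1) (hH.comp (.prodMk_right _)) (hnorm x.1) x.2, ?_⟩,
    fun x => rfl, fun x => rfl⟩⟩
  refine .subtype_mk ((PiLp.continuous_toLp 2 _).comp (.update (by fun_prop) i ?_)) _
  exact hH.comp (f := fun x : unitInterval × ComplexSphere k => ((x.1 : ℝ), x.2.1 i)) (by fun_prop)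

/-- The self-map of the unit sphere of `ℂ^k` multiplying the argument of the `i`-th coordinate
by `c`. -/
def powMap (i : Fin k) (c : ℕ) : C(ComplexSphere k, ComplexSphere k) :=
  mapCoord i (polarPow c) (continuous_polarPow c) (norm_polarPow c)

theorem powMap_apply_self (i : Fin k) (c : ℕ) (x : ComplexSphere k) :
    (powMap i c x).1 i = polarPow c (x.1 i) :=
  mapCoord_apply_self x

theorem powMap_apply_of_ne (hij : j ≠ i) (c : ℕ) (x : ComplexSphere k) :
    (powMap i c x).1 j = x.1 j :=
  mapCoord_apply_of_ne hij x

theorem powMap_one (i : Fin k) : powMap i 1 = .id _ := by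
  ext x j
  rcases eq_or_ne j i with rfl | hj
  · rw [powMap_apply_self, polarPow_one, ContinuousMap.id_apply]
  · rw [powMap_apply_of_ne hj, ContinuousMap.id_apply]

end MapCoord

section PowMap

variable {V : Type*} [TopologicalSpace V]

theorem coe_eq_one_of_forall_ne {f : C(V, ComplexSphere 2)} {c : ComplexSphere 2}
    (hf : ∀ v, f v ≠ c) : (f : HomotopyClass V (ComplexSphere 2)) = 1 :=
  (HomotopyClass.coe_eq_coe_iff.2 (UnitSphere.homotopic_const_of_forall_ne hf)).trans
    (HomotopyClass.coe_const _)

variable (i : Fin 2) (c d : ℕ)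

theorem coe_powMap_zero : (powMap i 0 : HomotopyClass (ComplexSphere 2) (ComplexSphere 2)) = 1 := by
  refine coe_eq_one_of_forall_ne (c := LensSpace.axisPoint i (-1)) fun x hx => ?_
  have hi : (‖x.1 i‖ : ℂ) = (-1 : ℝ) := by
    rw [← polarPow_zero, ← powMap_apply_self, hx]
    simp [LensSpace.axisPoint]
  linarith [Complex.ofReal_injective hi, norm_nonneg (x.1 i)]

theorem coe_powMap_add :
    (powMap i (c + d) : HomotopyClass (ComplexSphere 2) (ComplexSphere 2)) =
      powMap i c * powMap i d := by
  let split (c d : ℕ) (s : ℝ) : C(ComplexSphere 2, ComplexSphere 2) :=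
    mapCoord i (splitPow c d s) ((continuous_splitPow c d).comp (.prodMk_right s))
      (norm_splitPow c d s)
  have hsplit (c d : ℕ) :
      (powMap i (c + d) : HomotopyClass (ComplexSphere 2) (ComplexSphere 2)) = split c d 1 := by
    have hzero : powMap i (c + d) = split c d 0 := by
      ext1 x
      exact mapCoord_apply_congr (splitPow_zero_right c d _).symm
    rw [hzero, HomotopyClass.coe_eq_coe_iff]
    exact homotopic_mapCoord (continuous_splitPow c d) (norm_splitPow c d)
  have hleft := hsplit c 0
  have hright := hsplit 0 d
  rw [add_zero] at hleft
  rw [zero_add] at hright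
  rw [hsplit, hleft, hright]
  refine HomotopyClass.coe_eq_mul_of_forall (coe_powMap_zero i) fun x => ?_
  exact (splitPow_one_right c d (x.1 i)).imp
    (.imp (fun h => mapCoord_apply_congr (h.trans (polarPow_zero _).symm)) mapCoord_apply_congr)
    (.imp (fun h => mapCoord_apply_congr (h.trans (polarPow_zero _).symm)) mapCoord_apply_congr)

theorem coe_powMap :
    (powMap i c : HomotopyClass (ComplexSphere 2) (ComplexSphere 2)) =
      (ContinuousMap.id (ComplexSphere 2)) ^ c := by
  induction c with
  | zero => rw [coe_powMap_zero, pow_zero]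
  | succ c ih => rw [coe_powMap_add, ih, powMap_one, pow_succ]

theorem coe_powMap_comp (f : C(V, ComplexSphere 2)) :
    ((powMap i c).comp f : HomotopyClass V (ComplexSphere 2)) = f ^ c := by
  rw [← HomotopyClass.comap_coe, coe_powMap, map_pow, HomotopyClass.comap_coe,
    ContinuousMap.id_comp]

/-- The self-map of the unit sphere of `ℂ²` multiplying the argument of the `j`-th coordinate
by `c j`. -/
def polarMap (c : Fin 2 → ℕ) : C(ComplexSphere 2, ComplexSphere 2) :=
  (powMap 1 (c 1)).comp (powMap 0 (c 0))

theorem polarMap_apply (c : Fin 2 → ℕ) (x : ComplexSphere 2) (j : Fin 2) :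
    (polarMap c x).1 j = polarPow (c j) (x.1 j) := by
  rw [polarMap, ContinuousMap.comp_apply]
  fin_cases j
  · exact (powMap_apply_of_ne zero_ne_one _ _).trans (powMap_apply_self ..)
  · exact (powMap_apply_self ..).trans (congrArg _ (powMap_apply_of_ne one_ne_zero _ _))

theorem coe_polarMap_comp (c : Fin 2 → ℕ) (f : C(V, ComplexSphere 2)) :
    ((polarMap c).comp f : HomotopyClass V (ComplexSphere 2)) = f ^ (c 0 * c 1) := by
  rw [polarMap, ContinuousMap.comp_assoc, coe_powMap_comp, coe_powMap_comp, pow_mul]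

end PowMap

end ComplexSphere

section Categorical

variable {X Y : Type*} [TopologicalSpace X] [TopologicalSpace Y]

theorem IsCategoricalSet.image {π : X → Y} {V : Set X} (hV : IsCategoricalSet V)
    (hVo : IsOpen V) (hπ : Continuous π) (hπo : IsOpenMap π) (hinj : InjOn π V) :
    IsCategoricalSet (π '' V) := by
  have hemb : Topology.IsEmbedding (V.domRestrict π) :=
    (Topology.IsOpenEmbedding.of_continuous_injective_isOpenMap (hπ.comp continuous_subtype_val)
      hinj.injective (hπo.domRestrict hVo)).isEmbedding
  let e : V ≃ₜ range (V.domRestrict π) := hemb.toHomeomorph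
  have hfactor : (⟨Subtype.val, continuous_subtype_val⟩ : C(range (V.domRestrict π), Y)) =
      (ContinuousMap.comp ⟨π, hπ⟩ ⟨Subtype.val, continuous_subtype_val⟩).comp
        (e.symm : C(range (V.domRestrict π), V)) := by
    ext1 y
    exact congrArg Subtype.val (e.apply_symm_apply y).symm
  rw [← range_domRestrict, IsCategoricalSet, hfactor]
  exact (hV.comp_right _).comp_left _

end Categorical

section Algebra

theorem eq_one_and_eq_one_of_zpow_mul_zpow_eq_one {G : Type*} [Group G] {g h : G} {m n s t : ℤ}
    (hst : m * t - n * s = 1) (h₁ : g ^ m * h ^ n = 1) (h₂ : g ^ s * h ^ t = 1) :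
    g = 1 ∧ h = 1 := by
  have hm : g ^ m = h ^ (-n) := by rw [zpow_neg, eq_inv_of_mul_eq_one_left h₁]
  have hs : g ^ s = h ^ (-t) := by rw [zpow_neg, eq_inv_of_mul_eq_one_left h₂]
  constructor
  · calc g = g ^ (m * t) * (g ^ (s * n))⁻¹ := by
          rw [← zpow_neg, ← zpow_add, show m * t + -(s * n) = 1 by linarith, zpow_one]
      _ = 1 := by
          rw [zpow_mul, zpow_mul, hm, hs, ← zpow_mul, ← zpow_mul, neg_mul_comm, mul_neg, neg_mul,
            mul_comm n t, mul_inv_cancel]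
  · calc h = h ^ (-n * s) * (h ^ (-t * m))⁻¹ := by
          rw [← zpow_neg, ← zpow_add, show -n * s + -(-t * m) = 1 by linarith, zpow_one]
      _ = 1 := by
          rw [zpow_mul, zpow_mul, ← hm, ← hs, ← zpow_mul, ← zpow_mul, mul_comm m s, mul_inv_cancel]

theorem exists_natCast_eq_of_coprime {m n : ℕ} [NeZero m] (hmn : m.Coprime n) {u : ZMod m}
    (hu : IsUnit u) : ∃ c : ℕ, (c : ZMod m) = u ∧ c.Coprime m ∧ c.Coprime n := by
  obtain ⟨c, hcm, hcn⟩ := Nat.chineseRemainder hmn u.val 1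
  have hcu : (c : ZMod m) = u := by
    rw [(ZMod.natCast_eq_natCast_iff ..).2 hcm, ZMod.natCast_zmod_val]
  refine ⟨c, hcu, (ZMod.isUnit_iff_coprime ..).1 (hcu ▸ hu), ?_⟩
  rw [Nat.Coprime, hcn.gcd_eq, Nat.gcd_one_left]

theorem exists_exponents {p q : ℕ} [NeZero p] [NeZero q] (hpq : p.Coprime q) {ℓ ℓ' : Fin 2 → ℤ}
    (hℓ : ∀ j, IsCoprime (ℓ j) (p : ℤ)) (hℓ' : ∀ j, IsCoprime (ℓ' j) (q : ℤ)) :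
    ∃ (e a : Fin 2 → ℕ) (s t : ℤ), (∀ j, (e j * ℓ j : ZMod p) = 1) ∧
      (∀ j, (a j * ℓ' j : ZMod q) = (-1) ^ (j : ℕ)) ∧
      (e 0 * e 1 * (q * q * t) - a 0 * a 1 * (p * p * s) : ℤ) = 1 := by
  have hunit (j) : IsUnit (ℓ j : ZMod p) := ZMod.coe_int_isUnit_iff_isCoprime _ _ |>.2 (hℓ j).symm
  have hunit' (j) : IsUnit (ℓ' j : ZMod q) :=
    ZMod.coe_int_isUnit_iff_isCoprime _ _ |>.2 (hℓ' j).symm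
  choose a ha haq hap using fun j : Fin 2 => exists_natCast_eq_of_coprime hpq.symm
    (u := (-1) ^ (j : ℕ) * (ℓ' j : ZMod q)⁻¹)
    ((isUnit_one.neg.pow _).mul (ZMod.isUnit_inv (hunit' j)))
  choose e he hep hea using fun j : Fin 2 => exists_natCast_eq_of_coprime
    (Nat.Coprime.mul_right (hap 0).symm (hap 1).symm) (ZMod.isUnit_inv (hunit j))
  have hcop : (e 0 * e 1 * (q * q)).Coprime (a 0 * a 1 * (p * p)) := by
    simp only [Nat.coprime_mul_iff_left, Nat.coprime_mul_iff_right] at hea ⊢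
    have hqa (j) : q.Coprime (a j) := (haq j).symm
    grind
  obtain ⟨t, s, hts⟩ := Nat.isCoprime_iff_coprime.2 hcop
  refine ⟨e, a, -s, t, fun j => ?_, fun j => ?_, ?_⟩
  · rw [he, ZMod.inv_mul_of_unit _ (hunit j)]
  · rw [ha, mul_assoc, ZMod.inv_mul_of_unit _ (hunit' j), mul_one]
  · push_cast at hts
    linear_combination hts

end Algebra

section Characters

open ZMod

variable {p q : ℕ} [NeZero p] [NeZero q]

theorem stdAddChar_pow_eq_one (m : ZMod p) : stdAddChar m ^ p = 1 := by
  rw [← AddChar.map_nsmul_eq_pow, nsmul_eq_mul, CharP.cast_eq_zero, zero_mul,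
    AddChar.map_zero_eq_one]

theorem stdAddChar_mul_stdAddChar_pow (m : ZMod p) (n : ZMod q) :
    (stdAddChar m * stdAddChar n : ℂ) ^ (p * q) = 1 := by
  rw [mul_pow, pow_mul, stdAddChar_pow_eq_one, one_pow, mul_comm p q, pow_mul,
    stdAddChar_pow_eq_one, one_pow, one_mul]

theorem exists_stdAddChar_eq {ξ : ℂ} (hξ : ξ ^ p = 1) : ∃ m : ZMod p, stdAddChar m = ξ := by
  obtain ⟨k, -, hk⟩ := (Complex.isPrimitiveRoot_exp p (NeZero.ne p)).eq_pow_of_pow_eq_one hξ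
  refine ⟨(k : ℤ), ?_⟩
  rw [← hk, ← Complex.exp_nat_mul, stdAddChar_coe]
  push_cast
  ring_nf

theorem eq_zero_of_stdAddChar_mul_stdAddChar_eq_one (hpq : p.Coprime q) {m : ZMod p} {n : ZMod q}
    (h : stdAddChar m * stdAddChar n = (1 : ℂ)) : m = 0 := by
  have hq : stdAddChar ((q : ZMod p) * m) = (1 : ℂ) := by
    simpa [mul_pow, stdAddChar_pow_eq_one, ← AddChar.map_nsmul_eq_pow] using congrArg (· ^ q) h
  have hqm := injective_stdAddChar (hq.trans (AddChar.map_zero_eq_one _).symm)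
  exact ((ZMod.isUnit_iff_coprime q p).2 hpq.symm).mul_right_eq_zero.1 hqm

theorem exists_stdAddChar_mul_stdAddChar_eq (hpq : p.Coprime q) {ξ : ℂ} (hξ : ξ ^ (p * q) = 1) :
    ∃ (m : ZMod p) (n : ZMod q), stdAddChar m * stdAddChar n = ξ := by
  obtain ⟨u, v, huv⟩ := Nat.isCoprime_iff_coprime.2 hpq
  have hξ₀ : ξ ≠ 0 := by
    rintro rfl
    simp [NeZero.ne] at hξ
  obtain ⟨m, hm⟩ := exists_stdAddChar_eq (p := p) (ξ := (ξ ^ q) ^ v) (by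
    rw [← zpow_natCast, ← zpow_mul, mul_comm, zpow_mul, zpow_natCast, ← pow_mul, mul_comm, hξ,
      one_zpow])
  obtain ⟨n, hn⟩ := exists_stdAddChar_eq (p := q) (ξ := (ξ ^ p) ^ u) (by
    rw [← zpow_natCast, ← zpow_mul, mul_comm, zpow_mul, zpow_natCast, ← pow_mul, hξ, one_zpow])
  refine ⟨m, n, ?_⟩
  rw [hm, hn, ← zpow_natCast, ← zpow_natCast, ← zpow_mul, ← zpow_mul, ← zpow_add₀ hξ₀,
    show (q * v + p * u : ℤ) = 1 by linarith, zpow_one]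

end Characters

namespace ComplexSphere

open ZMod LensSpace

section PolarProd

variable {V : Type*} [TopologicalSpace V]

/-- The product of the powers `polarMap e x ^ s` and `polarMap a y ^ t` of unit quaternions, as a
function of `(x, y)`. -/
def polarProd (e a : Fin 2 → ℕ) (s t : ℤ) :
    C(ComplexSphere 2 × ComplexSphere 2, ComplexSphere 2) :=
  (polarMap e).comp .fst ^ s * (polarMap a).comp .snd ^ t

variable {e a c d : Fin 2 → ℕ} {s t u v : ℤ}

theorem polarProd_apply (x : ComplexSphere 2 × ComplexSphere 2) :
    polarProd e a s t x = polarMap e x.1 ^ s * polarMap a x.2 ^ t :=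
  rfl

theorem coe_polarProd_comp (f : C(V, ComplexSphere 2 × ComplexSphere 2)) :
    ((polarProd e a s t).comp f : HomotopyClass V (ComplexSphere 2)) =
      (ContinuousMap.fst.comp f) ^ (e 0 * e 1 * s) *
        (ContinuousMap.snd.comp f) ^ (a 0 * a 1 * t) := by
  have hcomp : (polarProd e a s t).comp f = (polarMap e).comp (ContinuousMap.fst.comp f) ^ s *
      (polarMap a).comp (ContinuousMap.snd.comp f) ^ t := rfl
  rw [hcomp, Con.coe_mul, HomotopyClass.coe_zpow, HomotopyClass.coe_zpow, coe_polarMap_comp,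
    coe_polarMap_comp]
  simp only [← zpow_natCast, ← zpow_mul, Nat.cast_mul]

theorem isCategoricalSet_of_polarProd_ne {W : Set (ComplexSphere 2 × ComplexSphere 2)}
    {y z : ComplexSphere 2}
    (hdet : e 0 * e 1 * s * (d 0 * d 1 * v) - a 0 * a 1 * t * (c 0 * c 1 * u) = 1)
    (hy : ∀ x ∈ W, polarProd e a s t x ≠ y) (hz : ∀ x ∈ W, polarProd c d u v x ≠ z) :
    IsCategoricalSet W := by
  let ι : C(W, ComplexSphere 2 × ComplexSphere 2) := ⟨Subtype.val, continuous_subtype_val⟩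
  have h₁ := coe_eq_one_of_forall_ne (f := (polarProd e a s t).comp ι) fun x => hy x x.2
  have h₂ := coe_eq_one_of_forall_ne (f := (polarProd c d u v).comp ι) fun x => hz x x.2
  rw [coe_polarProd_comp] at h₁ h₂
  obtain ⟨hfst, hsnd⟩ := eq_one_and_eq_one_of_zpow_mul_zpow_eq_one hdet h₁ h₂
  rw [← Con.coe_one, HomotopyClass.coe_eq_coe_iff] at hfst hsnd
  exact ⟨(1, 1), hfst.prodMk hsnd⟩

end PolarProd

section Equivariance

variable {p q : ℕ} [NeZero p] [NeZero q] {ℓ ℓ' : Fin 2 → ℤ}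

theorem polarMap_rot_apply (c : Fin 2 → ℕ) (m : ZMod p) (x : ComplexSphere 2) (j : Fin 2) :
    (polarMap c (rot p ℓ m x)).1 j =
      stdAddChar (m * (c j * ℓ j : ZMod p)) * (polarMap c x).1 j := by
  have hnorm : ‖(stdAddChar (m * (ℓ j : ZMod p)) : ℂ)‖ = 1 := AddChar.norm_apply ..
  rw [polarMap_apply, rot_apply, polarPow_mul hnorm, polarMap_apply, ← AddChar.map_nsmul_eq_pow,
    nsmul_eq_mul, mul_left_comm]

theorem polarMap_const_rot (m : ZMod p) (x : ComplexSphere 2) :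
    polarMap (fun _ => p) (rot p ℓ m x) = polarMap (fun _ => p) x := by
  ext <;> simp [polarMap_rot_apply]

variable {e a : Fin 2 → ℕ}

theorem polarProd_rot_apply (he : ∀ j, (e j * ℓ j : ZMod p) = 1)
    (ha : ∀ j, (a j * ℓ' j : ZMod q) = (-1) ^ (j : ℕ)) (m : ZMod p) (n : ZMod q)
    (x : ComplexSphere 2 × ComplexSphere 2) (j : Fin 2) :
    (polarProd e a 1 1 (rot p ℓ m x.1, rot q ℓ' n x.2)).1 j =
      stdAddChar m * stdAddChar ((-1) ^ (j : ℕ) * n) * (polarProd e a 1 1 x).1 j := by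
  simp only [polarProd_apply, zpow_one]
  fin_cases j
  · simp [mul_apply_zero, polarMap_rot_apply, he, ha, ← AddChar.map_neg_eq_conj]
    ring
  · simp [mul_apply_one, polarMap_rot_apply, he, ha, ← AddChar.map_neg_eq_conj]
    ring

theorem polarProd_const_congr {s t : ℤ} {x y : ComplexSphere 2 × ComplexSphere 2}
    (hxy : Prod.map (proj p ℓ) (proj q ℓ') x = Prod.map (proj p ℓ) (proj q ℓ') y) :
    polarProd (fun _ => p) (fun _ => q) s t x = polarProd (fun _ => p) (fun _ => q) s t y := by
  obtain ⟨m, hm⟩ := proj_eq_proj_iff.1 (congrArg Prod.fst hxy)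
  obtain ⟨n, hn⟩ := proj_eq_proj_iff.1 (congrArg Prod.snd hxy)
  rw [polarProd_apply, polarProd_apply, ← hm, ← hn, polarMap_const_rot, polarMap_const_rot]

end Equivariance

end ComplexSphere

/-- On each fibre of `π`, the function `a` is either zero or a bijection onto a coset of the
`n`-th roots of unity. -/
structure IsCyclicOnFibers {X Q : Type*} (n : ℕ) (π : X → Q) (a : X → ℂ) : Prop where
  pow_eq_pow : ∀ {x y}, π x = π y → a x ^ n = a y ^ n
  eq_of_eq : ∀ {x y}, π x = π y → a x = a y → a x ≠ 0 → x = y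
  exists_eq_mul : ∀ x {ξ : ℂ}, ξ ^ n = 1 → ∃ y, π y = π x ∧ a y = ξ * a x

theorem LensSpace.isCyclicOnFibers_polarProd {p q : ℕ} [NeZero p] [NeZero q] (hpq : p.Coprime q)
    {ℓ ℓ' : Fin 2 → ℤ} {e a : Fin 2 → ℕ} (he : ∀ j, (e j * ℓ j : ZMod p) = 1)
    (ha : ∀ j, (a j * ℓ' j : ZMod q) = (-1) ^ (j : ℕ)) (j : Fin 2) :
    IsCyclicOnFibers (p * q) (Prod.map (proj p ℓ) (proj q ℓ'))
      fun x => (ComplexSphere.polarProd e a 1 1 x).1 j := by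
  have hunit : IsUnit ((-1 : ZMod q) ^ (j : ℕ)) := isUnit_one.neg.pow _
  have hrot := ComplexSphere.polarProd_rot_apply he ha (j := j)
  have hfib {x y} (hxy : Prod.map (proj p ℓ) (proj q ℓ') x = Prod.map (proj p ℓ) (proj q ℓ') y) :
      ∃ m n, (rot p ℓ m x.1, rot q ℓ' n x.2) = y := by
    obtain ⟨m, hm⟩ := proj_eq_proj_iff.1 (congrArg Prod.fst hxy)
    obtain ⟨n, hn⟩ := proj_eq_proj_iff.1 (congrArg Prod.snd hxy)
    exact ⟨m, n, Prod.ext hm hn⟩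
  refine ⟨fun {x y} hxy => ?_, fun {x y} hxy heq h₀ => ?_, fun x ξ hξ => ?_⟩
  · obtain ⟨m, n, rfl⟩ := hfib hxy
    rw [hrot, mul_pow, stdAddChar_mul_stdAddChar_pow, one_mul]
  · obtain ⟨m, n, rfl⟩ := hfib hxy
    rw [hrot] at heq
    have hone := (right_eq_mul₀ h₀).1 heq
    have hm := eq_zero_of_stdAddChar_mul_stdAddChar_eq_one hpq hone
    have hn := eq_zero_of_stdAddChar_mul_stdAddChar_eq_one hpq.symm ((mul_comm _ _).trans hone)
    rw [hm, hunit.mul_right_eq_zero.1 hn, rot_zero, rot_zero]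
  · obtain ⟨m, n, rfl⟩ := exists_stdAddChar_mul_stdAddChar_eq hpq hξ
    obtain ⟨n, rfl⟩ := hunit.dvd (a := n)
    exact ⟨(rot p ℓ m x.1, rot q ℓ' n x.2), Prod.ext (proj_rot ..) (proj_rot ..), hrot ..⟩

/-! ### Sectors and the upper bound -/

section Sector

variable {n : ℕ} {z w : ℂ}

/-- The open sector of the nonzero complex numbers with argument between `-π / n` and `π / n`. -/
def sector (n : ℕ) : Set ℂ :=
  Complex.slitPlane ∩ Complex.arg ⁻¹' Ioo (-(Real.pi / n)) (Real.pi / n)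

theorem isOpen_sector (n : ℕ) : IsOpen (sector n) :=
  ContinuousOn.isOpen_inter_preimage (fun _ hz => (Complex.continuousAt_arg hz).continuousWithinAt)
    Complex.isOpen_slitPlane isOpen_Ioo

theorem injOn_pow_sector (hn : n ≠ 0) : InjOn (· ^ n) (sector n) :=
  LeftInvOn.injOn (f₁' := (· ^ (n⁻¹ : ℂ))) fun _ hz =>
    Complex.pow_cpow_nat_inv hn hz.2.1 hz.2.2.le

theorem exists_mul_mem_sector (hn : n ≠ 0) (hz : z ≠ 0) (hzn : z ^ n ∈ Complex.slitPlane) :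
    ∃ ξ : ℂ, ξ ^ n = 1 ∧ ξ * z ∈ sector n := by
  have hn₁ : Real.pi / n ≤ Real.pi :=
    div_le_self Real.pi_pos.le (by exact_mod_cast Nat.one_le_iff_ne_zero.2 hn)
  have hlt : (z ^ n).arg < Real.pi :=
    (Complex.arg_le_pi _).lt_of_ne (Complex.mem_slitPlane_iff_arg.1 hzn).1
  let w := Complex.exp (Complex.log (z ^ n) / n)
  have hw : w ^ n = z ^ n := by
    rw [← Complex.exp_nat_mul, mul_div_cancel₀ _ (by exact_mod_cast hn),
      Complex.exp_log (pow_ne_zero _ hz)]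
  have him : (Complex.log (z ^ n) / n).im = (z ^ n).arg / n := by
    rw [Complex.div_natCast_im, Complex.log_im]
  have hIoo : (z ^ n).arg / n ∈ Ioo (-(Real.pi / n)) (Real.pi / n) := by
    have : (0 : ℝ) < n := by positivity
    rw [← neg_div]
    exact ⟨by gcongr; exact Complex.neg_pi_lt_arg _, by gcongr⟩
  have harg : w.arg = (z ^ n).arg / n := by
    rw [← Complex.log_im, Complex.log_exp (him ▸ by linarith [hIoo.1]) (him ▸ by linarith [hIoo.2]),
      him]
  refine ⟨w / z, by rw [div_pow, hw, div_self (pow_ne_zero _ hz)], ?_⟩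
  rw [div_mul_cancel₀ _ hz]
  refine ⟨Complex.mem_slitPlane_iff_arg.2 ⟨?_, Complex.exp_ne_zero _⟩, ?_⟩
  · rw [harg]
    exact (hIoo.2.trans_le hn₁).ne
  · rwa [mem_preimage, harg]

theorem eq_of_mul_exp_notMem_slitPlane (hz : z ≠ 0) {r s : ℝ} (hr : r ∈ Ioo 0 1) (hs : s ∈ Ioo 0 1)
    (hzr : z * Circle.exp r ∉ Complex.slitPlane) (hzs : z * Circle.exp s ∉ Complex.slitPlane) :
    r = s := by
  have harg {t : ℝ} (h : z * Circle.exp t ∉ Complex.slitPlane) :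
      (z * Circle.exp t).arg = Real.pi := by
    by_contra hne
    exact h (Complex.mem_slitPlane_iff_arg.2 ⟨hne, mul_ne_zero hz (Circle.coe_ne_zero _)⟩)
  have hmul : z * Circle.exp r = z * Circle.exp s :=
    Complex.ext_norm_arg (by simp only [norm_mul, Circle.norm_coe])
      ((harg hzr).trans (harg hzs).symm)
  exact Circle.exp_injOn_Icc (by linarith [Real.pi_gt_three]) (Ioo_subset_Icc_self hr)
    (Ioo_subset_Icc_self hs) (Subtype.ext (mul_left_cancel₀ hz hmul))

end Sector

namespace ComplexSphere

/-- The points at which the first coordinate that is larger than `r` or, if it is smaller, the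
second coordinate lies in a sector of angle `2π / n` whose position depends on `r`. -/
def sectorSet (n : ℕ) (r : ℝ) : Set (ComplexSphere 2) :=
  {y | (r < ‖y.1 0‖ ∧ y.1 0 * Circle.exp (r / n) ∈ sector n) ∨
    (‖y.1 0‖ < r ∧ y.1 1 * Circle.exp (r / n) ∈ sector n)}

theorem isOpen_sectorSet (n : ℕ) (r : ℝ) : IsOpen (sectorSet n r) := by
  have hsector (i : Fin 2) :
      IsOpen {y : ComplexSphere 2 | y.1 i * Circle.exp (r / n) ∈ sector n} :=
    (isOpen_sector n).preimage (by fun_prop)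
  exact ((isOpen_lt continuous_const (continuous_apply 0).norm).inter (hsector 0)).union
    ((isOpen_lt (continuous_apply 0).norm continuous_const).inter (hsector 1))

theorem exists_notMem_sectorSet (n : ℕ) (r : ℝ) : ∃ y, y ∉ sectorSet n r := by
  let ω := Circle.exp (r / n)
  let z : ℂ := (-√(1 / 2) : ℝ) * (ω : ℂ)⁻¹
  have hnorm : ‖z‖ ^ 2 + ‖z‖ ^ 2 = 1 := by
    rw [norm_mul, norm_inv, Circle.norm_coe, inv_one, mul_one, Complex.norm_real, norm_neg,
      Real.norm_eq_abs, sq_abs, Real.sq_sqrt (by norm_num)]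
    norm_num
  have hz : z * ω ∉ sector n := fun h => by
    have hslit := h.1
    rw [inv_mul_cancel_right₀ ω.coe_ne_zero, Complex.ofReal_mem_slitPlane] at hslit
    exact hslit.not_ge (neg_nonpos.2 (Real.sqrt_nonneg _))
  exact ⟨mk z z hnorm, fun h => h.elim (fun h => hz h.2) fun h => hz h.2⟩

end ComplexSphere

section CyclicOnFibers

variable {X Q : Type*} {n : ℕ} {π : X → Q} {a : X → ℂ}

theorem IsCyclicOnFibers.norm_eq (h : IsCyclicOnFibers n π a) (hn : n ≠ 0) {x y : X}
    (hxy : π x = π y) : ‖a x‖ = ‖a y‖ :=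
  (pow_left_inj₀ (norm_nonneg _) (norm_nonneg _) hn).1 <| by
    rw [← norm_pow, ← norm_pow, h.pow_eq_pow hxy]

theorem IsCyclicOnFibers.eq_of_mem_sector (h : IsCyclicOnFibers n π a) (hn : n ≠ 0) {x y : X}
    (hxy : π x = π y) {ω : Circle} (hx : a x * ω ∈ sector n) (hy : a y * ω ∈ sector n) : x = y := by
  have hmul : a x * ω = a y * ω := injOn_pow_sector hn hx hy <| by
    simp only [mul_pow, h.pow_eq_pow hxy]
  exact h.eq_of_eq hxy (mul_right_cancel₀ ω.coe_ne_zero hmul)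
    (left_ne_zero_of_mul (Complex.slitPlane_ne_zero hx.1))

theorem IsCyclicOnFibers.exists_mem_sector (h : IsCyclicOnFibers n π a) (hn : n ≠ 0) {x : X}
    (hx : a x ≠ 0) {r : ℝ} (hr : a x ^ n * Circle.exp r ∈ Complex.slitPlane) :
    ∃ y, π y = π x ∧ a y * Circle.exp (r / n) ∈ sector n := by
  have hpow : (a x * Circle.exp (r / n)) ^ n = a x ^ n * Circle.exp r := by
    rw [mul_pow, ← Circle.coe_pow, ← Circle.exp_nsmul, nsmul_eq_mul,
      mul_div_cancel₀ _ (by exact_mod_cast hn)]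
  obtain ⟨ξ, hξ, hmem⟩ := exists_mul_mem_sector hn
    (mul_ne_zero hx (Circle.exp (r / n)).coe_ne_zero) (hpow ▸ hr)
  obtain ⟨y, hy, hay⟩ := h.exists_eq_mul x hξ
  exact ⟨y, hy, by rwa [hay, mul_assoc]⟩

theorem injOn_preimage_sectorSet {A : X → ComplexSphere 2}
    (hA : ∀ j, IsCyclicOnFibers n π fun x => (A x).1 j) (hn : n ≠ 0) (r : ℝ) :
    InjOn π (A ⁻¹' ComplexSphere.sectorSet n r) := by
  intro x hx y hy hxy
  have hnorm := (hA 0).norm_eq hn hxy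
  rcases hx with ⟨hrx, hx⟩ | ⟨hrx, hx⟩ <;> rcases hy with ⟨hry, hy⟩ | ⟨hry, hy⟩
  · exact (hA 0).eq_of_mem_sector hn hxy hx hy
  · exact absurd (hrx.trans_eq hnorm) hry.not_gt
  · exact absurd (hnorm.symm.trans_lt hrx) hry.not_gt
  · exact (hA 1).eq_of_mem_sector hn hxy hx hy

end CyclicOnFibers

section Cover

variable {X Q : Type*} [TopologicalSpace X] {n : ℕ} {π : X → Q}
  {A B : C(X, ComplexSphere 2)}

/-- The set of points that `A` sends to `sectorSet n r` and `B` does not send to a point of the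
first coordinate axis depending on `r`. -/
def sectorPreimage (n : ℕ) (A B : C(X, ComplexSphere 2)) (r : ℝ) : Set X :=
  {x | A x ∈ ComplexSphere.sectorSet n r ∧ B x ≠ LensSpace.axisPoint 0 (Circle.exp r)}

theorem isOpen_sectorPreimage (n : ℕ) (A B : C(X, ComplexSphere 2)) (r : ℝ) :
    IsOpen (sectorPreimage n A B r) :=
  ((ComplexSphere.isOpen_sectorSet n r).preimage A.continuous).inter
    (isOpen_ne_fun B.continuous continuous_const)

/-- The four ways in which the fibre through a point can fail to meet `sectorPreimage n A B r`,
where `y` and `z` are the values of `A` and `B` at the point. -/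
def sectorObstruction (n : ℕ) (y z : ComplexSphere 2) (r : ℝ) : Fin 4 → Prop :=
  ![‖y.1 0‖ = r,
    r < ‖y.1 0‖ ∧ y.1 0 ^ n * Circle.exp r ∉ Complex.slitPlane,
    ‖y.1 0‖ < r ∧ y.1 1 ^ n * Circle.exp r ∉ Complex.slitPlane,
    z = LensSpace.axisPoint 0 (Circle.exp r)]

theorem apply_one_ne_zero_of_norm_lt {y : ComplexSphere 2} (hy : ‖y.1 0‖ < 1) : y.1 1 ≠ 0 :=
  fun h => hy.ne <| by
    simpa [h, pow_eq_one_iff_of_nonneg] using ComplexSphere.sq_norm_add_sq_norm y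

theorem sectorObstruction_unique {y z : ComplexSphere 2} {r s : ℝ} (hr : r ∈ Ioo 0 1)
    (hs : s ∈ Ioo 0 1) (i : Fin 4) (hri : sectorObstruction n y z r i)
    (hsi : sectorObstruction n y z s i) : r = s := by
  fin_cases i
  · exact hri.symm.trans hsi
  · have hy : y.1 0 ≠ 0 := norm_pos_iff.1 (hr.1.trans hri.1)
    exact eq_of_mul_exp_notMem_slitPlane (pow_ne_zero n hy) hr hs hri.2 hsi.2
  · have hy : y.1 1 ≠ 0 := apply_one_ne_zero_of_norm_lt (hri.1.trans hr.2)
    exact eq_of_mul_exp_notMem_slitPlane (pow_ne_zero n hy) hr hs hri.2 hsi.2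
  · have hexp : LensSpace.axisPoint (0 : Fin 2) (Circle.exp r) =
        LensSpace.axisPoint 0 (Circle.exp s) := hri.symm.trans hsi
    have hcoe := congrArg (fun x : ComplexSphere 2 => x.1 0) hexp
    simp only [LensSpace.axisPoint, PiLp.single_apply, ↓reduceIte] at hcoe
    exact Circle.exp_injOn_Icc (by linarith [Real.pi_gt_three]) (Ioo_subset_Icc_self hr)
      (Ioo_subset_Icc_self hs) (Subtype.ext hcoe)

theorem exists_mem_sectorPreimage (hn : n ≠ 0)
    (hA : ∀ j, IsCyclicOnFibers n π fun x => (A x).1 j)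
    (hB : ∀ x y, π x = π y → B x = B y) {x : X} {r : ℝ} (hr : r ∈ Ioo 0 1)
    (hx : ∀ i, ¬ sectorObstruction n (A x) (B x) r i) :
    ∃ y ∈ sectorPreimage n A B r, π y = π x := by
  have hBx : B x ≠ LensSpace.axisPoint 0 (Circle.exp r) := hx 3
  rcases lt_or_gt_of_ne (hx 0) with hlt | hlt
  · have hne : (A x).1 1 ≠ 0 := apply_one_ne_zero_of_norm_lt (hlt.trans hr.2)
    have hslit : (A x).1 1 ^ n * Circle.exp r ∈ Complex.slitPlane := by
      by_contra h
      exact hx 2 ⟨hlt, h⟩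
    obtain ⟨y, hy, hmem⟩ := (hA 1).exists_mem_sector hn hne hslit
    exact ⟨y, ⟨.inr ⟨((hA 0).norm_eq hn hy).trans_lt hlt, hmem⟩, (hB y x hy).trans_ne hBx⟩, hy⟩
  · have hne : (A x).1 0 ≠ 0 := norm_pos_iff.1 (hr.1.trans hlt)
    have hslit : (A x).1 0 ^ n * Circle.exp r ∈ Complex.slitPlane := by
      by_contra h
      exact hx 1 ⟨hlt, h⟩
    obtain ⟨y, hy, hmem⟩ := (hA 0).exists_mem_sector hn hne hslit
    exact ⟨y, ⟨.inl ⟨hlt.trans_eq ((hA 0).norm_eq hn hy).symm, hmem⟩, (hB y x hy).trans_ne hBx⟩, hy⟩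

theorem exists_forall_not_sectorObstruction (n : ℕ) (y z : ComplexSphere 2) {r : Fin 5 → ℝ}
    (hr : ∀ k, r k ∈ Ioo 0 1) (hinj : r.Injective) :
    ∃ k, ∀ i, ¬ sectorObstruction n y z (r k) i := by
  by_contra! h
  choose i hi using h
  obtain ⟨k, l, hkl, hil⟩ := Fintype.exists_ne_map_eq_of_card_lt i (by simp)
  exact hkl (hinj (sectorObstruction_unique (hr k) (hr l) (i k) (hi k) (hil ▸ hi l)))

theorem exists_isCategoricalSet_cover_of_isCyclicOnFibers [TopologicalSpace Q]
    (hπ : IsOpenQuotientMap π) (hn : n ≠ 0)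
    (hA : ∀ j, IsCyclicOnFibers n π fun x => (A x).1 j) (hB : ∀ x y, π x = π y → B x = B y)
    (hcat : ∀ W y z, (∀ x ∈ W, A x ≠ y) → (∀ x ∈ W, B x ≠ z) → IsCategoricalSet W) :
    ∃ U : Fin 5 → Set Q, (∀ k, IsOpen (U k)) ∧ ⋃ k, U k = univ ∧ ∀ k, IsCategoricalSet (U k) := by
  let r (k : Fin 5) : ℝ := (k + 1) / 6
  have hr (k) : r k ∈ Ioo 0 1 := by
    have : (k : ℝ) < 5 := by exact_mod_cast k.2
    constructor <;> simp only [r] <;> linarith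
  have hinj : r.Injective := fun k l hkl => Fin.ext <| by
    have : (k : ℝ) = l := by simpa [r] using hkl
    exact_mod_cast this
  refine ⟨fun k => π '' sectorPreimage n A B (r k),
    fun k => hπ.isOpenMap _ (isOpen_sectorPreimage n A B _), ?_, fun k => ?_⟩
  · refine eq_univ_of_forall fun u => ?_
    obtain ⟨x, rfl⟩ := hπ.surjective u
    obtain ⟨k, hk⟩ := exists_forall_not_sectorObstruction n (A x) (B x) hr hinj
    exact mem_iUnion.2 ⟨k, exists_mem_sectorPreimage hn hA hB (hr k) hk⟩
  · obtain ⟨y, hy⟩ := ComplexSphere.exists_notMem_sectorSet n (r k)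
    refine (hcat _ y _ (fun x hx h => hy (h ▸ hx.1)) fun x hx => hx.2).image
      (isOpen_sectorPreimage n A B _) hπ.continuous hπ.isOpenMap ?_
    exact (injOn_preimage_sectorSet hA hn (r k)).mono fun x hx => hx.1

end Cover

namespace LensSpace

theorem exists_isCategoricalSet_cover {p q : ℕ} [NeZero p] [NeZero q] (hpq : p.Coprime q)
    {ℓ ℓ' : Fin 2 → ℤ} (hℓ : ∀ j, IsCoprime (ℓ j) (p : ℤ)) (hℓ' : ∀ j, IsCoprime (ℓ' j) (q : ℤ)) :
    ∃ U : Fin 5 → Set (LensSpace p 2 ℓ × LensSpace q 2 ℓ'),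
      (∀ k, IsOpen (U k)) ∧ ⋃ k, U k = univ ∧ ∀ k, IsCategoricalSet (U k) := by
  obtain ⟨e, a, s, t, he, ha, hdet⟩ := exists_exponents hpq hℓ hℓ'
  refine exists_isCategoricalSet_cover_of_isCyclicOnFibers (n := p * q)
    (A := ComplexSphere.polarProd e a 1 1)
    (B := ComplexSphere.polarProd (fun _ => p) (fun _ => q) s t)
    ((isOpenQuotientMap_proj hℓ).prodMap (isOpenQuotientMap_proj hℓ'))
    (mul_ne_zero (NeZero.ne p) (NeZero.ne q)) (isCyclicOnFibers_polarProd hpq he ha)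
    (fun x y => ComplexSphere.polarProd_const_congr) fun W y z hy hz => ?_
  exact ComplexSphere.isCategoricalSet_of_polarProd_ne (by simpa using hdet) hy hz

end LensSpace

theorem lsCat_eq_of_cover {X : Type*} [TopologicalSpace X] {n : ℕ}
    (hcover : ∃ U : Fin (n + 1) → Set X,
      (∀ i, IsOpen (U i)) ∧ ⋃ i, U i = univ ∧ ∀ i, IsCategoricalSet (U i))
    (hnot : ∀ U : Fin n → Set X,
      (∀ i, IsOpen (U i)) → ⋃ i, U i = univ → ∃ i, ¬ IsCategoricalSet (U i)) :
    lsCat X = n := by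
  refine le_antisymm (Nat.sInf_le hcover) (le_csInf ⟨n, hcover⟩ ?_)
  rintro k ⟨U, hUo, hU, hUc⟩
  by_contra! hk
  let f (i : Fin n) : Fin (k + 1) := Fin.ofNat (k + 1) i
  have hf : f.Surjective := fun i =>
    ⟨⟨i, i.2.trans_le hk⟩, Fin.ext (Nat.mod_eq_of_lt i.2)⟩
  obtain ⟨i, hi⟩ := hnot (U ∘ f) (fun i => hUo (f i)) ((hf.iUnion_comp U).trans hU)
  exact hi (hUc (f i))

end

/-- For all relatively prime `p, q ≥ 2` and all three-dimensional lens spaces,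
`cat (L³_p × L³_q) = 4`. -/
theorem lsCat_prod_lensSpace_three (p q : ℕ) (hp2 : 2 ≤ p) (hq2 : 2 ≤ q)
    (hpq : Nat.Coprime p q)
    (ℓ : Fin 2 → ℤ) (hℓ : ∀ j, IsCoprime (ℓ j) (p : ℤ))
    (ℓ' : Fin 2 → ℤ) (hℓ' : ∀ j, IsCoprime (ℓ' j) (q : ℤ)) :
    lsCat (LensSpace p 2 ℓ × LensSpace q 2 ℓ') = 4 := by
  have : NeZero p := ⟨by lia⟩
  have : NeZero q := ⟨by lia⟩
  have : Fact (1 < p) := ⟨hp2⟩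
  exact lsCat_eq_of_cover (LensSpace.exists_isCategoricalSet_cover hpq hℓ hℓ')
    fun U => LensSpace.exists_not_isCategoricalSet hℓ hℓ'
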